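/- arXiv:1301.6616 — 10 statements merged into one kernel-verified Lean document; each statement's English description precedes it below -/
import Mathlib

section
/- Let X be an element of the primal feasible region 𝒫, written as X = P Pᵀ where P is an n×r real matrix and r = rank X. Then the space of perturbations of X with respect to 𝒫 equals Pert_𝒫(X) = { P R Pᵀ : R a symmetric r×r matrix with ⟨P R Pᵀ, A_i⟩ = 0 for all i ∈ I ∪ J_X }. -/
/- STATEMENT 0: characterization of the perturbation space Pert_𝒫(X) of a feasible
matrix X = P Pᵀ of a semidefinite program with equality constraints (indexed by I)
and inequality constraints (indexed by J). -/

open Matrix BigOperators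
open scoped Classical

namespace Stmt0

variable {n r : ℕ} {ι : Type*}

/-- The primal feasible region 𝒫 of the SDP with data `A`, `b`, equality index set `I`
and inequality index set `J`; the trace inner product is `⟨A,X⟩ = (A * X).trace`. -/
def Feas (A : ι → Matrix (Fin n) (Fin n) ℝ) (b : ι → ℝ) (I J : Finset ι) :
    Set (Matrix (Fin n) (Fin n) ℝ) :=
  {X | X.PosSemidef ∧ (∀ i ∈ I, (A i * X).trace = b i) ∧ (∀ i ∈ J, (A i * X).trace ≤ b i)}

/-- The space of perturbations of `X` with respect to a convex set `C`:
all `Z` such that `X ± ε Z ∈ C` for some `ε > 0`. -/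
def Pert (C : Set (Matrix (Fin n) (Fin n) ℝ)) (X : Matrix (Fin n) (Fin n) ℝ) :
    Set (Matrix (Fin n) (Fin n) ℝ) :=
  {Z | ∃ ε : ℝ, 0 < ε ∧ X + ε • Z ∈ C ∧ X - ε • Z ∈ C}

/-- The set `J_X` of inequality constraints active at `X`. -/
noncomputable def activeJ (A : ι → Matrix (Fin n) (Fin n) ℝ) (b : ι → ℝ) (J : Finset ι)
    (X : Matrix (Fin n) (Fin n) ℝ) : Finset ι :=
  J.filter fun i => (A i * X).trace = b i

/-!
Membership of `Z` in `Pert C X`, for convex `C`, means that `X + t • Z ∈ C` for all small `t`, so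
`Pert` commutes with finite intersections of convex sets. An equality constraint, or an active
inequality, contributes `⟨A i, Z⟩ = 0`; an inactive inequality contributes nothing.

For the positive semidefinite cone at `X = P * Pᵀ`: if `X ± W` are positive semidefinite, their
quadratic forms vanish on `ker X`, so `ker Pᵀ ⊆ ker W`; as `W` is symmetric, a generalized inverse
`Q` of `Pᵀ` gives `W = P * (Qᵀ * W * Q) * Pᵀ`. Conversely
`X + t • (P * R * Pᵀ) = P * (1 + t • R) * Pᵀ`, where the eigenvalues of `1 + t • R` are positive
for small `t`.
-/

open Filter Topology

section Matrices

open scoped ComplexOrder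

variable {m k 𝕜 K : Type*} [RCLike 𝕜] [Field K]

theorem convex_setOf_posSemidef : Convex ℝ {X : Matrix m m 𝕜 | X.PosSemidef} :=
  fun _ hX _ hY _ _ ha hb _ => (hX.smul ha).add (hY.smul hb)

theorem exists_mul_mul_eq_self [Fintype m] [Fintype k] (M : Matrix m k K) :
    ∃ Q : Matrix k m K, M * Q * M = M := by
  obtain ⟨g, hg⟩ := M.toLin'.rangeRestrict.exists_rightInverse_of_surjective
    M.toLin'.range_rangeRestrict
  obtain ⟨q, hq⟩ := g.exists_extend
  have hMqM (v : k → K) : M *ᵥ q (M *ᵥ v) = M *ᵥ v := by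
    have hqg : q (M *ᵥ v) = g (M.toLin'.rangeRestrict v) :=
      LinearMap.congr_fun hq (M.toLin'.rangeRestrict v)
    rw [hqg]
    exact congrArg Subtype.val (LinearMap.congr_fun hg (M.toLin'.rangeRestrict v))
  refine ⟨LinearMap.toMatrix' q, Matrix.ext_of_mulVec_single fun i => ?_⟩
  rw [← mulVec_mulVec, ← mulVec_mulVec, LinearMap.toMatrix'_mulVec, hMqM]

theorem exists_isHermitian_eq_mul_mul_conjTranspose [Fintype m] [Fintype k] [StarRing K]
    {Z : Matrix m m K} (hZ : Z.IsHermitian) (P : Matrix m k K)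
    (hker : ∀ v, Pᴴ *ᵥ v = 0 → Z *ᵥ v = 0) :
    ∃ R : Matrix k k K, R.IsHermitian ∧ Z = P * R * Pᴴ := by
  obtain ⟨Q, hQ⟩ := exists_mul_mul_eq_self Pᴴ
  have hright : Z * (Q * Pᴴ) = Z := by
    refine Matrix.ext_of_mulVec_single fun i => ?_
    set v : m → K := Pi.single i 1
    have hv : Pᴴ *ᵥ ((Q * Pᴴ) *ᵥ v - v) = 0 := by
      rw [mulVec_sub, mulVec_mulVec, ← Matrix.mul_assoc, hQ, sub_self]
    rw [← mulVec_mulVec, ← sub_eq_zero, ← mulVec_sub, hker _ hv]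
  have hleft : P * Qᴴ * Z = Z := by
    simpa only [conjTranspose_mul, conjTranspose_conjTranspose, hZ.eq]
      using congrArg conjTranspose hright
  refine ⟨Qᴴ * Z * Q, isHermitian_conjTranspose_mul_mul Q hZ, ?_⟩
  calc Z = P * Qᴴ * (Z * (Q * Pᴴ)) := by rw [hright, hleft]
    _ = P * (Qᴴ * Z * Q) * Pᴴ := by simp only [Matrix.mul_assoc]

theorem mulVec_eq_zero_of_posSemidef_add_of_posSemidef_sub [Fintype m]
    {X W : Matrix m m 𝕜} (hadd : (X + W).PosSemidef) (hsub : (X - W).PosSemidef)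
    {v : m → 𝕜} (hv : X *ᵥ v = 0) : W *ᵥ v = 0 := by
  have hnonneg : 0 ≤ star v ⬝ᵥ (W *ᵥ v) := by
    simpa only [add_mulVec, hv, zero_add] using hadd.dotProduct_mulVec_nonneg v
  have hnonpos : star v ⬝ᵥ (W *ᵥ v) ≤ 0 := by
    simpa only [sub_mulVec, hv, zero_sub, dotProduct_neg, neg_nonneg]
      using hsub.dotProduct_mulVec_nonneg v
  have hzero : star v ⬝ᵥ ((X + W) *ᵥ v) = 0 := by
    rw [add_mulVec, hv, zero_add, le_antisymm hnonpos hnonneg]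
  simpa only [add_mulVec, hv, zero_add] using (hadd.dotProduct_mulVec_zero_iff v).mp hzero

theorem exists_isHermitian_of_posSemidef_add_of_posSemidef_sub [Finite m] [Fintype k]
    {P : Matrix m k 𝕜} {W : Matrix m m 𝕜}
    (hadd : (P * Pᴴ + W).PosSemidef) (hsub : (P * Pᴴ - W).PosSemidef) :
    ∃ R : Matrix k k 𝕜, R.IsHermitian ∧ W = P * R * Pᴴ := by
  cases nonempty_fintype m
  have hdouble : (P * Pᴴ + W) - (P * Pᴴ - W) = (2 : ℝ) • W := by module
  have hW : W.IsHermitian := IsHermitian.of_smul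
    (hdouble ▸ hadd.isHermitian.sub hsub.isHermitian) (IsSelfAdjoint.all (2 : ℝ))
  refine exists_isHermitian_eq_mul_mul_conjTranspose hW P fun v hv => ?_
  refine mulVec_eq_zero_of_posSemidef_add_of_posSemidef_sub hadd hsub ?_
  rw [← mulVec_mulVec, hv, mulVec_zero]

theorem eventually_posSemidef_one_add_smul [Finite k] [DecidableEq k]
    {R : Matrix k k 𝕜} (hR : R.IsHermitian) : ∀ᶠ t : ℝ in 𝓝 0, (1 + t • R).PosSemidef := by
  cases nonempty_fintype k
  have hpos : ∀ᶠ t : ℝ in 𝓝 0, ∀ i, 0 < 1 + t * hR.eigenvalues i := by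
    refine eventually_all.mpr fun i => ?_
    have hcont : ContinuousAt (fun t : ℝ => 1 + t * hR.eigenvalues i) 0 := by fun_prop
    exact hcont.eventually_const_lt (by simp)
  filter_upwards [hpos] with t ht
  have hdiag : 1 + t • R = Unitary.conjStarAlgAut 𝕜 _ hR.eigenvectorUnitary
      (diagonal fun i => ((1 + t * hR.eigenvalues i : ℝ) : 𝕜)) := by
    have hsplit : (diagonal fun i => ((1 + t * hR.eigenvalues i : ℝ) : 𝕜)) =
        1 + (t : 𝕜) • diagonal (RCLike.ofReal ∘ hR.eigenvalues) := by
      rw [← diagonal_one, ← diagonal_smul, diagonal_add]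
      simp
    rw [hsplit, map_add, map_one, map_smul, ← hR.spectral_theorem, ← RCLike.real_smul_eq_coe_smul]
  rw [hdiag, Unitary.conjStarAlgAut_apply]
  refine PosSemidef.mul_mul_conjTranspose_same (posSemidef_diagonal_iff.mpr fun i => ?_) _
  exact RCLike.ofReal_nonneg.mpr (ht i).le

theorem eventually_posSemidef_mul_conjTranspose_add_smul [Finite m] [Fintype k]
    (P : Matrix m k 𝕜) {R : Matrix k k 𝕜} (hR : R.IsHermitian) :
    ∀ᶠ t : ℝ in 𝓝 0, (P * Pᴴ + t • (P * R * Pᴴ)).PosSemidef := by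
  filter_upwards [eventually_posSemidef_one_add_smul hR] with t ht
  have hcongr : P * Pᴴ + t • (P * R * Pᴴ) = P * (1 + t • R) * Pᴴ := by
    rw [Matrix.mul_add, Matrix.mul_one, Matrix.add_mul, Matrix.mul_smul, Matrix.smul_mul]
  rw [hcongr]
  exact ht.mul_mul_conjTranspose_same P

end Matrices

section Perturbations

variable {κ : Type*} {C D : Set (Matrix (Fin n) (Fin n) ℝ)} {X Z : Matrix (Fin n) (Fin n) ℝ}

theorem mem_pert_iff_eventually (hC : Convex ℝ C) :
    Z ∈ Pert C X ↔ ∀ᶠ t : ℝ in 𝓝 0, X + t • Z ∈ C := by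
  constructor
  · rintro ⟨ε, hε, hadd, hsub⟩
    have hconv : Convex ℝ {t : ℝ | X + t • Z ∈ C} :=
      (hC.translate_preimage_right X).linear_preimage (LinearMap.toSpanSingleton ℝ _ Z)
    have hneg : X + (-ε) • Z ∈ C := by rwa [neg_smul, ← sub_eq_add_neg]
    exact mem_of_superset (Icc_mem_nhds (neg_lt_zero.mpr hε) hε) (hconv.ordConnected.out hneg hadd)
  · intro h
    obtain ⟨δ, hδ, hball⟩ := Metric.eventually_nhds_iff_ball.mp h
    have hmem : δ / 2 ∈ Metric.ball 0 δ := by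
      rw [mem_ball_zero_iff, Real.norm_of_nonneg (half_pos hδ).le]
      exact half_lt_self hδ
    have hneg : -(δ / 2) ∈ Metric.ball 0 δ := by
      rwa [mem_ball_zero_iff, norm_neg, ← mem_ball_zero_iff]
    refine ⟨δ / 2, half_pos hδ, hball _ hmem, ?_⟩
    rw [sub_eq_add_neg, ← neg_smul]
    exact hball _ hneg

theorem pert_inter (hC : Convex ℝ C) (hD : Convex ℝ D) :
    Pert (C ∩ D) X = Pert C X ∩ Pert D X := by
  ext Z
  simp only [Set.mem_inter_iff, mem_pert_iff_eventually, hC, hD, hC.inter hD, eventually_and]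

theorem pert_biInter (s : Finset κ) {F : κ → Set (Matrix (Fin n) (Fin n) ℝ)}
    (hF : ∀ i ∈ s, Convex ℝ (F i)) : Pert (⋂ i ∈ s, F i) X = ⋂ i ∈ s, Pert (F i) X := by
  ext Z
  rw [mem_pert_iff_eventually (convex_iInter₂ hF)]
  simp only [Set.mem_iInter, eventually_all_finset]
  exact forall₂_congr fun i hi => (mem_pert_iff_eventually (hF i hi)).symm

variable (f : Matrix (Fin n) (Fin n) ℝ →ₗ[ℝ] ℝ) {c : ℝ}

theorem pert_hyperplane (hX : f X = c) : Pert {Y | f Y = c} X = {Z | f Z = 0} := by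
  ext Z
  constructor
  · rintro ⟨ε, hε, hadd, -⟩
    simpa [hX, hε.ne'] using hadd
  · intro (hZ : f Z = 0)
    exact ⟨1, one_pos, by simp [hX, hZ], by simp [hX, hZ]⟩

theorem mem_pert_halfSpace_iff (hX : f X ≤ c) :
    Z ∈ Pert {Y | f Y ≤ c} X ↔ (f X = c → f Z = 0) := by
  constructor
  · rintro ⟨ε, hε, hadd, hsub⟩ hactive
    simp only [Set.mem_ofPred_eq, map_add, map_sub, map_smul, smul_eq_mul, hactive] at hadd hsub
    have hεZ : ε * f Z = 0 := by linarith
    exact (mul_eq_zero.mp hεZ).resolve_left hε.ne'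
  · intro h
    rw [mem_pert_iff_eventually (convex_halfSpace_le f.isLinear c)]
    simp only [Set.mem_ofPred_eq, map_add, map_smul, smul_eq_mul]
    rcases hX.eq_or_lt with hactive | hinactive
    · simp [h hactive, hX]
    · have hcont : ContinuousAt (fun t : ℝ => f X + t * f Z) 0 := by fun_prop
      exact (hcont.eventually_lt_const (by simpa using hinactive)).mono fun _ => le_of_lt

theorem pert_setOf_posSemidef {m : Type*} [Fintype m] (P : Matrix (Fin n) m ℝ) :
    Pert {Y | Y.PosSemidef} (P * Pᵀ) = {Y | ∃ R : Matrix m m ℝ, R.IsSymm ∧ Y = P * R * Pᵀ} := by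
  simp only [← conjTranspose_eq_transpose_of_trivial, ← isHermitian_iff_isSymm]
  ext Z
  constructor
  · rintro ⟨ε, hε, hadd, hsub⟩
    obtain ⟨R, hR, hεZ⟩ := exists_isHermitian_of_posSemidef_add_of_posSemidef_sub hadd hsub
    refine ⟨ε⁻¹ • R, hR.smul (IsSelfAdjoint.all _), ?_⟩
    rw [Matrix.mul_smul, Matrix.smul_mul, ← hεZ, inv_smul_smul₀ hε.ne']
  · rintro ⟨R, hR, rfl⟩
    exact (mem_pert_iff_eventually convex_setOf_posSemidef).mpr
      (eventually_posSemidef_mul_conjTranspose_add_smul P hR)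

end Perturbations

section FeasibleRegion

variable {A : ι → Matrix (Fin n) (Fin n) ℝ} {b : ι → ℝ} {I J : Finset ι}
  {X Z : Matrix (Fin n) (Fin n) ℝ}

/-- The linear functional `⟨B, ·⟩` of the trace inner product. -/
def traceInner (B : Matrix (Fin n) (Fin n) ℝ) : Matrix (Fin n) (Fin n) ℝ →ₗ[ℝ] ℝ :=
  traceLinearMap (Fin n) ℝ ℝ ∘ₗ LinearMap.mulLeft ℝ B

theorem feas_eq_inter : Feas A b I J = {Y | Y.PosSemidef} ∩
    ((⋂ i ∈ I, {Y | traceInner (A i) Y = b i}) ∩ ⋂ i ∈ J, {Y | traceInner (A i) Y ≤ b i}) := by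
  ext Y
  simp [Feas, traceInner]

theorem mem_pert_feas_iff (hX : X ∈ Feas A b I J) :
    Z ∈ Pert (Feas A b I J) X ↔
      Z ∈ Pert {Y | Y.PosSemidef} X ∧ ∀ i ∈ I ∪ activeJ A b J X, (A i * Z).trace = 0 := by
  obtain ⟨-, hI, hJ⟩ := hX
  have hconvI : ∀ i ∈ I, Convex ℝ {Y | traceInner (A i) Y = b i} :=
    fun i _ => convex_hyperplane (traceInner (A i)).isLinear (b i)
  have hconvJ : ∀ i ∈ J, Convex ℝ {Y | traceInner (A i) Y ≤ b i} :=
    fun i _ => convex_halfSpace_le (traceInner (A i)).isLinear (b i)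
  have hpertI : ∀ i ∈ I, (Z ∈ Pert {Y | traceInner (A i) Y = b i} X ↔ (A i * Z).trace = 0) :=
    fun i hi => Set.ext_iff.mp (pert_hyperplane (traceInner (A i)) (hI i hi)) Z
  have hpertJ : ∀ i ∈ J, (Z ∈ Pert {Y | traceInner (A i) Y ≤ b i} X ↔
      ((A i * X).trace = b i → (A i * Z).trace = 0)) :=
    fun i hi => mem_pert_halfSpace_iff (traceInner (A i)) (hJ i hi)
  rw [feas_eq_inter,
    pert_inter convex_setOf_posSemidef ((convex_iInter₂ hconvI).inter (convex_iInter₂ hconvJ)),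
    pert_inter (convex_iInter₂ hconvI) (convex_iInter₂ hconvJ),
    pert_biInter I hconvI, pert_biInter J hconvJ]
  simp only [Set.mem_inter_iff, Set.mem_iInter, forall₂_congr hpertI, forall₂_congr hpertJ,
    Finset.forall_mem_union, activeJ, Finset.mem_filter, and_imp]

end FeasibleRegion

theorem pert_eq_of_rank_factorization_general {m : Type*} [Fintype m]
    (A : ι → Matrix (Fin n) (Fin n) ℝ) (b : ι → ℝ) (I J : Finset ι)
    (X : Matrix (Fin n) (Fin n) ℝ) (hX : X ∈ Feas A b I J)
    (P : Matrix (Fin n) m ℝ) (hfact : X = P * Pᵀ) :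
    Pert (Feas A b I J) X =
      {Y | ∃ R : Matrix m m ℝ, R.IsSymm ∧ Y = P * R * Pᵀ ∧
        ∀ i ∈ I ∪ activeJ A b J X, (P * R * Pᵀ * A i).trace = 0} := by
  have hpsd : Pert {Y | Y.PosSemidef} X = {Y | ∃ R : Matrix m m ℝ, R.IsSymm ∧ Y = P * R * Pᵀ} :=
    hfact ▸ pert_setOf_posSemidef P
  ext Z
  rw [mem_pert_feas_iff hX, hpsd]
  constructor
  · rintro ⟨⟨R, hR, rfl⟩, htrace⟩
    exact ⟨R, hR, rfl, fun i hi => trace_mul_comm (A i) _ ▸ htrace i hi⟩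
  · rintro ⟨R, hR, rfl, htrace⟩
    exact ⟨⟨R, hR, rfl⟩, fun i hi => trace_mul_comm (A i) _ ▸ htrace i hi⟩

theorem pert_eq_of_rank_factorization
    (A : ι → Matrix (Fin n) (Fin n) ℝ) (b : ι → ℝ) (I J : Finset ι)
    (hIJ : Disjoint I J) (hA : ∀ i, (A i).IsSymm)
    (X : Matrix (Fin n) (Fin n) ℝ) (hX : X ∈ Feas A b I J)
    (P : Matrix (Fin n) (Fin r) ℝ) (hr : r = X.rank) (hfact : X = P * Pᵀ) :
    Pert (Feas A b I J) X =
      {Y | ∃ R : Matrix (Fin r) (Fin r) ℝ, R.IsSymm ∧ Y = P * R * Pᵀ ∧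
        ∀ i ∈ I ∪ activeJ A b J X, (P * R * Pᵀ * A i).trace = 0} :=
  pert_eq_of_rank_factorization_general A b I J X hX P hfact

end Stmt0
end

section
/- Let X be an element of the primal feasible region 𝒫, written as X = P Pᵀ where P is an n×r real matrix and r = rank X. The following are equivalent: (i) X is an extreme point of 𝒫; (ii) the only symmetric r×r matrix R satisfying ⟨Pᵀ A_i P, R⟩ = 0 for all i ∈ I ∪ J_X is R = 0; (iii) the linear span of { Pᵀ A_i P : i ∈ I ∪ J_X } is the whole space of symmetric r×r matrices. -/
/- STATEMENT 1: for X = P Pᵀ in the primal feasible region 𝒫 (with r = rank X),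
TFAE: (i) X is an extreme point of 𝒫; (ii) the only symmetric r×r matrix R with
⟨Pᵀ A_i P, R⟩ = 0 for all i ∈ I ∪ J_X is R = 0; (iii) span{Pᵀ A_i P : i ∈ I ∪ J_X}
is the whole space of symmetric r×r matrices. -/

open Matrix BigOperators
open scoped Classical

namespace Stmt1

variable {n r : ℕ} {ι : Type*}

/-- The primal feasible region 𝒫. -/
def Feas (A : ι → Matrix (Fin n) (Fin n) ℝ) (b : ι → ℝ) (I J : Finset ι) :
    Set (Matrix (Fin n) (Fin n) ℝ) :=
  {X | X.PosSemidef ∧ (∀ i ∈ I, (A i * X).trace = b i) ∧ (∀ i ∈ J, (A i * X).trace ≤ b i)}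

/-- The set `J_X` of inequality constraints active at `X`. -/
noncomputable def activeJ (A : ι → Matrix (Fin n) (Fin n) ℝ) (b : ι → ℝ) (J : Finset ι)
    (X : Matrix (Fin n) (Fin n) ℝ) : Finset ι :=
  J.filter fun i => (A i * X).trace = b i

/-- `x` is an extreme point of the convex set `C`. -/
def IsExtremePt {M : Type*} [AddCommGroup M] [Module ℝ M] (C : Set M) (x : M) : Prop :=
  x ∈ C ∧ ∀ y ∈ C, ∀ z ∈ C, ∀ t : ℝ, 0 < t → t < 1 → x = t • y + (1 - t) • z →
    y = x ∧ z = x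

/-- The subspace of symmetric m×m real matrices. -/
def symmSub (m : ℕ) : Submodule ℝ (Matrix (Fin m) (Fin m) ℝ) where
  carrier := {X | X.IsSymm}
  add_mem' := fun hx hy => hx.add hy
  zero_mem' := by simp [Matrix.IsSymm]
  smul_mem' := fun c X hX => hX.smul c

/-!
A point `x` of a convex set is extreme iff the only `d` with both `x + d` and `x - d` in the set is
`d = 0`. Let `X = P Pᵀ` with `P` of full column rank. If `X + D` and `X - D` are positive
semidefinite, then `D` vanishes on `ker X`, so `D = P R Pᵀ` for a symmetric `R`; conversely
`X + e P R Pᵀ = P (1 + e R) Pᵀ` is positive semidefinite for all small `e`. A constraint that is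
tight at `X` allows a move along both `D` and `-D` iff `0 = ⟨A i, D⟩ = ⟨Pᵀ A i P, R⟩`, while a slack
one allows every small move. Hence the directions at `X` are the symmetric `R` that are
trace-orthogonal to all the `Pᵀ A i P`, and only `R = 0` is left iff these matrices span.
-/

open scoped Topology

section ExtremePoints

section OrderedField

variable {𝕜 E : Type*} [Field 𝕜] [LinearOrder 𝕜] [IsStrictOrderedRing 𝕜] [AddCommGroup E]
  [Module 𝕜 E] {C : Set E} {x d : E}

lemma eq_zero_of_mem_extremePoints_of_add_mem_of_sub_mem (hx : x ∈ C.extremePoints 𝕜)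
    (hadd : x + d ∈ C) (hsub : x - d ∈ C) : d = 0 := by
  have hmid : x ∈ openSegment 𝕜 (x + d) (x - d) :=
    ⟨1 / 2, 1 / 2, by norm_num, by norm_num, by norm_num, by module⟩
  exact add_eq_left.1 ((mem_extremePoints_iff_left.1 hx).2 _ hadd _ hsub hmid)

lemma mem_extremePoints_of_forall_add_mem_sub_mem (hC : Convex 𝕜 C) (hx : x ∈ C)
    (h : ∀ d, x + d ∈ C → x - d ∈ C → d = 0) : x ∈ C.extremePoints 𝕜 := by
  refine mem_extremePoints_iff_left.2 ⟨hx, ?_⟩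
  rintro y hy z hz ⟨s, t, hs, ht, hst, hxyz⟩
  -- `s • (y - x) = -(t • (z - x))` points from `x` towards `y`, and its negative towards `z`.
  have hadd : x + s • (y - x) ∈ C := hC.add_smul_sub_mem hx hy ⟨hs.le, by linarith⟩
  have hsub : x - s • (y - x) ∈ C := by
    have hst_smul : s • (y - x) + t • (z - x) = 0 := by
      rw [smul_sub, smul_sub, sub_add_sub_comm, hxyz, ← add_smul, hst, one_smul, sub_self]
    rw [sub_eq_add_neg, neg_eq_of_add_eq_zero_right hst_smul]
    exact hC.add_smul_sub_mem hx hz ⟨ht.le, by linarith⟩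
  exact sub_eq_zero.1 ((smul_eq_zero.1 (h _ hadd hsub)).resolve_left hs.ne')

end OrderedField

variable {E : Type*} [AddCommGroup E] [Module ℝ E] {C : Set E} {x d : E}

lemma isExtremePt_iff_mem_extremePoints : IsExtremePt C x ↔ x ∈ C.extremePoints ℝ := by
  rw [mem_extremePoints]
  refine and_congr_right fun _ ↦ forall₂_congr fun y _ ↦ forall₂_congr fun z _ ↦ ⟨?_, ?_⟩
  · rintro h ⟨s, t, hs, ht, hst, hx⟩
    obtain rfl : t = 1 - s := eq_sub_of_add_eq' hst
    exact h s hs (by linarith) hx.symm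
  · exact fun h t ht₀ ht₁ hx ↦ h ⟨t, 1 - t, ht₀, sub_pos.2 ht₁, add_sub_cancel _ _, hx.symm⟩

lemma eq_zero_of_mem_extremePoints_of_eventually_add_smul_mem (hx : x ∈ C.extremePoints ℝ)
    (h : ∀ᶠ e in 𝓝 (0 : ℝ), x + e • d ∈ C) : d = 0 := by
  have hneg : ∀ᶠ e in 𝓝 (0 : ℝ), x - e • d ∈ C := by
    have := (continuous_neg.tendsto' (0 : ℝ) 0 neg_zero).eventually h
    simpa only [neg_smul, ← sub_eq_add_neg] using this
  obtain ⟨e, ⟨hadd, hsub⟩, he⟩ :=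
    (((h.and hneg).filter_mono nhdsWithin_le_nhds).and (self_mem_nhdsWithin (s := {0}ᶜ))).exists
  exact (smul_eq_zero.1
    (eq_zero_of_mem_extremePoints_of_add_mem_of_sub_mem hx hadd hsub)).resolve_left he

end ExtremePoints

section FullColumnRank

variable {K m k : Type*} [Fintype m] [Fintype k] [DecidableEq k]

lemma exists_left_inverse_of_rank_eq_card [Field K] {P : Matrix m k K}
    (hP : P.rank = Fintype.card k) : ∃ Q : Matrix k m K, Q * P = 1 := by
  have hrange : LinearMap.range Pᵀ.mulVecLin = ⊤ := by
    apply Submodule.eq_top_of_finrank_eq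
    rw [← Matrix.rank, rank_transpose, hP, Module.finrank_fintype_fun_eq_card]
  refine vecMul_surjective_iff_exists_left_inverse.1 fun v ↦ ?_
  obtain ⟨w, rfl⟩ := LinearMap.range_eq_top.1 hrange v
  exact ⟨w, by simp⟩

lemma eq_zero_of_mul_mul_transpose_eq_zero [CommSemiring K] {P : Matrix m k K} {Q : Matrix k m K}
    {R : Matrix k k K} (hQ : Q * P = 1) (h : P * R * Pᵀ = 0) : R = 0 := by
  have hQ' : Pᵀ * Qᵀ = 1 := by rw [← transpose_mul, hQ, transpose_one]
  calc R = (Q * P) * R * (Pᵀ * Qᵀ) := by rw [hQ, hQ', Matrix.one_mul, Matrix.mul_one]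
    _ = Q * (P * R * Pᵀ) * Qᵀ := by simp only [Matrix.mul_assoc]
    _ = 0 := by rw [h, Matrix.mul_zero, Matrix.zero_mul]

end FullColumnRank

section PosSemidef

open scoped ComplexOrder MatrixOrder

variable {𝕜 m k p : Type*} [RCLike 𝕜]

lemma mul_eq_zero_of_conjTranspose_mul_mul_eq_zero [Fintype m] {M : Matrix m m 𝕜}
    {B : Matrix m p 𝕜} (hM : M.PosSemidef) (h : Bᴴ * M * B = 0) : M * B = 0 := by
  obtain ⟨S, rfl⟩ := CStarAlgebra.nonneg_iff_eq_star_mul_self.1 hM.nonneg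
  rw [star_eq_conjTranspose] at h ⊢
  rw [conjTranspose_mul_self_mul_eq_zero, ← conjTranspose_mul_self_eq_zero, conjTranspose_mul]
  simpa only [Matrix.mul_assoc] using h

lemma mul_eq_zero_of_posSemidef_add_of_posSemidef_sub [Fintype m] [Finite p] {X D : Matrix m m 𝕜}
    {B : Matrix m p 𝕜} (hadd : (X + D).PosSemidef) (hsub : (X - D).PosSemidef)
    (hX : X * B = 0) : D * B = 0 := by
  have hadd_nonneg : 0 ≤ Bᴴ * D * B := by
    have := (hadd.conjTranspose_mul_mul_same B).nonneg
    rwa [Matrix.mul_assoc, Matrix.add_mul, hX, zero_add, ← Matrix.mul_assoc] at this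
  have hsub_nonneg : 0 ≤ -(Bᴴ * D * B) := by
    have := (hsub.conjTranspose_mul_mul_same B).nonneg
    rwa [Matrix.mul_assoc, Matrix.sub_mul, hX, zero_sub, Matrix.mul_neg,
      ← Matrix.mul_assoc] at this
  have hD : Bᴴ * D * B = 0 := le_antisymm (neg_nonneg.1 hsub_nonneg) hadd_nonneg
  have hXD : Bᴴ * (X + D) * B = 0 := by
    rw [Matrix.mul_assoc, Matrix.add_mul, hX, zero_add, ← Matrix.mul_assoc, hD]
  simpa only [Matrix.add_mul, hX, zero_add] using
    mul_eq_zero_of_conjTranspose_mul_mul_eq_zero hadd hXD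

lemma exists_eq_mul_mul_conjTranspose_of_posSemidef_add_of_posSemidef_sub
    [Fintype m] [Fintype k] [DecidableEq k] {P : Matrix m k 𝕜} {Q : Matrix k m 𝕜}
    {D : Matrix m m 𝕜} (hQ : Q * P = 1)
    (hadd : (P * Pᴴ + D).PosSemidef) (hsub : (P * Pᴴ - D).PosSemidef) :
    ∃ R : Matrix k k 𝕜, R.IsHermitian ∧ D = P * R * Pᴴ := by
  classical
  have hD : D.IsHermitian := by
    simpa using hadd.isHermitian.sub (isHermitian_mul_conjTranspose_self P)
  have hQ' : Pᴴ * Qᴴ = 1 := by rw [← conjTranspose_mul, hQ, conjTranspose_one]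
  have hright : D * (Qᴴ * Pᴴ) = D := by
    have hker : P * Pᴴ * (1 - Qᴴ * Pᴴ) = 0 := by
      rw [Matrix.mul_assoc, Matrix.mul_sub, ← Matrix.mul_assoc Pᴴ, hQ', Matrix.mul_one,
        Matrix.one_mul, sub_self, Matrix.mul_zero]
    have := mul_eq_zero_of_posSemidef_add_of_posSemidef_sub hadd hsub hker
    rwa [Matrix.mul_sub, Matrix.mul_one, sub_eq_zero, eq_comm] at this
  have hleft : P * Q * D = D := by
    simpa only [conjTranspose_mul, conjTranspose_conjTranspose, hD.eq] using
      congr_arg conjTranspose hright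
  refine ⟨Q * D * Qᴴ, isHermitian_mul_mul_conjTranspose Q hD, ?_⟩
  calc D = P * Q * D * (Qᴴ * Pᴴ) := by rw [hleft, hright]
    _ = P * (Q * D * Qᴴ) * Pᴴ := by simp only [Matrix.mul_assoc]

lemma eventually_posSemidef_one_add_smul [Finite k] [DecidableEq k] {R : Matrix k k 𝕜}
    (hR : R.IsHermitian) : ∀ᶠ e in 𝓝 (0 : ℝ), (1 + e • R).PosSemidef := by
  cases nonempty_fintype k
  have hspec : ∀ᶠ e in 𝓝 (0 : ℝ), ∀ l ∈ spectrum ℝ R, 0 ≤ 1 + e * l := by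
    refine (Filter.eventually_all_finite R.finite_real_spectrum).2 fun l _ ↦ ?_
    have hlim : Filter.Tendsto (fun e : ℝ ↦ 1 + e * l) (𝓝 0) (𝓝 1) :=
      Continuous.tendsto' (by fun_prop) _ _ (by simp)
    exact hlim.eventually_const_le one_pos
  filter_upwards [hspec] with e he
  have hcfc : cfc (fun l : ℝ ↦ 1 + e * l) R = 1 + e • R := by
    rw [cfc_const_add (1 : ℝ) (e * ·) R, cfc_const_mul_id e R hR.isSelfAdjoint, map_one]
  exact hcfc ▸ (cfc_nonneg he).posSemidef

lemma eventually_posSemidef_add_smul_mul_mul_conjTranspose [Finite m] [Fintype k]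
    (P : Matrix m k 𝕜) {R : Matrix k k 𝕜} (hR : R.IsHermitian) :
    ∀ᶠ e in 𝓝 (0 : ℝ), (P * Pᴴ + e • (P * R * Pᴴ)).PosSemidef := by
  classical
  filter_upwards [eventually_posSemidef_one_add_smul hR] with e he
  simpa [Matrix.mul_add, Matrix.add_mul] using he.mul_mul_conjTranspose_same P

end PosSemidef

section TraceForm

open scoped ComplexOrder

lemma trace_mul_mul_mul_transpose {R : Type*} [CommSemiring R] {m k : Type*} [Fintype m]
    [Fintype k] (B : Matrix m m R) (P : Matrix m k R) (M : Matrix k k R) :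
    (B * (P * M * Pᵀ)).trace = (Pᵀ * B * P * M).trace := by
  rw [← Matrix.mul_assoc, trace_mul_comm]
  simp only [Matrix.mul_assoc]

lemma span_eq_iff_forall_inner_eq_zero {𝕜 E : Type*} [RCLike 𝕜] [NormedAddCommGroup E]
    [InnerProductSpace 𝕜 E] {W : Submodule 𝕜 E} {S : Set E} (hS : S ⊆ W)
    [(Submodule.span 𝕜 S).HasOrthogonalProjection] :
    Submodule.span 𝕜 S = W ↔ ∀ x ∈ W, (∀ s ∈ S, inner 𝕜 x s = 0) → x = 0 := by
  constructor
  · rintro rfl x hx h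
    have hle : Submodule.span 𝕜 S ≤ (𝕜 ∙ x)ᗮ :=
      Submodule.span_le.2 fun s hs ↦ Submodule.mem_orthogonal_singleton_iff_inner_right.2 (h s hs)
    exact inner_self_eq_zero.1 (Submodule.mem_orthogonal_singleton_iff_inner_right.1 (hle hx))
  · intro h
    have hbot : (Submodule.span 𝕜 S)ᗮ ⊓ W = ⊥ := (Submodule.eq_bot_iff _).2 fun x hx ↦
      h x hx.2 fun s hs ↦ (Submodule.mem_orthogonal' _ _).1 hx.1 s (Submodule.subset_span hs)
    rw [← Submodule.sup_orthogonal_inf_of_hasOrthogonalProjection (Submodule.span_le.2 hS), hbot,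
      sup_bot_eq]

lemma span_eq_iff_forall_trace_eq_zero {𝕜 m : Type*} [RCLike 𝕜] [Fintype m]
    {W : Submodule 𝕜 (Matrix m m 𝕜)} {S : Set (Matrix m m 𝕜)} (hS : S ⊆ W) :
    Submodule.span 𝕜 S = W ↔ ∀ R ∈ W, (∀ M ∈ S, (M * Rᴴ).trace = 0) → R = 0 := by
  classical
  let := toMatrixNormedAddCommGroup (1 : Matrix m m 𝕜) .one
  let := toMatrixInnerProductSpace (1 : Matrix m m 𝕜) .one
  have hinner (R M : Matrix m m 𝕜) : inner 𝕜 R M = (M * Rᴴ).trace :=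
    congr_arg (fun N ↦ (N * Rᴴ).trace) (Matrix.mul_one M)
  simpa only [hinner] using span_eq_iff_forall_inner_eq_zero hS

lemma span_eq_symmSub_iff {m : ℕ} {S : Set (Matrix (Fin m) (Fin m) ℝ)}
    (hS : ∀ M ∈ S, M.IsSymm) :
    Submodule.span ℝ S = symmSub m ↔
      ∀ R : Matrix (Fin m) (Fin m) ℝ, R.IsSymm → (∀ M ∈ S, (M * R).trace = 0) → R = 0 := by
  rw [span_eq_iff_forall_trace_eq_zero (W := symmSub m) hS]
  refine forall₂_congr fun R (hR : R.IsSymm) ↦ ?_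
  rw [conjTranspose_eq_transpose_of_trivial, hR.eq]

end TraceForm

section Feas

variable {A : ι → Matrix (Fin n) (Fin n) ℝ} {b : ι → ℝ} {I J : Finset ι}
  {X D : Matrix (Fin n) (Fin n) ℝ} {P : Matrix (Fin n) (Fin r) ℝ}

variable (A b I J) in
lemma convex_feas : Convex ℝ (Feas A b I J) := by
  rintro Y ⟨hY, hYI, hYJ⟩ Z ⟨hZ, hZI, hZJ⟩ s t hs ht hst
  have htrace (i : ι) : (A i * (s • Y + t • Z)).trace =
      s * (A i * Y).trace + t * (A i * Z).trace := by
    simp [Matrix.mul_add]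
  refine ⟨(hY.smul hs).add (hZ.smul ht), fun i hi ↦ ?_, fun i hi ↦ ?_⟩
  · rw [htrace, hYI i hi, hZI i hi, ← add_mul, hst, one_mul]
  · exact (htrace i).trans_le (convex_Iic (b i) (hYJ i hi) (hZJ i hi) hs ht hst)

lemma trace_mul_eq_zero_of_add_mem_feas_of_sub_mem_feas (hadd : X + D ∈ Feas A b I J)
    (hsub : X - D ∈ Feas A b I J) {i : ι} (hi : i ∈ I ∪ activeJ A b J X) :
    (A i * D).trace = 0 := by
  have htrace_add : (A i * (X + D)).trace = (A i * X).trace + (A i * D).trace := by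
    rw [Matrix.mul_add, trace_add]
  have htrace_sub : (A i * (X - D)).trace = (A i * X).trace - (A i * D).trace := by
    rw [Matrix.mul_sub, trace_sub]
  rcases Finset.mem_union.1 hi with hI | hJ
  · linarith [hadd.2.1 i hI, hsub.2.1 i hI]
  · obtain ⟨hJ, hactive⟩ := Finset.mem_filter.1 hJ
    linarith [hadd.2.2 i hJ, hsub.2.2 i hJ]

lemma eventually_add_smul_mem_feas (hX : X ∈ Feas A b I J)
    (hpsd : ∀ᶠ e in 𝓝 (0 : ℝ), (X + e • D).PosSemidef)
    (hD : ∀ i ∈ I ∪ activeJ A b J X, (A i * D).trace = 0) :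
    ∀ᶠ e in 𝓝 (0 : ℝ), X + e • D ∈ Feas A b I J := by
  have htrace (i : ι) (e : ℝ) :
      (A i * (X + e • D)).trace = (A i * X).trace + e * (A i * D).trace := by
    simp [Matrix.mul_add]
  have hJ : ∀ i ∈ J, ∀ᶠ e in 𝓝 (0 : ℝ), (A i * (X + e • D)).trace ≤ b i := by
    intro i hi
    simp only [htrace]
    rcases (hX.2.2 i hi).eq_or_lt with hactive | hslack
    · have hzero := hD i (Finset.mem_union_right _ (Finset.mem_filter.2 ⟨hi, hactive⟩))
      simp [hzero, hactive]
    · have hlim : Filter.Tendsto (fun e ↦ (A i * X).trace + e * (A i * D).trace) (𝓝 0)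
          (𝓝 (A i * X).trace) := Continuous.tendsto' (by fun_prop) _ _ (by simp)
      exact hlim.eventually_le_const hslack
  filter_upwards [hpsd, (Filter.eventually_all_finset J).2 hJ] with e he heJ
  refine ⟨he, fun i hi ↦ ?_, heJ⟩
  rw [htrace, hD i (Finset.mem_union_left _ hi), mul_zero, add_zero, hX.2.1 i hi]

lemma mem_extremePoints_feas_iff {Q : Matrix (Fin r) (Fin n) ℝ} (hQ : Q * P = 1)
    (hX : P * Pᵀ ∈ Feas A b I J) :
    P * Pᵀ ∈ (Feas A b I J).extremePoints ℝ ↔ ∀ R : Matrix (Fin r) (Fin r) ℝ, R.IsSymm →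
      (∀ i ∈ I ∪ activeJ A b J (P * Pᵀ), (Pᵀ * A i * P * R).trace = 0) → R = 0 := by
  have hP : Pᴴ = Pᵀ := conjTranspose_eq_transpose_of_trivial P
  constructor
  · intro hext R hR horth
    have hpsd := eventually_posSemidef_add_smul_mul_mul_conjTranspose P
      (isHermitian_iff_isSymm.2 hR)
    rw [hP] at hpsd
    have hfeas : ∀ᶠ e in 𝓝 (0 : ℝ), P * Pᵀ + e • (P * R * Pᵀ) ∈ Feas A b I J :=
      eventually_add_smul_mem_feas hX hpsd fun i hi ↦
        (trace_mul_mul_mul_transpose (A i) P R).trans (horth i hi)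
    exact eq_zero_of_mul_mul_transpose_eq_zero hQ
      (eq_zero_of_mem_extremePoints_of_eventually_add_smul_mem hext hfeas)
  · intro h
    refine mem_extremePoints_of_forall_add_mem_sub_mem (convex_feas A b I J) hX
      fun D hadd hsub ↦ ?_
    obtain ⟨R, hR, hD⟩ := exists_eq_mul_mul_conjTranspose_of_posSemidef_add_of_posSemidef_sub hQ
      (hP ▸ hadd.1) (hP ▸ hsub.1)
    rw [hP] at hD
    have hzero : R = 0 := by
      refine h R (isHermitian_iff_isSymm.1 hR) fun i hi ↦ ?_
      rw [← trace_mul_mul_mul_transpose, ← hD]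
      exact trace_mul_eq_zero_of_add_mem_feas_of_sub_mem_feas hadd hsub hi
    rw [hD, hzero, Matrix.mul_zero, Matrix.zero_mul]

end Feas

theorem extremePoint_tfae
    (A : ι → Matrix (Fin n) (Fin n) ℝ) (b : ι → ℝ) (I J : Finset ι)
    (hIJ : Disjoint I J) (hA : ∀ i, (A i).IsSymm)
    (X : Matrix (Fin n) (Fin n) ℝ) (hX : X ∈ Feas A b I J)
    (P : Matrix (Fin n) (Fin r) ℝ) (hr : r = X.rank) (hfact : X = P * Pᵀ) :
    (IsExtremePt (Feas A b I J) X ↔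
      ∀ R : Matrix (Fin r) (Fin r) ℝ, R.IsSymm →
        (∀ i ∈ I ∪ activeJ A b J X, (Pᵀ * A i * P * R).trace = 0) → R = 0) ∧
    (IsExtremePt (Feas A b I J) X ↔
      Submodule.span ℝ {M | ∃ i ∈ I ∪ activeJ A b J X, M = Pᵀ * A i * P} = symmSub r) := by
  subst hfact
  rw [rank_self_mul_transpose] at hr
  obtain ⟨Q, hQ⟩ := exists_left_inverse_of_rank_eq_card (hr.symm.trans (Fintype.card_fin r).symm)
  have hext := isExtremePt_iff_mem_extremePoints.trans (mem_extremePoints_feas_iff hQ hX)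
  have hsymm : ∀ M ∈ {M | ∃ i ∈ I ∪ activeJ A b J (P * Pᵀ), M = Pᵀ * A i * P}, M.IsSymm := by
    rintro _ ⟨i, _, rfl⟩
    simp [IsSymm, (hA i).eq, Matrix.mul_assoc]
  refine ⟨hext, hext.trans ?_⟩
  rw [span_eq_symmSub_iff hsymm]
  refine forall₂_congr fun R _ ↦ imp_congr_left ⟨?_, fun h i hi ↦ h _ ⟨i, hi, rfl⟩⟩
  rintro h _ ⟨i, hi, rfl⟩
  exact h i hi

end Stmt1
end

section
/- Assume the optimal values of the primal SDP (P) and the dual SDP (D) are equal and both are attained. Let X and (y,Z) be a strict complementary pair of primal and dual optimal solutions with J_X = J_Z. If X is the unique optimal solution of (P), then (y,Z) is dual nondegenerate. Analogously, if (y,Z) is the unique optimal solution of (D), then X is primal nondegenerate. -/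
/- STATEMENT 4: under strong duality, for a strict complementary pair X, (y,Z) of primal
and dual optimal solutions with J_X = J_Z: if X is the unique optimal solution of (P)
then (y,Z) is dual nondegenerate; analogously, if (y,Z) is the unique optimal solution
of (D) then X is primal nondegenerate. -/

open Matrix BigOperators
open scoped Classical

namespace Stmt4

variable {n : ℕ} {ι : Type*}

/-- The primal feasible region 𝒫. -/
def PrimalFeas (A : ι → Matrix (Fin n) (Fin n) ℝ) (b : ι → ℝ) (I J : Finset ι)
    (X : Matrix (Fin n) (Fin n) ℝ) : Prop :=
  X.PosSemidef ∧ (∀ i ∈ I, (A i * X).trace = b i) ∧ (∀ i ∈ J, (A i * X).trace ≤ b i)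

/-- Dual feasibility of the pair `(y, Z)`: `Z = Σ_{i∈I∪J} y_i A_i − C ⪰ 0`, `y_i ≥ 0` on `J`. -/
def DualFeas (C : Matrix (Fin n) (Fin n) ℝ) (A : ι → Matrix (Fin n) (Fin n) ℝ)
    (I J : Finset ι) (y : ι → ℝ) (Z : Matrix (Fin n) (Fin n) ℝ) : Prop :=
  Z = (∑ i ∈ I ∪ J, y i • A i) - C ∧ Z.PosSemidef ∧ ∀ i ∈ J, 0 ≤ y i

/-- The dual objective value `Σ_{i∈I∪J} b_i y_i`. -/
noncomputable def dualObj (b : ι → ℝ) (I J : Finset ι) (y : ι → ℝ) : ℝ := ∑ i ∈ I ∪ J, b i * y i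

/-- `X` is an optimal solution of the primal SDP (P). -/
def PrimalOpt (C : Matrix (Fin n) (Fin n) ℝ) (A : ι → Matrix (Fin n) (Fin n) ℝ) (b : ι → ℝ)
    (I J : Finset ι) (X : Matrix (Fin n) (Fin n) ℝ) : Prop :=
  PrimalFeas A b I J X ∧ ∀ X', PrimalFeas A b I J X' → (C * X').trace ≤ (C * X).trace

/-- `(y, Z)` is an optimal solution of the dual SDP (D). -/
def DualOpt (C : Matrix (Fin n) (Fin n) ℝ) (A : ι → Matrix (Fin n) (Fin n) ℝ) (b : ι → ℝ)
    (I J : Finset ι) (y : ι → ℝ) (Z : Matrix (Fin n) (Fin n) ℝ) : Prop :=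
  DualFeas C A I J y Z ∧
    ∀ y' Z', DualFeas C A I J y' Z' → dualObj b I J y ≤ dualObj b I J y'

/-- The set `J_X` of inequality constraints active at a primal feasible `X`. -/
noncomputable def activeJX (A : ι → Matrix (Fin n) (Fin n) ℝ) (b : ι → ℝ) (J : Finset ι)
    (X : Matrix (Fin n) (Fin n) ℝ) : Finset ι :=
  J.filter fun i => (A i * X).trace = b i

/-- The set `J_Z = {i ∈ J : y_i > 0}` for a dual feasible `(y, Z)`. -/
noncomputable def activeJZ (J : Finset ι) (y : ι → ℝ) : Finset ι :=
  J.filter fun i => 0 < y i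

/-- Membership in the tangent space 𝒯_X (the orthogonal complement, inside the symmetric
matrices, of `𝒯_X^⊥ = {M symmetric : X M = 0}`). -/
def InTangent (X T : Matrix (Fin n) (Fin n) ℝ) : Prop :=
  T.IsSymm ∧ ∀ M : Matrix (Fin n) (Fin n) ℝ, M.IsSymm → X * M = 0 → (T * M).trace = 0

/-- `X` is primal nondegenerate: `𝒯_X + span{A_i : i ∈ I ∪ J_X}^⊥ = 𝒮ⁿ`. -/
def PrimalNondeg (A : ι → Matrix (Fin n) (Fin n) ℝ) (b : ι → ℝ) (I J : Finset ι)
    (X : Matrix (Fin n) (Fin n) ℝ) : Prop :=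
  ∀ W : Matrix (Fin n) (Fin n) ℝ, W.IsSymm →
    ∃ T S : Matrix (Fin n) (Fin n) ℝ, InTangent X T ∧
      (S.IsSymm ∧ ∀ i ∈ I ∪ activeJX A b J X, (S * A i).trace = 0) ∧ W = T + S

/-- `(y, Z)` is dual nondegenerate: `𝒯_Z + span{A_i : i ∈ I ∪ J_Z} = 𝒮ⁿ`. -/
def DualNondeg (A : ι → Matrix (Fin n) (Fin n) ℝ) (I J : Finset ι)
    (y : ι → ℝ) (Z : Matrix (Fin n) (Fin n) ℝ) : Prop :=
  ∀ W : Matrix (Fin n) (Fin n) ℝ, W.IsSymm →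
    ∃ T : Matrix (Fin n) (Fin n) ℝ, InTangent Z T ∧
      ∃ c : ι → ℝ, W = T + ∑ i ∈ I ∪ activeJZ J y, c i • A i

/-!
In the space of symmetric matrices with its trace form, a sum of two subspaces is everything as
soon as their orthogonal complements meet trivially, so nondegeneracy says that some subspace
vanishes. For the dual pair a nonzero element of it is a symmetric `M` with `Z * M = 0` that is
orthogonal to every `A i`, `i ∈ I ∪ J_Z`; for the primal solution it is a combination `M` of the
`A i`, `i ∈ I ∪ J_X`, with `X * M = 0`. Strict complementarity makes `X + Z` positive definite,
hence `X + Z + t • M` too for small `t`, and compressing to the range of `X` (respectively `Z`)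
gives `X + t • M ⪰ 0` (respectively `Z + t • M ⪰ 0`). Since `J_X = J_Z`, moving along `M` also
respects the linear constraints and keeps the objective value, which contradicts uniqueness.
-/

open Filter Topology
open scoped ComplexOrder

lemma eventually_add_mul_nonneg {u v : ℝ} (hu : 0 ≤ u) (h : u = 0 → v = 0) :
    ∀ᶠ t : ℝ in 𝓝 0, 0 ≤ u + t * v := by
  rcases hu.eq_or_lt with rfl | hpos
  · simp [h rfl]
  · have hcont : Continuous fun t : ℝ => u + t * v := by fun_prop
    exact (hcont.tendsto 0).eventually_const_le (by simpa using hpos)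

lemma range_mulVecLin_eq_ker_of_rank_add_rank {K m : Type*} [Field K] [Fintype m]
    {X Z : Matrix m m K} (hZX : Z * X = 0) (hrank : X.rank + Z.rank = Fintype.card m) :
    LinearMap.range X.mulVecLin = LinearMap.ker Z.mulVecLin := by
  apply Submodule.eq_of_le_of_finrank_eq
  · rintro _ ⟨v, rfl⟩
    simp [hZX]
  · have hnullity := LinearMap.finrank_range_add_finrank_ker Z.mulVecLin
    rw [Module.finrank_fintype_fun_eq_card] at hnullity
    unfold Matrix.rank at hrank
    omega

section PosSemidef

variable {m 𝕜 : Type*} [RCLike 𝕜]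

open scoped MatrixOrder in
lemma eventually_posSemidef_add_smul [Finite m] {N M : Matrix m m 𝕜} (hN : N.PosDef)
    (hM : M.IsHermitian) : ∀ᶠ t : ℝ in 𝓝 0, (N + t • M).PosSemidef := by
  cases nonempty_fintype m
  cases subsingleton_or_nontrivial (Matrix m m 𝕜)
  · exact .of_forall fun t => Subsingleton.elim 0 (N + t • M) ▸ PosSemidef.zero
  obtain ⟨ε, hε, hεN⟩ : ∃ ε > 0, algebraMap ℝ (Matrix m m 𝕜) ε ≤ N :=
    (CFC.exists_pos_algebraMap_le_iff hN.isHermitian).mpr fun _ =>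
      hN.isStrictlyPositive.spectrum_pos
  have hspectrum : ∀ᶠ t : ℝ in 𝓝 0, ∀ x ∈ spectrum ℝ M, 0 ≤ ε + t * x :=
    (eventually_all_finite finite_real_spectrum).mpr fun _ _ =>
      eventually_add_mul_nonneg hε.le fun h => absurd h hε.ne'
  filter_upwards [hspectrum] with t ht
  rw [← nonneg_iff_posSemidef]
  calc (0 : Matrix m m 𝕜) ≤ cfc (fun x : ℝ => ε + t * x) M := cfc_nonneg ht
    _ = algebraMap ℝ (Matrix m m 𝕜) ε + t • M := by
      rw [cfc_const_add ε (t * ·) M, cfc_const_mul_id t M hM.isSelfAdjoint]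
    _ ≤ N + t • M := by gcongr

variable [Fintype m]

lemma mul_eq_zero_comm_of_isHermitian {X Z : Matrix m m 𝕜} (hX : X.IsHermitian)
    (hZ : Z.IsHermitian) : X * Z = 0 ↔ Z * X = 0 := by
  rw [← conjTranspose_eq_zero, conjTranspose_mul, hX.eq, hZ.eq]

lemma posDef_add_of_rank_add_rank {X Z : Matrix m m 𝕜} (hX : X.PosSemidef) (hZ : Z.PosSemidef)
    (hXZ : X * Z = 0) (hrank : X.rank + Z.rank = Fintype.card m) : (X + Z).PosDef := by
  have hZX : Z * X = 0 := (mul_eq_zero_comm_of_isHermitian hX.1 hZ.1).mp hXZ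
  rw [(hX.add hZ).posDef_iff_isUnit, ← mulVec_injective_iff_isUnit,
    ← coe_mulVecLin, ← LinearMap.ker_eq_bot, LinearMap.ker_eq_bot']
  have hsq {v : m → 𝕜} (hv : X *ᵥ (X *ᵥ v) = 0) : X *ᵥ v = 0 := by
    rwa [mulVec_mulVec, ← congrArg (· * X) hX.1.eq, conjTranspose_mul_self_mulVec_eq_zero] at hv
  intro v hv
  rw [mulVecLin_apply, add_mulVec] at hv
  have hXv : X *ᵥ v = 0 := hsq <| by
    simpa [mulVec_add, hXZ] using congrArg (X *ᵥ ·) hv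
  have hZv : Z *ᵥ v = 0 := by simpa [hXv] using hv
  have hv_range : v ∈ LinearMap.range X.mulVecLin := by
    rwa [range_mulVecLin_eq_ker_of_rank_add_rank hZX hrank]
  obtain ⟨u, rfl⟩ := hv_range
  exact hsq hXv

lemma eventually_posSemidef_add_smul_of_rank_add_rank {X Z M : Matrix m m 𝕜}
    (hX : X.PosSemidef) (hZ : Z.PosSemidef) (hXZ : X * Z = 0)
    (hrank : X.rank + Z.rank = Fintype.card m) (hM : M.IsHermitian) (hZM : Z * M = 0) :
    ∀ᶠ t : ℝ in 𝓝 0, (X + t • M).PosSemidef := by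
  have hZX : Z * X = 0 := (mul_eq_zero_comm_of_isHermitian hX.1 hZ.1).mp hXZ
  have hpd : (X + Z).PosDef := posDef_add_of_rank_add_rank hX hZ hXZ hrank
  have hunit : IsUnit (X + Z).det := (isUnit_iff_isUnit_det _).mp hpd.isUnit
  -- The matrix `Q` is the projection onto the range of `X` along the range of `Z`.
  set Q := (X + Z)⁻¹ * X with hQ
  have hQ_fix {B : Matrix m m 𝕜} (hZB : Z * B = 0) : Q * B = B := by
    calc Q * B = (X + Z)⁻¹ * ((X + Z) * B) := by rw [add_mul, hZB, add_zero, hQ, mul_assoc]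
      _ = B := nonsing_inv_mul_cancel_left _ _ hunit
  have hQZ : Q * Z = 0 := by rw [hQ, mul_assoc, hXZ, mul_zero]
  filter_upwards [eventually_posSemidef_add_smul hpd hM] with t ht
  have hherm : (X + t • M)ᴴ = X + t • M := hX.1.add (hM.smul (IsSelfAdjoint.all t))
  have hcompress : Q * (X + Z + t • M) * Qᴴ = X + t • M := by
    have hQXM : Q * (X + t • M) = X + t • M := hQ_fix (by simp [mul_add, hZX, hZM])
    calc Q * (X + Z + t • M) * Qᴴ = Q * (X + t • M) * Qᴴ := by
          rw [add_right_comm, mul_add, hQZ, add_zero]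
      _ = (Q * (X + t • M)ᴴ)ᴴ := by
          rw [hQXM, conjTranspose_mul Q, conjTranspose_conjTranspose]
      _ = X + t • M := by rw [hherm, hQXM, hherm]
  exact hcompress ▸ ht.mul_mul_conjTranspose_same Q

end PosSemidef

section SymmetricMatrices

lemma sup_eq_top_of_orthogonal_inf_orthogonal_eq_bot {K V : Type*} [Field K] [AddCommGroup V]
    [Module K V] [FiniteDimensional K V] {B : LinearMap.BilinForm K V} (hB : B.Nondegenerate)
    (hrefl : B.IsRefl) {U W : Submodule K V} (h : B.orthogonal U ⊓ B.orthogonal W = ⊥) :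
    U ⊔ W = ⊤ := by
  have hbot : B.orthogonal (U ⊔ W) = ⊥ := le_bot_iff.mp <| h ▸
    le_inf (B.orthogonal_le le_sup_left) (B.orthogonal_le le_sup_right)
  rw [← B.orthogonal_orthogonal hB hrefl (U ⊔ W), hbot, LinearMap.BilinForm.orthogonal_bot]

variable {m : Type*}

/-- The space `𝒮ᵐ` of real symmetric matrices, in which the tangent spaces and their orthogonal
complements are taken. -/
def symmetricMatrices (m : Type*) : Submodule ℝ (Matrix m m ℝ) where
  carrier := {M | M.IsSymm}
  zero_mem' := isSymm_zero
  add_mem' hM hN := hM.add hN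
  smul_mem' c _ hM := hM.smul c

variable [Fintype m]

/-- The trace inner product `⟨M, N⟩ = Tr (M N)` on the symmetric matrices, as a bilinear form so
that orthogonal complements can be formed without choosing a norm on matrices. -/
noncomputable def traceForm (m : Type*) [Fintype m] :
    LinearMap.BilinForm ℝ (symmetricMatrices m) :=
  LinearMap.BilinForm.restrict ((LinearMap.mul ℝ (Matrix m m ℝ)).compr₂ (traceLinearMap m ℝ ℝ))
    (symmetricMatrices m)

lemma traceForm_apply (M N : symmetricMatrices m) :
    traceForm m M N = ((M : Matrix m m ℝ) * N).trace :=
  rfl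

lemma traceForm_isRefl : (traceForm m).IsRefl := fun M N h => by
  rwa [traceForm_apply, trace_mul_comm]

lemma traceForm_nondegenerate : (traceForm m).Nondegenerate := by
  refine traceForm_isRefl.nondegenerate_iff_separatingLeft.mpr fun M hM => ?_
  have hMM : ((M : Matrix m m ℝ)ᴴ * M).trace = 0 := by
    rw [conjTranspose_eq_transpose_of_trivial, M.2.eq]
    exact hM M
  exact Subtype.ext (trace_conjTranspose_mul_self_eq_zero_iff.mp hMM)

/-- The space `𝒯_X^⊥` of symmetric matrices `M` with `X * M = 0`. -/
noncomputable def symmetricAnnihilator (X : Matrix m m ℝ) : Submodule ℝ (symmetricMatrices m) :=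
  LinearMap.ker (LinearMap.mulLeft ℝ X ∘ₗ (symmetricMatrices m).subtype)

lemma mem_symmetricAnnihilator {X : Matrix m m ℝ} {M : symmetricMatrices m} :
    M ∈ symmetricAnnihilator X ↔ X * (M : Matrix m m ℝ) = 0 :=
  Iff.rfl

end SymmetricMatrices

section Nondegeneracy

variable {A : ι → Matrix (Fin n) (Fin n) ℝ} {b : ι → ℝ} {I J : Finset ι}
  {X Z : Matrix (Fin n) (Fin n) ℝ} {y : ι → ℝ}

lemma inTangent_of_mem_orthogonal {T : symmetricMatrices (Fin n)}
    (hT : T ∈ (traceForm (Fin n)).orthogonal (symmetricAnnihilator X)) : InTangent X T :=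
  ⟨T.2, fun M hM hXM => traceForm_isRefl _ _ (hT ⟨M, hM⟩ hXM)⟩

/-- The span of the matrices `A i`, `i ∈ s`, inside the symmetric matrices. -/
noncomputable def constraintSpan (hA : ∀ i, (A i).IsSymm) (s : Finset ι) :
    Submodule ℝ (symmetricMatrices (Fin n)) :=
  Submodule.span ℝ ((fun i => (⟨A i, hA i⟩ : symmetricMatrices (Fin n))) '' s)

lemma exists_sum_eq_of_mem_constraintSpan {hA : ∀ i, (A i).IsSymm} {s : Finset ι}
    {M : symmetricMatrices (Fin n)} (hM : M ∈ constraintSpan hA s) :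
    ∃ c : ι → ℝ, ∑ i ∈ s, c i • A i = M := by
  obtain ⟨c, rfl⟩ := Submodule.mem_span_image_finset_iff_exists_fun' ℝ |>.mp hM
  exact ⟨c, by simp⟩

lemma trace_mul_eq_zero_of_mem_orthogonal_constraintSpan {hA : ∀ i, (A i).IsSymm} {s : Finset ι}
    {M : symmetricMatrices (Fin n)}
    (hM : M ∈ (traceForm (Fin n)).orthogonal (constraintSpan hA s)) {i : ι} (hi : i ∈ s) :
    (A i * (M : Matrix (Fin n) (Fin n) ℝ)).trace = 0 :=
  hM _ (Submodule.subset_span ⟨i, hi, rfl⟩)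

lemma dualNondeg_of_forall_eq_zero (hA : ∀ i, (A i).IsSymm)
    (h : ∀ M : Matrix (Fin n) (Fin n) ℝ, M.IsSymm → Z * M = 0 →
      (∀ i ∈ I ∪ activeJZ J y, (A i * M).trace = 0) → M = 0) :
    DualNondeg A I J y Z := by
  set s := I ∪ activeJZ J y
  have htop :
      (traceForm (Fin n)).orthogonal (symmetricAnnihilator Z) ⊔ constraintSpan hA s = ⊤ := by
    apply sup_eq_top_of_orthogonal_inf_orthogonal_eq_bot traceForm_nondegenerate traceForm_isRefl
    rw [LinearMap.BilinForm.orthogonal_orthogonal traceForm_nondegenerate traceForm_isRefl,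
      Submodule.eq_bot_iff]
    exact fun M hM => Subtype.ext <| h M M.2 hM.1 fun i hi =>
      trace_mul_eq_zero_of_mem_orthogonal_constraintSpan hM.2 hi
  intro W hW
  obtain ⟨T, hT, S, hS, hTS⟩ := Submodule.mem_sup.mp (htop.ge (Submodule.mem_top (x := ⟨W, hW⟩)))
  obtain ⟨c, hc⟩ := exists_sum_eq_of_mem_constraintSpan hS
  exact ⟨T, inTangent_of_mem_orthogonal hT, c, by rw [hc]; exact congrArg Subtype.val hTS.symm⟩

lemma primalNondeg_of_forall_eq_zero (hA : ∀ i, (A i).IsSymm)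
    (h : ∀ c : ι → ℝ, X * ∑ i ∈ I ∪ activeJX A b J X, c i • A i = 0 →
      ∑ i ∈ I ∪ activeJX A b J X, c i • A i = 0) :
    PrimalNondeg A b I J X := by
  set s := I ∪ activeJX A b J X
  have htop : (traceForm (Fin n)).orthogonal (symmetricAnnihilator X) ⊔
      (traceForm (Fin n)).orthogonal (constraintSpan hA s) = ⊤ := by
    apply sup_eq_top_of_orthogonal_inf_orthogonal_eq_bot traceForm_nondegenerate traceForm_isRefl
    simp only [LinearMap.BilinForm.orthogonal_orthogonal traceForm_nondegenerate traceForm_isRefl]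
    rw [Submodule.eq_bot_iff]
    rintro M ⟨hXM, hM⟩
    obtain ⟨c, hc⟩ := exists_sum_eq_of_mem_constraintSpan hM
    rw [SetLike.mem_coe, mem_symmetricAnnihilator, ← hc] at hXM
    exact Subtype.ext (hc ▸ h c hXM)
  intro W hW
  obtain ⟨T, hT, S, hS, hTS⟩ := Submodule.mem_sup.mp (htop.ge (Submodule.mem_top (x := ⟨W, hW⟩)))
  refine ⟨T, S, inTangent_of_mem_orthogonal hT, ⟨S.2, fun i hi => ?_⟩,
    congrArg Subtype.val hTS.symm⟩
  rw [trace_mul_comm]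
  exact trace_mul_eq_zero_of_mem_orthogonal_constraintSpan hS hi

end Nondegeneracy

section Perturbation

variable {C : Matrix (Fin n) (Fin n) ℝ} {A : ι → Matrix (Fin n) (Fin n) ℝ} {b : ι → ℝ}
  {I J : Finset ι} {X Z M : Matrix (Fin n) (Fin n) ℝ} {y d : ι → ℝ}

lemma trace_mul_add_smul (B X M : Matrix (Fin n) (Fin n) ℝ) (t : ℝ) :
    (B * (X + t • M)).trace = (B * X).trace + t * (B * M).trace := by
  simp [mul_add]

lemma eventually_primalFeas_add_smul (hX : PrimalFeas A b I J X)
    (hpsd : ∀ᶠ t : ℝ in 𝓝 0, (X + t • M).PosSemidef)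
    (hM : ∀ i ∈ I ∪ activeJX A b J X, (A i * M).trace = 0) :
    ∀ᶠ t : ℝ in 𝓝 0, PrimalFeas A b I J (X + t • M) := by
  have hslack : ∀ᶠ t : ℝ in 𝓝 0, ∀ i ∈ J,
      0 ≤ (b i - (A i * X).trace) + t * -(A i * M).trace := by
    refine (eventually_all_finset J).mpr fun i hi =>
      eventually_add_mul_nonneg (sub_nonneg.mpr (hX.2.2 i hi)) fun hactive => ?_
    have hiX : i ∈ activeJX A b J X := Finset.mem_filter.mpr ⟨hi, (sub_eq_zero.mp hactive).symm⟩
    rw [hM i (Finset.mem_union_right _ hiX), neg_zero]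
  filter_upwards [hpsd, hslack] with t ht hslack_t
  refine ⟨ht, fun i hi => ?_, fun i hi => ?_⟩
  · rw [trace_mul_add_smul, hM i (Finset.mem_union_left _ hi), mul_zero, add_zero, hX.2.1 i hi]
  · rw [trace_mul_add_smul]
    linarith [hslack_t i hi]

lemma eventually_dualFeas_add_smul (hZ : DualFeas C A I J y Z)
    (hpsd : ∀ᶠ t : ℝ in 𝓝 0, (Z + t • ∑ i ∈ I ∪ J, d i • A i).PosSemidef)
    (hd : ∀ i ∈ J, y i = 0 → d i = 0) :
    ∀ᶠ t : ℝ in 𝓝 0, DualFeas C A I J (y + t • d) (Z + t • ∑ i ∈ I ∪ J, d i • A i) := by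
  have hnonneg : ∀ᶠ t : ℝ in 𝓝 0, ∀ i ∈ J, 0 ≤ y i + t * d i :=
    (eventually_all_finset J).mpr fun i hi => eventually_add_mul_nonneg (hZ.2.2 i hi) (hd i hi)
  filter_upwards [hpsd, hnonneg] with t ht hnonneg_t
  refine ⟨?_, ht, hnonneg_t⟩
  simp only [hZ.1, Pi.add_apply, Pi.smul_apply, add_smul, smul_assoc, Finset.sum_add_distrib,
    ← Finset.smul_sum]
  abel

lemma eq_zero_of_notMem_activeJZ (hZ : DualFeas C A I J y Z) {i : ι} (hi : i ∈ J)
    (hiZ : i ∉ activeJZ J y) : y i = 0 :=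
  le_antisymm (not_lt.mp fun hpos => hiZ (Finset.mem_filter.mpr ⟨hi, hpos⟩)) (hZ.2.2 i hi)

lemma trace_objective_mul_eq_zero (hZ : DualFeas C A I J y Z) (hZM : Z * M = 0)
    (hM : ∀ i ∈ I ∪ activeJZ J y, (A i * M).trace = 0) : (C * M).trace = 0 := by
  have hterm : ∀ i ∈ I ∪ J, y i * (A i * M).trace = 0 := fun i hi => by
    by_cases hiZ : i ∈ I ∪ activeJZ J y
    · rw [hM i hiZ, mul_zero]
    · rw [Finset.mem_union, not_or] at hiZ
      have hiJ : i ∈ J := (Finset.mem_union.mp hi).resolve_left hiZ.1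
      rw [eq_zero_of_notMem_activeJZ hZ hiJ hiZ.2, zero_mul]
  calc (C * M).trace = ((C + Z) * M).trace := by rw [add_mul, hZM, add_zero]
    _ = ∑ i ∈ I ∪ J, y i * (A i * M).trace := by
      simp [hZ.1, Finset.sum_mul, trace_sum]
    _ = 0 := Finset.sum_eq_zero hterm

lemma dualObj_add_smul (b : ι → ℝ) (I J : Finset ι) (y d : ι → ℝ) (t : ℝ) :
    dualObj b I J (y + t • d) = dualObj b I J y + t * dualObj b I J d := by
  simp [dualObj, mul_add, Finset.sum_add_distrib, Finset.mul_sum, mul_left_comm]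

lemma trace_mul_eq_of_mem_union_activeJX (hX : PrimalFeas A b I J X) {i : ι}
    (hi : i ∈ I ∪ activeJX A b J X) : (A i * X).trace = b i :=
  (Finset.mem_union.mp hi).elim (hX.2.1 i) fun hiX => (Finset.mem_filter.mp hiX).2

lemma dualObj_eq_trace_mul_sum (hX : PrimalFeas A b I J X)
    (hd : ∀ i ∉ I ∪ activeJX A b J X, d i = 0) :
    dualObj b I J d = (X * ∑ i ∈ I ∪ J, d i • A i).trace := by
  rw [dualObj, Finset.mul_sum, trace_sum]
  refine Finset.sum_congr rfl fun i _ => ?_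
  rw [mul_smul_comm, trace_smul, trace_mul_comm, smul_eq_mul, mul_comm]
  by_cases hi : i ∈ I ∪ activeJX A b J X
  · rw [trace_mul_eq_of_mem_union_activeJX hX hi]
  · rw [hd i hi, zero_mul, zero_mul]

end Perturbation

section Uniqueness

variable {C : Matrix (Fin n) (Fin n) ℝ} {A : ι → Matrix (Fin n) (Fin n) ℝ} {b : ι → ℝ}
  {I J : Finset ι} {X Z M : Matrix (Fin n) (Fin n) ℝ} {y d : ι → ℝ}

lemma eventually_primalOpt_add_smul (hX : PrimalOpt C A b I J X) (hZ : DualFeas C A I J y Z)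
    (hXZ : X * Z = 0) (hrank : X.rank + Z.rank = n) (hactive : activeJX A b J X ⊆ activeJZ J y)
    (hM : M.IsSymm) (hZM : Z * M = 0) (hMA : ∀ i ∈ I ∪ activeJZ J y, (A i * M).trace = 0) :
    ∀ᶠ t : ℝ in 𝓝 0, PrimalOpt C A b I J (X + t • M) := by
  have hpsd := eventually_posSemidef_add_smul_of_rank_add_rank hX.1.1 hZ.2.1 hXZ
    (by rwa [Fintype.card_fin]) (isHermitian_iff_isSymm.mpr hM) hZM
  have hMA' : ∀ i ∈ I ∪ activeJX A b J X, (A i * M).trace = 0 := fun i hi =>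
    hMA i (Finset.union_subset_union_right hactive hi)
  filter_upwards [eventually_primalFeas_add_smul hX.1 hpsd hMA'] with t hfeas
  refine ⟨hfeas, fun X' hX' => ?_⟩
  rw [trace_mul_add_smul, trace_objective_mul_eq_zero hZ hZM hMA, mul_zero, add_zero]
  exact hX.2 X' hX'

lemma eventually_dualOpt_add_smul (hX : PrimalFeas A b I J X) (hZ : DualOpt C A b I J y Z)
    (hXZ : X * Z = 0) (hrank : X.rank + Z.rank = n) (hactive : activeJX A b J X ⊆ activeJZ J y)
    (hA : ∀ i, (A i).IsSymm) (hd : ∀ i ∉ I ∪ activeJX A b J X, d i = 0)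
    (hXd : X * ∑ i ∈ I ∪ J, d i • A i = 0) :
    ∀ᶠ t : ℝ in 𝓝 0, DualOpt C A b I J (y + t • d) (Z + t • ∑ i ∈ I ∪ J, d i • A i) := by
  have hZX : Z * X = 0 := (mul_eq_zero_comm_of_isHermitian hX.1.1 hZ.1.2.1.1).mp hXZ
  have hherm : (∑ i ∈ I ∪ J, d i • A i).IsHermitian :=
    isHermitian_iff_isSymm.mpr <| (symmetricMatrices (Fin n)).sum_mem fun i _ => (hA i).smul (d i)
  have hpsd := eventually_posSemidef_add_smul_of_rank_add_rank hZ.1.2.1 hX.1 hZX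
    (by rwa [add_comm, Fintype.card_fin]) hherm hXd
  have hdy : ∀ i ∈ J, y i = 0 → d i = 0 := fun i hi hyi => hd i fun hiX => by
    have hiZ : i ∈ activeJZ J y :=
      hactive (Finset.mem_filter.mpr ⟨hi, trace_mul_eq_of_mem_union_activeJX hX hiX⟩)
    exact (Finset.mem_filter.mp hiZ).2.ne' hyi
  filter_upwards [eventually_dualFeas_add_smul hZ.1 hpsd hdy] with t hfeas
  refine ⟨hfeas, fun y' Z' hZ' => ?_⟩
  rw [dualObj_add_smul, dualObj_eq_trace_mul_sum hX hd, hXd, trace_zero, mul_zero, add_zero]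
  exact hZ.2 y' Z' hZ'

lemma eq_zero_of_eventually_add_smul_eq {V : Type*} [AddCommGroup V] [Module ℝ V] {x v : V}
    (h : ∀ᶠ t : ℝ in 𝓝 0, x + t • v = x) : v = 0 := by
  obtain ⟨t, ht, ht0⟩ := ((h.filter_mono nhdsWithin_le_nhds).and
    (self_mem_nhdsWithin (s := {(0 : ℝ)}ᶜ))).exists
  exact (smul_eq_zero.mp (add_eq_left.mp ht)).resolve_left ht0

theorem dualNondeg_of_primalOpt_unique (hA : ∀ i, (A i).IsSymm) (hX : PrimalOpt C A b I J X)
    (hZ : DualFeas C A I J y Z) (hXZ : X * Z = 0) (hrank : X.rank + Z.rank = n)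
    (hactive : activeJX A b J X ⊆ activeJZ J y)
    (hunique : ∀ X', PrimalOpt C A b I J X' → X' = X) : DualNondeg A I J y Z :=
  dualNondeg_of_forall_eq_zero hA fun _ hM hZM hMA => eq_zero_of_eventually_add_smul_eq <|
    (eventually_primalOpt_add_smul hX hZ hXZ hrank hactive hM hZM hMA).mono fun _ => hunique _

theorem primalNondeg_of_dualOpt_slack_unique (hA : ∀ i, (A i).IsSymm)
    (hX : PrimalFeas A b I J X) (hZ : DualOpt C A b I J y Z) (hXZ : X * Z = 0)
    (hrank : X.rank + Z.rank = n) (hactive : activeJX A b J X ⊆ activeJZ J y)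
    (hunique : ∀ y' Z', DualOpt C A b I J y' Z' → Z' = Z) : PrimalNondeg A b I J X := by
  refine primalNondeg_of_forall_eq_zero hA fun c hc => ?_
  set s := I ∪ activeJX A b J X
  let d : ι → ℝ := (s : Set ι).indicator c
  have hsum : ∑ i ∈ I ∪ J, d i • A i = ∑ i ∈ s, c i • A i :=
    Finset.sum_indicator_subset_of_eq_zero c (fun i r => r • A i)
      (Finset.union_subset_union_right (Finset.filter_subset _ _)) fun i => zero_smul ℝ (A i)
  have hd : ∀ i ∉ s, d i = 0 := fun i hi => Set.indicator_of_notMem (by simpa using hi) c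
  rw [← hsum] at hc ⊢
  exact eq_zero_of_eventually_add_smul_eq <|
    (eventually_dualOpt_add_smul hX hZ hXZ hrank hactive hA hd hc).mono fun _ => hunique _ _

theorem unique_implies_nondegenerate_general (hA : ∀ i, (A i).IsSymm)
    (hX : PrimalOpt C A b I J X) (hZ : DualOpt C A b I J y Z) (hXZ : X * Z = 0)
    (hrank : X.rank + Z.rank = n) (hactive : activeJX A b J X ⊆ activeJZ J y) :
    ((∀ X', PrimalOpt C A b I J X' → X' = X) → DualNondeg A I J y Z) ∧
    ((∀ y' Z', DualOpt C A b I J y' Z' → Z' = Z) → PrimalNondeg A b I J X) :=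
  ⟨dualNondeg_of_primalOpt_unique hA hX hZ.1 hXZ hrank hactive,
    primalNondeg_of_dualOpt_slack_unique hA hX.1 hZ hXZ hrank hactive⟩

end Uniqueness

theorem unique_implies_nondegenerate
    (C : Matrix (Fin n) (Fin n) ℝ) (A : ι → Matrix (Fin n) (Fin n) ℝ) (b : ι → ℝ)
    (I J : Finset ι) (hIJ : Disjoint I J) (hC : C.IsSymm) (hA : ∀ i, (A i).IsSymm)
    (X : Matrix (Fin n) (Fin n) ℝ) (y : ι → ℝ) (Z : Matrix (Fin n) (Fin n) ℝ)
    -- X, (y,Z) are optimal and the optimal values are equal (and attained):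
    (hX : PrimalOpt C A b I J X) (hZ : DualOpt C A b I J y Z)
    (heq : (C * X).trace = dualObj b I J y)
    -- strict complementarity:
    (hcompl : X * Z = 0) (hstrict : X.rank + Z.rank = n)
    -- J_X = J_Z:
    (hactive : activeJX A b J X = activeJZ J y) :
    -- if X is the unique optimal solution of (P), then (y,Z) is dual nondegenerate:
    ((∀ X', PrimalOpt C A b I J X' → X' = X) → DualNondeg A I J y Z) ∧
    -- if (y,Z) is the unique optimal solution of (D), then X is primal nondegenerate:
    ((∀ y' Z', DualOpt C A b I J y' Z' → Z' = Z ∧ ∀ i ∈ I ∪ J, y' i = y i) →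
      PrimalNondeg A b I J X) :=
  (unique_implies_nondegenerate_general hA hX hZ hcompl hstrict hactive.subset).imp_right
    fun hgeneral hunique => hgeneral fun y' Z' hopt => (hunique y' Z' hopt).1

end Stmt4
end

section
/- Assume the optimal values of the primal SDP (P) and the dual SDP (D) are equal and both are attained. Let X and (y,Z) be a strict complementary pair of primal and dual optimal solutions with J_X = J_Z. The following are equivalent: (i) X is an extreme point of the primal feasible region 𝒫; (ii) X is the unique optimal solution of (P); (iii) (y,Z) is dual nondegenerate. -/
/- STATEMENT 5: under strong duality, for a strict complementary pair X, (y,Z) of primal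
and dual optimal solutions with J_X = J_Z, TFAE: (i) X is an extreme point of the primal
feasible region 𝒫; (ii) X is the unique optimal solution of (P); (iii) (y,Z) is dual
nondegenerate. -/

open Matrix BigOperators
open scoped Classical

namespace Stmt5

variable {n : ℕ} {ι : Type*}

/-- The primal feasible region 𝒫. -/
def PrimalFeas (A : ι → Matrix (Fin n) (Fin n) ℝ) (b : ι → ℝ) (I J : Finset ι)
    (X : Matrix (Fin n) (Fin n) ℝ) : Prop :=
  X.PosSemidef ∧ (∀ i ∈ I, (A i * X).trace = b i) ∧ (∀ i ∈ J, (A i * X).trace ≤ b i)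

/-- Dual feasibility of the pair `(y, Z)`: `Z = Σ_{i∈I∪J} y_i A_i − C ⪰ 0`, `y_i ≥ 0` on `J`. -/
def DualFeas (C : Matrix (Fin n) (Fin n) ℝ) (A : ι → Matrix (Fin n) (Fin n) ℝ)
    (I J : Finset ι) (y : ι → ℝ) (Z : Matrix (Fin n) (Fin n) ℝ) : Prop :=
  Z = (∑ i ∈ I ∪ J, y i • A i) - C ∧ Z.PosSemidef ∧ ∀ i ∈ J, 0 ≤ y i

/-- The dual objective value `Σ_{i∈I∪J} b_i y_i`. -/
noncomputable def dualObj (b : ι → ℝ) (I J : Finset ι) (y : ι → ℝ) : ℝ := ∑ i ∈ I ∪ J, b i * y i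

/-- `X` is an optimal solution of the primal SDP (P). -/
def PrimalOpt (C : Matrix (Fin n) (Fin n) ℝ) (A : ι → Matrix (Fin n) (Fin n) ℝ) (b : ι → ℝ)
    (I J : Finset ι) (X : Matrix (Fin n) (Fin n) ℝ) : Prop :=
  PrimalFeas A b I J X ∧ ∀ X', PrimalFeas A b I J X' → (C * X').trace ≤ (C * X).trace

/-- `(y, Z)` is an optimal solution of the dual SDP (D). -/
def DualOpt (C : Matrix (Fin n) (Fin n) ℝ) (A : ι → Matrix (Fin n) (Fin n) ℝ) (b : ι → ℝ)
    (I J : Finset ι) (y : ι → ℝ) (Z : Matrix (Fin n) (Fin n) ℝ) : Prop :=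
  DualFeas C A I J y Z ∧
    ∀ y' Z', DualFeas C A I J y' Z' → dualObj b I J y ≤ dualObj b I J y'

/-- The set `J_X` of inequality constraints active at a primal feasible `X`. -/
noncomputable def activeJX (A : ι → Matrix (Fin n) (Fin n) ℝ) (b : ι → ℝ) (J : Finset ι)
    (X : Matrix (Fin n) (Fin n) ℝ) : Finset ι :=
  J.filter fun i => (A i * X).trace = b i

/-- The set `J_Z = {i ∈ J : y_i > 0}` for a dual feasible `(y, Z)`. -/
noncomputable def activeJZ (J : Finset ι) (y : ι → ℝ) : Finset ι :=
  J.filter fun i => 0 < y i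

/-- Membership in the tangent space 𝒯_X (the orthogonal complement, inside the symmetric
matrices, of `𝒯_X^⊥ = {M symmetric : X M = 0}`). -/
def InTangent (X T : Matrix (Fin n) (Fin n) ℝ) : Prop :=
  T.IsSymm ∧ ∀ M : Matrix (Fin n) (Fin n) ℝ, M.IsSymm → X * M = 0 → (T * M).trace = 0

/-- `X` is primal nondegenerate: `𝒯_X + span{A_i : i ∈ I ∪ J_X}^⊥ = 𝒮ⁿ`. -/
def PrimalNondeg (A : ι → Matrix (Fin n) (Fin n) ℝ) (b : ι → ℝ) (I J : Finset ι)
    (X : Matrix (Fin n) (Fin n) ℝ) : Prop :=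
  ∀ W : Matrix (Fin n) (Fin n) ℝ, W.IsSymm →
    ∃ T S : Matrix (Fin n) (Fin n) ℝ, InTangent X T ∧
      (S.IsSymm ∧ ∀ i ∈ I ∪ activeJX A b J X, (S * A i).trace = 0) ∧ W = T + S

/-- `(y, Z)` is dual nondegenerate: `𝒯_Z + span{A_i : i ∈ I ∪ J_Z} = 𝒮ⁿ`. -/
def DualNondeg (A : ι → Matrix (Fin n) (Fin n) ℝ) (I J : Finset ι)
    (y : ι → ℝ) (Z : Matrix (Fin n) (Fin n) ℝ) : Prop :=
  ∀ W : Matrix (Fin n) (Fin n) ℝ, W.IsSymm →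
    ∃ T : Matrix (Fin n) (Fin n) ℝ, InTangent Z T ∧
      ∃ c : ι → ℝ, W = T + ∑ i ∈ I ∪ activeJZ J y, c i • A i


/-- `x` is an extreme point of the convex set `C`. -/
def IsExtremePt {M : Type*} [AddCommGroup M] [Module ℝ M] (C : Set M) (x : M) : Prop :=
  x ∈ C ∧ ∀ y ∈ C, ∀ z ∈ C, ∀ t : ℝ, 0 < t → t < 1 → x = t • y + (1 - t) • z →
    y = x ∧ z = x

/-!
Let `𝓛` be the space of symmetric `M` with `Z M = 0` and `⟨A_i, M⟩ = 0` for `i ∈ I ∪ J_Z`.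

* The duality gap `⟨Z, X'⟩ + ∑ y_i (b_i - ⟨A_i, X'⟩)` vanishes at every optimal `X'`, so two
  optimal solutions differ by an element of `𝓛`; thus `𝓛 = 0` forces uniqueness.
* A unique maximizer of a linear functional is an extreme point.
* Strict complementarity gives `range Z = ker X`, so every `M ∈ 𝓛` vanishes on `ker X` and `X + t M`
  stays positive semidefinite for small `|t|`; since `J_X = J_Z`, it also stays feasible. Hence
  `𝓛 = 0` when `X` is extreme.
* `𝓛` is the orthogonal complement of `𝒯_Z + span {A_i : i ∈ I ∪ J_Z}` in the symmetric matrices,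
  so `𝓛 = 0` is dual nondegeneracy.
-/

section PosSemidef

open scoped ComplexOrder

open scoped MatrixOrder in
lemma eventually_posSemidef_one_add_smul {m 𝕜 : Type*} [Finite m] [RCLike 𝕜]
    {K : Matrix m m 𝕜} (hK : K.IsHermitian) :
    ∀ᶠ t in nhds (0 : ℝ), (1 + t • K).PosSemidef := by
  cases nonempty_fintype m
  have hspec : ∀ᶠ t in nhds (0 : ℝ), ∀ x ∈ spectrum ℝ K, 0 ≤ 1 + t * x := by
    refine finite_real_spectrum.eventually_all.mpr fun x _ ↦ ?_
    have hcont : Continuous fun t : ℝ ↦ 1 + t * x := by fun_prop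
    exact (hcont.tendsto' 0 1 (by simp)).eventually_const_le one_pos
  filter_upwards [hspec] with t ht
  have hcfc : cfc (fun x : ℝ ↦ 1 + t * x) K = 1 + t • K := by
    rw [cfc_const_add _ _ K, cfc_const_mul_id t K, map_one]
  rw [← nonneg_iff_posSemidef, ← hcfc]
  exact cfc_nonneg ht

variable {l m 𝕜 : Type*} [Fintype l] [Fintype m] [RCLike 𝕜] {X Y : Matrix m m 𝕜}

open scoped MatrixOrder in
lemma exists_eq_conjTranspose_mul_self (hX : X.PosSemidef) : ∃ B : Matrix m m 𝕜, X = Bᴴ * B :=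
  CStarAlgebra.nonneg_iff_eq_star_mul_self.mp hX.nonneg

lemma trace_conjTranspose_mul_self_mul_conjTranspose_mul_self (F G : Matrix l m 𝕜) :
    (Fᴴ * F * (Gᴴ * G)).trace = ((F * Gᴴ)ᴴ * (F * Gᴴ)).trace := by
  rw [conjTranspose_mul, conjTranspose_conjTranspose, ← Matrix.mul_assoc, trace_mul_comm]
  simp only [Matrix.mul_assoc]

lemma trace_mul_nonneg_of_posSemidef (hX : X.PosSemidef) (hY : Y.PosSemidef) :
    0 ≤ (X * Y).trace := by
  obtain ⟨F, rfl⟩ := exists_eq_conjTranspose_mul_self hX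
  obtain ⟨G, rfl⟩ := exists_eq_conjTranspose_mul_self hY
  rw [trace_conjTranspose_mul_self_mul_conjTranspose_mul_self]
  exact (posSemidef_conjTranspose_mul_self _).trace_nonneg

lemma mul_eq_zero_of_posSemidef_of_trace_mul_eq_zero (hX : X.PosSemidef) (hY : Y.PosSemidef)
    (h : (X * Y).trace = 0) : X * Y = 0 := by
  obtain ⟨F, rfl⟩ := exists_eq_conjTranspose_mul_self hX
  obtain ⟨G, rfl⟩ := exists_eq_conjTranspose_mul_self hY
  rw [trace_conjTranspose_mul_self_mul_conjTranspose_mul_self,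
    trace_conjTranspose_mul_self_eq_zero_iff] at h
  rw [Matrix.mul_assoc, ← Matrix.mul_assoc F, h, Matrix.zero_mul, Matrix.mul_zero]

-- The witness is the Moore–Penrose inverse: as `0⁻¹ = 0`, `x * x⁻¹ * x = x` holds at `x = 0` too.
lemma exists_mul_mul_self_eq_self (hX : X.IsHermitian) : ∃ Y : Matrix m m 𝕜, X * Y * X = X := by
  have hcont (f : ℝ → ℝ) : ContinuousOn f (spectrum ℝ X) := finite_real_spectrum.continuousOn f
  refine ⟨cfc (fun x : ℝ ↦ x⁻¹) X, ?_⟩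
  calc X * cfc (fun x : ℝ ↦ x⁻¹) X * X = cfc (fun x : ℝ ↦ x * x⁻¹ * x) X := by
        rw [cfc_mul _ _ X (hcont _) (hcont _), cfc_mul _ _ X (hcont _) (hcont _), cfc_id' ℝ X]
    _ = X := by simp only [mul_inv_mul_cancel, cfc_id' ℝ X]

lemma exists_eq_conjTranspose_mul_mul_of_ker_le {B : Matrix l m 𝕜} {M : Matrix m m 𝕜}
    (hM : M.IsHermitian) (hker : ∀ v, (Bᴴ * B) *ᵥ v = 0 → M *ᵥ v = 0) :
    ∃ K : Matrix l l 𝕜, K.IsHermitian ∧ M = Bᴴ * K * B := by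
  obtain ⟨Y, hY⟩ := exists_mul_mul_self_eq_self (isHermitian_conjTranspose_mul_self B)
  have hMY : M * (Y * (Bᴴ * B)) = M := by
    refine ext_of_mulVec_single fun j ↦ ?_
    rw [← sub_eq_zero, ← mulVec_mulVec, ← mulVec_sub]
    refine hker _ ?_
    rw [mulVec_sub, mulVec_mulVec, ← Matrix.mul_assoc, hY, sub_self]
  refine ⟨B * (Yᴴ * M * Y) * Bᴴ,
    isHermitian_mul_mul_conjTranspose _ (isHermitian_conjTranspose_mul_mul _ hM), ?_⟩
  calc M = (M * (Y * (Bᴴ * B)))ᴴ * (Y * (Bᴴ * B)) := by rw [hMY, hM.eq, hMY]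
    _ = Bᴴ * (B * (Yᴴ * M * Y) * Bᴴ) * B := by
      simp only [conjTranspose_mul, conjTranspose_conjTranspose, hM.eq, Matrix.mul_assoc]

lemma eventually_posSemidef_add_smul {M : Matrix m m 𝕜} (hX : X.PosSemidef) (hM : M.IsHermitian)
    (hker : ∀ v, X *ᵥ v = 0 → M *ᵥ v = 0) :
    ∀ᶠ t in nhds (0 : ℝ), (X + t • M).PosSemidef := by
  obtain ⟨B, rfl⟩ := exists_eq_conjTranspose_mul_self hX
  obtain ⟨K, hK, rfl⟩ := exists_eq_conjTranspose_mul_mul_of_ker_le hM hker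
  filter_upwards [eventually_posSemidef_one_add_smul hK] with t ht
  have hB := ht.conjTranspose_mul_mul_same B
  rwa [Matrix.mul_add, Matrix.add_mul, Matrix.mul_one, Matrix.mul_smul, Matrix.smul_mul] at hB

end PosSemidef

lemma range_mulVecLin_eq_ker_mulVecLin {l m p K : Type*} [Fintype m] [Fintype p] [Field K]
    {X : Matrix l m K} {Z : Matrix m p K} (hXZ : X * Z = 0)
    (hrank : X.rank + Z.rank = Fintype.card m) :
    LinearMap.range Z.mulVecLin = LinearMap.ker X.mulVecLin := by
  have hle : LinearMap.range Z.mulVecLin ≤ LinearMap.ker X.mulVecLin := by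
    rw [LinearMap.range_le_ker_iff, ← mulVecLin_mul, hXZ, mulVecLin_zero]
  have hdim := LinearMap.finrank_range_add_finrank_ker X.mulVecLin
  rw [Module.finrank_fintype_fun_eq_card, ← hrank] at hdim
  exact Submodule.eq_of_le_of_finrank_eq hle (Nat.add_left_cancel hdim).symm

section TraceForm

variable {m : Type*} [Fintype m]

lemma eq_zero_of_isSymm_of_trace_mul_self_eq_zero {M : Matrix m m ℝ} (hM : M.IsSymm)
    (h : (M * M).trace = 0) : M = 0 := by
  rw [← trace_conjTranspose_mul_self_eq_zero_iff, (isHermitian_iff_isSymm.mpr hM).eq, h]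

-- `M` and `N` are orthogonal for the bilinear form `tr (M N)`, which is definite on symmetric
-- matrices: `P` is the orthogonal projection of `V` to `W`.
lemma exists_mem_forall_trace_sub_mul_eq_zero {W : Submodule ℝ (Matrix m m ℝ)}
    (hW : ∀ M ∈ W, M.IsSymm) (V : Matrix m m ℝ) :
    ∃ P ∈ W, ∀ N ∈ W, ((V - P) * N).trace = 0 := by
  let B : LinearMap.BilinForm ℝ (Matrix m m ℝ) :=
    (LinearMap.mul ℝ (Matrix m m ℝ)).compr₂ (traceLinearMap m ℝ ℝ)
  have hB : B.IsRefl := fun M N h ↦ (trace_mul_comm N M).trans h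
  have hdisj : Disjoint W (B.orthogonal W) := Submodule.disjoint_def.mpr fun M hM hMW ↦
    eq_zero_of_isSymm_of_trace_mul_self_eq_zero (hW M hM) (hMW M hM)
  have hcompl := (LinearMap.BilinForm.isCompl_orthogonal_iff_disjoint hB).mpr hdisj
  obtain ⟨P, hP, Q, hQ, rfl⟩ :=
    Submodule.mem_sup.mp (hcompl.sup_eq_top ▸ Submodule.mem_top : V ∈ W ⊔ B.orthogonal W)
  refine ⟨P, hP, fun N hN ↦ ?_⟩
  rw [add_sub_cancel_left]
  exact hB _ _ (hQ N hN)

end TraceForm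

section Nondegeneracy

variable {A : ι → Matrix (Fin n) (Fin n) ℝ} {Z M : Matrix (Fin n) (Fin n) ℝ}

/-- The normal space `𝒯_Z^⊥` of all symmetric `M` with `Z M = 0`, as a linear subspace. -/
def normalSpace (Z : Matrix (Fin n) (Fin n) ℝ) : Submodule ℝ (Matrix (Fin n) (Fin n) ℝ) where
  carrier := {M | M.IsSymm ∧ Z * M = 0}
  add_mem' := fun ⟨hM, hZM⟩ ⟨hN, hZN⟩ ↦
    ⟨hM.add hN, by rw [Matrix.mul_add, hZM, hZN, add_zero]⟩
  zero_mem' := ⟨isSymm_zero, Matrix.mul_zero Z⟩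
  smul_mem' := fun c _ ⟨hM, hZM⟩ ↦ ⟨hM.smul c, by rw [Matrix.mul_smul, hZM, smul_zero]⟩

/-- The tangent space `𝒯_Z`, given by the predicate `InTangent Z`, as a linear subspace. -/
def tangentSpace (Z : Matrix (Fin n) (Fin n) ℝ) : Submodule ℝ (Matrix (Fin n) (Fin n) ℝ) where
  carrier := {T | InTangent Z T}
  add_mem' := fun ⟨hS, hSZ⟩ ⟨hT, hTZ⟩ ↦ ⟨hS.add hT, fun M hM hZM ↦ by
    rw [Matrix.add_mul, trace_add, hSZ M hM hZM, hTZ M hM hZM, add_zero]⟩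
  zero_mem' := ⟨isSymm_zero, fun M _ _ ↦ by rw [Matrix.zero_mul, trace_zero]⟩
  smul_mem' := fun c _ ⟨hT, hTZ⟩ ↦ ⟨hT.smul c, fun M hM hZM ↦ by
    rw [Matrix.smul_mul, trace_smul, hTZ M hM hZM, smul_zero]⟩

lemma mul_eq_zero_of_forall_inTangent (hM : M.IsSymm)
    (h : ∀ T, InTangent Z T → (M * T).trace = 0) : Z * M = 0 := by
  obtain ⟨P, ⟨hP, hZP⟩, horth⟩ :=
    exists_mem_forall_trace_sub_mul_eq_zero (W := normalSpace Z) (fun _ hN ↦ hN.1) M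
  have htan : InTangent Z (M - P) := ⟨hM.sub hP, fun N hN hZN ↦ horth N ⟨hN, hZN⟩⟩
  have hzero : M - P = 0 := by
    refine eq_zero_of_isSymm_of_trace_mul_self_eq_zero htan.1 ?_
    rw [Matrix.sub_mul, trace_sub, h _ htan, trace_mul_comm P, htan.2 P hP hZP, sub_zero]
  rw [sub_eq_zero.mp hzero, hZP]

/-- `M` belongs to the space of symmetric matrices annihilated by `Z` and orthogonal to the `A_i`
with `i ∈ S`. For a dual optimal `(y, Z)` and `S = I ∪ J_Z`, this space contains all differences of
primal optimal solutions. -/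
def IsFaceDirection (A : ι → Matrix (Fin n) (Fin n) ℝ) (S : Finset ι)
    (Z M : Matrix (Fin n) (Fin n) ℝ) : Prop :=
  M.IsSymm ∧ Z * M = 0 ∧ ∀ i ∈ S, (A i * M).trace = 0

lemma IsFaceDirection.eq_zero_of_eq_add_sum {S : Finset ι} (hM : IsFaceDirection A S Z M)
    {T : Matrix (Fin n) (Fin n) ℝ} (hT : InTangent Z T) {c : ι → ℝ}
    (hMT : M = T + ∑ i ∈ S, c i • A i) : M = 0 := by
  obtain ⟨hsymm, hZM, hAM⟩ := hM
  refine eq_zero_of_isSymm_of_trace_mul_self_eq_zero hsymm ?_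
  have hsum : ((∑ i ∈ S, c i • A i) * M).trace = 0 := by
    rw [Finset.sum_mul, trace_sum]
    refine Finset.sum_eq_zero fun i hi ↦ ?_
    rw [Matrix.smul_mul, trace_smul, hAM i hi, smul_zero]
  nth_rw 1 [hMT]
  rw [Matrix.add_mul, trace_add, hT.2 M hsymm hZM, hsum, add_zero]

lemma exists_isFaceDirection_sub {S : Finset ι} (hA : ∀ i ∈ S, (A i).IsSymm)
    (Z : Matrix (Fin n) (Fin n) ℝ) {V : Matrix (Fin n) (Fin n) ℝ} (hV : V.IsSymm) :
    ∃ T, InTangent Z T ∧ ∃ c : ι → ℝ, IsFaceDirection A S Z (V - (T + ∑ i ∈ S, c i • A i)) := by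
  have hsum (c : ι → ℝ) : (∑ i ∈ S, c i • A i).IsSymm := by
    rw [Matrix.IsSymm, transpose_sum]
    exact Finset.sum_congr rfl fun i hi ↦ (hA i hi).smul (c i)
  have hW : ∀ M ∈ tangentSpace Z ⊔ Submodule.span ℝ (A '' S), M.IsSymm := by
    intro M hM
    obtain ⟨T, hT, _, hspan, rfl⟩ := Submodule.mem_sup.mp hM
    obtain ⟨c, rfl⟩ := Submodule.mem_span_image_finset_iff_exists_fun' ℝ |>.mp hspan
    exact hT.1.add (hsum c)
  obtain ⟨P, hP, horth⟩ := exists_mem_forall_trace_sub_mul_eq_zero hW V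
  obtain ⟨T, hT, _, hspan, rfl⟩ := Submodule.mem_sup.mp hP
  obtain ⟨c, rfl⟩ := Submodule.mem_span_image_finset_iff_exists_fun' ℝ |>.mp hspan
  have hsymm := hV.sub (hW _ hP)
  refine ⟨T, hT, c, hsymm, ?_, fun i hi ↦ ?_⟩
  · exact mul_eq_zero_of_forall_inTangent hsymm fun T' hT' ↦
      horth T' (Submodule.mem_sup_left hT')
  · rw [trace_mul_comm]
    exact horth _ (Submodule.mem_sup_right (Submodule.subset_span ⟨i, hi, rfl⟩))

lemma dualNondeg_iff_forall_isFaceDirection_eq_zero {I J : Finset ι} {y : ι → ℝ}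
    (hA : ∀ i ∈ I ∪ activeJZ J y, (A i).IsSymm) :
    DualNondeg A I J y Z ↔ ∀ M, IsFaceDirection A (I ∪ activeJZ J y) Z M → M = 0 := by
  constructor
  · intro hnondeg M hM
    obtain ⟨T, hT, c, hMT⟩ := hnondeg M hM.1
    exact hM.eq_zero_of_eq_add_sum hT hMT
  · intro hzero V hV
    obtain ⟨T, hT, c, hdir⟩ := exists_isFaceDirection_sub hA Z hV
    exact ⟨T, hT, c, sub_eq_zero.mp (hzero _ hdir)⟩

end Nondegeneracy

section ExtremePoints

variable {E : Type*} [AddCommGroup E] [Module ℝ E] {K : Set E} {x : E}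

lemma IsExtremePt.eq_zero_of_eventually_add_smul_mem {v : E} (hx : IsExtremePt K x)
    (hv : ∀ᶠ t in nhds (0 : ℝ), x + t • v ∈ K) : v = 0 := by
  have hneg : ∀ᶠ t in nhds (0 : ℝ), x + (-t) • v ∈ K :=
    (continuous_neg.tendsto' 0 0 neg_zero).eventually hv
  obtain ⟨t, ⟨hpos, hneg⟩, ht⟩ :=
    (((hv.and hneg).filter_mono nhdsWithin_le_nhds).and
      (self_mem_nhdsWithin : {0}ᶜ ∈ nhdsWithin (0 : ℝ) {0}ᶜ)).exists
  have hmid := (hx.2 _ hpos _ hneg (1 / 2) (by norm_num) (by norm_num) (by module)).1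
  exact (smul_eq_zero.mp (add_eq_left.mp hmid)).resolve_left ht

lemma isExtremePt_of_unique_max (f : E →ₗ[ℝ] ℝ) (hx : x ∈ K) (hmax : ∀ z ∈ K, f z ≤ f x)
    (huniq : ∀ z ∈ K, f z = f x → z = x) : IsExtremePt K x := by
  refine ⟨hx, fun u hu w hw t ht₀ ht₁ hxt ↦ ?_⟩
  have hf : f x = t * f u + (1 - t) * f w := by
    conv_lhs => rw [hxt]
    simp only [map_add, map_smul, smul_eq_mul]
  exact ⟨huniq u hu (by nlinarith [hmax u hu, hmax w hw]),
    huniq w hw (by nlinarith [hmax u hu, hmax w hw])⟩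

end ExtremePoints

section Optimality

variable {C X X' Z M : Matrix (Fin n) (Fin n) ℝ} {A : ι → Matrix (Fin n) (Fin n) ℝ}
  {b y : ι → ℝ} {I J : Finset ι}

lemma PrimalOpt.isExtremePt_of_unique (hX : PrimalOpt C A b I J X)
    (huniq : ∀ X', PrimalOpt C A b I J X' → X' = X) :
    IsExtremePt {X' | PrimalFeas A b I J X'} X := by
  refine isExtremePt_of_unique_max (traceLinearMap (Fin n) ℝ ℝ ∘ₗ LinearMap.mulLeft ℝ C)
    hX.1 hX.2 fun X' hX' heq ↦ huniq X' ⟨hX', fun Y hY ↦ ?_⟩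
  exact (hX.2 Y hY).trans_eq heq.symm

lemma DualFeas.dualObj_sub_trace (hZ : DualFeas C A I J y Z) (b : ι → ℝ)
    (X : Matrix (Fin n) (Fin n) ℝ) :
    dualObj b I J y - (C * X).trace =
      (Z * X).trace + ∑ i ∈ I ∪ J, y i * (b i - (A i * X).trace) := by
  have htrace : (Z * X).trace = ∑ i ∈ I ∪ J, y i * (A i * X).trace - (C * X).trace := by
    simp only [hZ.1, Matrix.sub_mul, trace_sub, Finset.sum_mul, trace_sum, Matrix.smul_mul,
      trace_smul, smul_eq_mul]
  simp only [htrace, dualObj, mul_sub, Finset.sum_sub_distrib, mul_comm (b _)]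
  ring

lemma PrimalFeas.mul_slack_nonneg (hX : PrimalFeas A b I J X) (hy : ∀ i ∈ J, 0 ≤ y i) :
    ∀ i ∈ I ∪ J, 0 ≤ y i * (b i - (A i * X).trace) := by
  intro i hi
  rcases Finset.mem_union.mp hi with hiI | hiJ
  · rw [hX.2.1 i hiI, sub_self, mul_zero]
  · exact mul_nonneg (hy i hiJ) (sub_nonneg.mpr (hX.2.2 i hiJ))

lemma PrimalFeas.complementary_slackness (hX : PrimalFeas A b I J X)
    (hZ : DualFeas C A I J y Z) (hgap : (C * X).trace = dualObj b I J y) :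
    Z * X = 0 ∧ ∀ i ∈ I ∪ activeJZ J y, (A i * X).trace = b i := by
  have hslack := hX.mul_slack_nonneg hZ.2.2
  have hZX := trace_mul_nonneg_of_posSemidef hZ.2.1 hX.1
  have hsum := Finset.sum_nonneg hslack
  have hdecomp := hZ.dualObj_sub_trace b X
  refine ⟨mul_eq_zero_of_posSemidef_of_trace_mul_eq_zero hZ.2.1 hX.1 (by linarith), fun i hi ↦ ?_⟩
  rcases Finset.mem_union.mp hi with hiI | hiJ
  · exact hX.2.1 i hiI
  · obtain ⟨hiJ, hyi⟩ := Finset.mem_filter.mp hiJ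
    have hzero := (Finset.sum_eq_zero_iff_of_nonneg hslack).mp (by linarith) i
      (Finset.mem_union_right I hiJ)
    exact (sub_eq_zero.mp ((mul_eq_zero.mp hzero).resolve_left hyi.ne')).symm

lemma isFaceDirection_sub (hX : PrimalFeas A b I J X) (hX' : PrimalFeas A b I J X')
    (hZ : DualFeas C A I J y Z) (hgap : (C * X).trace = dualObj b I J y)
    (hgap' : (C * X').trace = dualObj b I J y) :
    IsFaceDirection A (I ∪ activeJZ J y) Z (X - X') := by
  obtain ⟨hZX, hAX⟩ := hX.complementary_slackness hZ hgap
  obtain ⟨hZX', hAX'⟩ := hX'.complementary_slackness hZ hgap'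
  refine ⟨isHermitian_iff_isSymm.mp (hX.1.isHermitian.sub hX'.1.isHermitian), ?_, fun i hi ↦ ?_⟩
  · rw [Matrix.mul_sub, hZX, hZX', sub_zero]
  · rw [Matrix.mul_sub, trace_sub, hAX i hi, hAX' i hi, sub_self]

lemma PrimalFeas.eventually_add_smul (hX : PrimalFeas A b I J X) (hM : M.IsSymm)
    (hker : ∀ v, X *ᵥ v = 0 → M *ᵥ v = 0)
    (hAM : ∀ i ∈ I ∪ activeJX A b J X, (A i * M).trace = 0) :
    ∀ᶠ t in nhds (0 : ℝ), PrimalFeas A b I J (X + t • M) := by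
  have htrace (i : ι) (t : ℝ) :
      (A i * (X + t • M)).trace = (A i * X).trace + t * (A i * M).trace := by
    rw [Matrix.mul_add, trace_add, Matrix.mul_smul, trace_smul, smul_eq_mul]
  have hJ : ∀ᶠ t in nhds (0 : ℝ), ∀ i ∈ J, (A i * (X + t • M)).trace ≤ b i := by
    refine (Filter.eventually_all_finset J).mpr fun i hi ↦ ?_
    simp only [htrace]
    rcases (hX.2.2 i hi).eq_or_lt with hactive | hinactive
    · have hAMi := hAM i (Finset.mem_union_right I (Finset.mem_filter.mpr ⟨hi, hactive⟩))
      simp only [hAMi, hactive, mul_zero, add_zero, le_refl, Filter.eventually_true]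
    · have hcont : Continuous fun t : ℝ ↦ (A i * X).trace + t * (A i * M).trace := by fun_prop
      exact (hcont.tendsto' 0 _ (by simp)).eventually_le_const hinactive
  filter_upwards [hJ, eventually_posSemidef_add_smul hX.1 (isHermitian_iff_isSymm.mpr hM) hker]
    with t hJt hpsd
  refine ⟨hpsd, fun i hi ↦ ?_, hJt⟩
  rw [htrace, hAM i (Finset.mem_union_left _ hi), mul_zero, add_zero, hX.2.1 i hi]

lemma IsFaceDirection.eventually_primalFeas_add_smul
    (hM : IsFaceDirection A (I ∪ activeJX A b J X) Z M) (hX : PrimalFeas A b I J X)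
    (hZ : Z.IsSymm) (hcompl : X * Z = 0) (hstrict : X.rank + Z.rank = n) :
    ∀ᶠ t in nhds (0 : ℝ), PrimalFeas A b I J (X + t • M) := by
  obtain ⟨hsymm, hZM, hAM⟩ := hM
  have hMZ : M * Z = 0 := by
    rw [← transpose_eq_zero, transpose_mul, hZ.eq, hsymm.eq, hZM]
  refine hX.eventually_add_smul hsymm (fun v hv ↦ ?_) hAM
  obtain ⟨w, rfl⟩ : v ∈ LinearMap.range Z.mulVecLin := by
    rwa [range_mulVecLin_eq_ker_mulVecLin hcompl (by simpa using hstrict)]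
  rw [mulVecLin_apply, mulVec_mulVec, hMZ, zero_mulVec]

end Optimality

theorem extreme_unique_nondegenerate_tfae
    (C : Matrix (Fin n) (Fin n) ℝ) (A : ι → Matrix (Fin n) (Fin n) ℝ) (b : ι → ℝ)
    (I J : Finset ι) (hIJ : Disjoint I J) (hC : C.IsSymm) (hA : ∀ i, (A i).IsSymm)
    (X : Matrix (Fin n) (Fin n) ℝ) (y : ι → ℝ) (Z : Matrix (Fin n) (Fin n) ℝ)
    -- X, (y,Z) are optimal and the optimal values are equal (and attained):
    (hX : PrimalOpt C A b I J X) (hZ : DualOpt C A b I J y Z)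
    (heq : (C * X).trace = dualObj b I J y)
    -- strict complementarity:
    (hcompl : X * Z = 0) (hstrict : X.rank + Z.rank = n)
    -- J_X = J_Z:
    (hactive : activeJX A b J X = activeJZ J y) :
    -- (i) ↔ (ii):
    (IsExtremePt {X' | PrimalFeas A b I J X'} X ↔
      (∀ X', PrimalOpt C A b I J X' → X' = X)) ∧
    -- (i) ↔ (iii):
    (IsExtremePt {X' | PrimalFeas A b I J X'} X ↔ DualNondeg A I J y Z) := by
  have extreme_to_zero (hext : IsExtremePt {X' | PrimalFeas A b I J X'} X) :
      ∀ M, IsFaceDirection A (I ∪ activeJZ J y) Z M → M = 0 := by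
    intro M hM
    rw [← hactive] at hM
    exact hext.eq_zero_of_eventually_add_smul_mem <|
      hM.eventually_primalFeas_add_smul hX.1 (isHermitian_iff_isSymm.mp hZ.1.2.1.isHermitian)
        hcompl hstrict
  have zero_to_unique (hzero : ∀ M, IsFaceDirection A (I ∪ activeJZ J y) Z M → M = 0) :
      ∀ X', PrimalOpt C A b I J X' → X' = X := by
    intro X' hX'
    have hgap : (C * X').trace = dualObj b I J y :=
      (le_antisymm (hX.2 X' hX'.1) (hX'.2 X hX.1)).trans heq
    exact sub_eq_zero.mp (hzero _ (isFaceDirection_sub hX'.1 hX.1 hZ.1 hgap heq))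
  have unique_to_extreme := hX.isExtremePt_of_unique
  rw [dualNondeg_iff_forall_isFaceDirection_eq_zero fun i _ ↦ hA i]
  exact ⟨⟨zero_to_unique ∘ extreme_to_zero, unique_to_extreme⟩,
    extreme_to_zero, unique_to_extreme ∘ zero_to_unique⟩

end Stmt5
end

section
/- Let G = ([n], E) be a tensegrity graph with E = B ∪ C ∪ S and let G(p) be a tensegrity framework with p_1, …, p_n ∈ ℝᵈ linearly spanning ℝᵈ. Suppose there exists a real symmetric n×n matrix Z satisfying: (i) Z is positive semidefinite; (ii) Z_ij = 0 for all non-adjacent pairs i ≠ j; (iii) Z_ij ≥ 0 for all cables {i,j} ∈ C and Z_ij ≤ 0 for all struts {i,j} ∈ S; (iv) Z has corank d; (v) Σ_j Z_ij p_j = 0 for all i ∈ [n]; (vi) for every symmetric d×d matrix R, if p_iᵀ R p_j = 0 for all pairs {i,j} ∈ V ∪ B and all {i,j} ∈ C ∪ S with Z_ij ≠ 0, then R = 0. Then the tensegrity framework G(p) is universally completable. -/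
/- STATEMENT 6: sufficient condition for universal completability of a tensegrity
framework G(p): existence of a psd spherical stress matrix Z of corank d satisfying the
sign, support, equilibrium and nondegeneracy conditions (i)-(vi). -/

open Matrix BigOperators
open scoped RealInnerProductSpace

namespace Stmt6

variable {n d : ℕ}

/-- The quadratic form `xᵀ R y` for vectors of `ℝᵈ`. -/
def quadForm (R : Matrix (Fin d) (Fin d) ℝ) (x y : EuclideanSpace ℝ (Fin d)) : ℝ :=
  ∑ k, ∑ l, x k * R k l * y l

/-- The tensegrity framework `G(p)` with bars `B`, cables `C` and struts `S` is universally
completable: the Gram matrix of `p` is the unique psd matrix `X` with `X_ii = ⟪p_i,p_i⟫`,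
`X_ij = ⟪p_i,p_j⟫` on bars, `X_ij ≤ ⟪p_i,p_j⟫` on cables and `X_ij ≥ ⟪p_i,p_j⟫` on struts. -/
def UniversallyCompletable (B C S : Set (Fin n × Fin n))
    (p : Fin n → EuclideanSpace ℝ (Fin d)) : Prop :=
  ∀ X : Matrix (Fin n) (Fin n) ℝ, X.PosSemidef →
    (∀ i, X i i = ⟪p i, p i⟫) →
    (∀ ij ∈ B, X ij.1 ij.2 = ⟪p ij.1, p ij.2⟫) →
    (∀ ij ∈ C, X ij.1 ij.2 ≤ ⟪p ij.1, p ij.2⟫) →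
    (∀ ij ∈ S, ⟪p ij.1, p ij.2⟫ ≤ X ij.1 ij.2) →
    X = Matrix.of fun i j => ⟪p i, p j⟫

/-!
Every feasible `X` satisfies `Z_ij (X_ij - ⟪p_i, p_j⟫) ≤ 0` for all `i, j`, while these terms add
up to `tr (Z X) ≥ 0` because `Z` annihilates the Gram matrix of `p`. Hence all of them vanish, and
`Z X = 0`. Let `P` be the matrix with rows `p_i`. Its columns are independent because the `p_i` span
`ℝᵈ`, so by the corank condition they form a basis of the kernel of `Z`, and the symmetric matrix
`X - P Pᵀ` has the form `P R Pᵀ` with `R` symmetric. Its entries `p_iᵀ R p_j` vanish on the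
diagonal, on bars, and on the cables and struts with `Z_ij ≠ 0`, and nondegeneracy gives `R = 0`.
-/

section Matrices

variable {𝕜 K ν ι κ μ : Type*} [RCLike 𝕜] [Field K]

theorem trace_conjTranspose_mul_self_mul_conjTranspose_mul_self {R : Type*} [CommSemiring R]
    [StarRing R] [Fintype ι] [Fintype κ] [Fintype μ] (U : Matrix ι κ R) (W : Matrix μ κ R) :
    (Uᴴ * U * (Wᴴ * W)).trace = ((W * Uᴴ)ᴴ * (W * Uᴴ)).trace := by
  rw [Matrix.mul_assoc, trace_mul_comm, conjTranspose_mul, conjTranspose_conjTranspose]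
  simp only [Matrix.mul_assoc]

open scoped ComplexOrder MatrixOrder in
theorem trace_mul_nonneg_of_posSemidef [Fintype κ] {A B : Matrix κ κ 𝕜}
    (hA : A.PosSemidef) (hB : B.PosSemidef) : 0 ≤ (A * B).trace := by
  classical
  obtain ⟨U, rfl⟩ := CStarAlgebra.nonneg_iff_eq_star_mul_self.mp hA.nonneg
  obtain ⟨W, rfl⟩ := CStarAlgebra.nonneg_iff_eq_star_mul_self.mp hB.nonneg
  simp only [star_eq_conjTranspose]
  rw [trace_conjTranspose_mul_self_mul_conjTranspose_mul_self]
  exact (posSemidef_conjTranspose_mul_self _).trace_nonneg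

open scoped ComplexOrder MatrixOrder in
theorem mul_eq_zero_of_posSemidef_of_trace_mul_eq_zero [Fintype κ]
    {A B : Matrix κ κ 𝕜} (hA : A.PosSemidef) (hB : B.PosSemidef) (h : (A * B).trace = 0) :
    A * B = 0 := by
  classical
  obtain ⟨U, rfl⟩ := CStarAlgebra.nonneg_iff_eq_star_mul_self.mp hA.nonneg
  obtain ⟨W, rfl⟩ := CStarAlgebra.nonneg_iff_eq_star_mul_self.mp hB.nonneg
  simp only [star_eq_conjTranspose] at h ⊢
  rw [trace_conjTranspose_mul_self_mul_conjTranspose_mul_self,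
    trace_conjTranspose_mul_self_eq_zero_iff] at h
  have hUW : U * Wᴴ = 0 := by simpa using congrArg conjTranspose h
  rw [Matrix.mul_assoc, ← Matrix.mul_assoc U, hUW, Matrix.zero_mul, Matrix.mul_zero]

theorem range_mulVecLin_eq_ker_of_rank_add_rank_eq_card [Fintype ι] [Fintype κ]
    {A : Matrix ν ι K} {B : Matrix ι κ K} (hAB : A * B = 0)
    (hrank : A.rank + B.rank = Fintype.card ι) :
    LinearMap.range B.mulVecLin = LinearMap.ker A.mulVecLin := by
  apply Submodule.eq_of_le_of_finrank_eq
  · rintro _ ⟨v, rfl⟩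
    simp [mulVec_mulVec, hAB]
  · have hA := LinearMap.finrank_range_add_finrank_ker A.mulVecLin
    rw [Module.finrank_fintype_fun_eq_card, ← hrank] at hA
    exact (Nat.add_left_cancel hA).symm

theorem exists_eq_mul_of_mul_eq_zero [Fintype ι] [Fintype κ]
    {A : Matrix ν ι K} {B : Matrix ι κ K} {M : Matrix ι μ K} (hAB : A * B = 0)
    (hrank : A.rank + B.rank = Fintype.card ι) (hAM : A * M = 0) :
    ∃ Y, M = B * Y := by
  have hcol : ∀ j, ∃ y, B *ᵥ y = M.col j := fun j => by
    have hker : M.col j ∈ LinearMap.ker A.mulVecLin := by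
      ext i
      exact congrFun (congrFun hAM i) j
    rwa [← range_mulVecLin_eq_ker_of_rank_add_rank_eq_card hAB hrank] at hker
  choose y hy using hcol
  exact ⟨(of y)ᵀ, ext fun i j => (congrFun (hy j) i).symm⟩

theorem exists_mul_mul_eq_self [Fintype ι] [Fintype κ] (P : Matrix ι κ K) :
    ∃ L : Matrix κ ι K, P * L * P = P := by
  classical
  let f := P.mulVecLin
  obtain ⟨s, hs⟩ := f.rangeRestrict.exists_rightInverse_of_surjective f.range_rangeRestrict
  obtain ⟨g, hg⟩ := s.exists_extend
  refine ⟨LinearMap.toMatrix' g, ext_of_mulVec_single fun j => ?_⟩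
  have hgf : g (f (Pi.single j 1)) = s (f.rangeRestrict (Pi.single j 1)) :=
    LinearMap.congr_fun hg (f.rangeRestrict (Pi.single j 1))
  have hfs : f (s (f.rangeRestrict (Pi.single j 1))) = f (Pi.single j 1) :=
    congrArg Subtype.val (LinearMap.congr_fun hs (f.rangeRestrict (Pi.single j 1)))
  rw [← mulVec_mulVec, ← mulVec_mulVec, LinearMap.toMatrix'_mulVec]
  exact (congrArg f hgf).trans hfs

theorem exists_isSymm_mul_mul_transpose_eq [Finite ι] [Fintype κ]
    {P : Matrix ι κ K} {Y : Matrix κ ι K} (hsymm : (P * Y).IsSymm) :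
    ∃ R : Matrix κ κ K, R.IsSymm ∧ P * R * Pᵀ = P * Y := by
  have := Fintype.ofFinite ι
  obtain ⟨L, hL⟩ := exists_mul_mul_eq_self P
  have hleft : P * L * (P * Y) = P * Y := by rw [← Matrix.mul_assoc, hL]
  have hright : P * Y * (P * L)ᵀ = P * Y := by
    simpa only [transpose_mul (P * L), hsymm.eq] using congrArg transpose hleft
  refine ⟨L * (P * Y) * Lᵀ, ?_, ?_⟩
  · rw [IsSymm, transpose_mul, transpose_mul, transpose_transpose, hsymm.eq, ← Matrix.mul_assoc L]
  · calc P * (L * (P * Y) * Lᵀ) * Pᵀ = P * L * (P * Y) * (P * L)ᵀ := by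
          simp only [transpose_mul, Matrix.mul_assoc]
      _ = P * Y := by rw [hleft, hright]

end Matrices

section Stress

variable {ι E : Type*} [NormedAddCommGroup E] [InnerProductSpace ℝ E]

/-- `X` is feasible for the semidefinite program of the framework `G(p)`: universal completability
asks that the Gram matrix of `p` be its only feasible point. An edge is encoded by an ordered pair
of its endpoints, in one order or both. -/
structure IsFeasible (B C S : Set (ι × ι)) (p : ι → E) (X : Matrix ι ι ℝ) : Prop where
  posSemidef : X.PosSemidef
  diag_eq : ∀ i, X i i = ⟪p i, p i⟫
  bar_eq : ∀ ij ∈ B, X ij.1 ij.2 = ⟪p ij.1, p ij.2⟫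
  cable_le : ∀ ij ∈ C, X ij.1 ij.2 ≤ ⟪p ij.1, p ij.2⟫
  le_strut : ∀ ij ∈ S, ⟪p ij.1, p ij.2⟫ ≤ X ij.1 ij.2

/-- `Z` is a spherical stress matrix for `G(p)`: conditions (i), (ii), (iii) and (v). The corank
condition (iv) is kept separate, since complementary slackness does not involve it. -/
structure IsSphericalStress [Fintype ι] (B C S : Set (ι × ι)) (p : ι → E) (Z : Matrix ι ι ℝ) :
    Prop where
  posSemidef : Z.PosSemidef
  eq_zero_of_not_adj :
    ∀ i j, i ≠ j → (i, j) ∉ B ∪ C ∪ S → (j, i) ∉ B ∪ C ∪ S → Z i j = 0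
  cable_nonneg : ∀ ij ∈ C, 0 ≤ Z ij.1 ij.2
  strut_nonpos : ∀ ij ∈ S, Z ij.1 ij.2 ≤ 0
  equilibrium : ∀ i, ∑ j, Z i j • p j = 0

namespace IsSphericalStress

variable [Fintype ι] {B C S : Set (ι × ι)} {p : ι → E} {Z X : Matrix ι ι ℝ}

theorem mul_gram_eq_zero (hZ : IsSphericalStress B C S p Z) : Z * gram ℝ p = 0 := by
  ext i k
  calc (Z * gram ℝ p) i k = ⟪∑ j, Z i j • p j, p k⟫ := by
        simp only [mul_apply, gram_apply, sum_inner, real_inner_smul_left]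
    _ = 0 := by rw [hZ.equilibrium i, inner_zero_left]

theorem hadamard_sub_gram_nonpos_of_mem (hZ : IsSphericalStress B C S p Z)
    (hX : IsFeasible B C S p X) {i j : ι} (hij : (i, j) ∈ B ∪ C ∪ S) :
    (Z ⊙ (X - gram ℝ p)) i j ≤ 0 := by
  rcases hij with (hB | hC) | hS
  · exact (mul_eq_zero_of_right _ (sub_eq_zero.mpr (hX.bar_eq _ hB))).le
  · exact mul_nonpos_of_nonneg_of_nonpos (hZ.cable_nonneg _ hC) (sub_nonpos.mpr (hX.cable_le _ hC))
  · exact mul_nonpos_of_nonpos_of_nonneg (hZ.strut_nonpos _ hS) (sub_nonneg.mpr (hX.le_strut _ hS))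

theorem hadamard_sub_gram_nonpos_of_isFeasible (hZ : IsSphericalStress B C S p Z)
    (hX : IsFeasible B C S p X) (i j : ι) : (Z ⊙ (X - gram ℝ p)) i j ≤ 0 := by
  rcases eq_or_ne i j with rfl | hne
  · exact (mul_eq_zero_of_right _ (sub_eq_zero.mpr (hX.diag_eq i))).le
  by_cases hij : (i, j) ∈ B ∪ C ∪ S
  · exact hZ.hadamard_sub_gram_nonpos_of_mem hX hij
  by_cases hji : (j, i) ∈ B ∪ C ∪ S
  · have hsymm : (Z ⊙ (X - gram ℝ p)).IsHermitian :=
      hZ.posSemidef.isHermitian.hadamard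
        (hX.posSemidef.isHermitian.sub (isHermitian_gram ℝ p))
    rw [← hsymm.apply i j]
    exact hZ.hadamard_sub_gram_nonpos_of_mem hX hji
  · exact (mul_eq_zero_of_left (hZ.eq_zero_of_not_adj i j hne hij hji) _).le

theorem sum_hadamard_sub_gram_eq_trace_mul (hZ : IsSphericalStress B C S p Z)
    (hX : X.IsSymm) : ∑ i, ∑ j, (Z ⊙ (X - gram ℝ p)) i j = (Z * X).trace := by
  have hG : (gram ℝ p).IsSymm := isHermitian_iff_isSymm.mp (isHermitian_gram ℝ p)
  rw [sum_hadamard_eq, (hX.sub hG).eq, Matrix.mul_sub, hZ.mul_gram_eq_zero, sub_zero]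

theorem trace_mul_eq_zero_of_isFeasible (hZ : IsSphericalStress B C S p Z)
    (hX : IsFeasible B C S p X) : (Z * X).trace = 0 := by
  refine le_antisymm ?_ (trace_mul_nonneg_of_posSemidef hZ.posSemidef hX.posSemidef)
  rw [← hZ.sum_hadamard_sub_gram_eq_trace_mul
    (isHermitian_iff_isSymm.mp hX.posSemidef.isHermitian)]
  exact Finset.sum_nonpos fun i _ => Finset.sum_nonpos fun j _ =>
    hZ.hadamard_sub_gram_nonpos_of_isFeasible hX i j

theorem mul_eq_zero_of_isFeasible (hZ : IsSphericalStress B C S p Z) (hX : IsFeasible B C S p X) :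
    Z * X = 0 :=
  mul_eq_zero_of_posSemidef_of_trace_mul_eq_zero hZ.posSemidef hX.posSemidef
    (hZ.trace_mul_eq_zero_of_isFeasible hX)

theorem hadamard_sub_gram_eq_zero_of_isFeasible (hZ : IsSphericalStress B C S p Z)
    (hX : IsFeasible B C S p X) : Z ⊙ (X - gram ℝ p) = 0 := by
  have hnonpos := hZ.hadamard_sub_gram_nonpos_of_isFeasible hX
  have hsum : ∑ i, ∑ j, (Z ⊙ (X - gram ℝ p)) i j = 0 := by
    rw [hZ.sum_hadamard_sub_gram_eq_trace_mul
      (isHermitian_iff_isSymm.mp hX.posSemidef.isHermitian), hZ.trace_mul_eq_zero_of_isFeasible hX]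
  rw [← Fintype.sum_prod_type' (Z ⊙ (X - gram ℝ p)),
    Finset.sum_eq_zero_iff_of_nonpos fun ij _ => hnonpos ij.1 ij.2] at hsum
  exact ext fun i j => hsum (i, j) (Finset.mem_univ _)

end IsSphericalStress

end Stress

section Coordinates

variable {ν ι κ : Type*}

/-- The matrix whose rows are the vectors `p i`, so that `Gram(p) = P Pᵀ` and the matrices
`(p_iᵀ R p_j)` are the products `P R Pᵀ`. -/
def rowMatrix (p : ι → EuclideanSpace ℝ κ) : Matrix ι κ ℝ :=
  of fun i => (p i).ofLp

theorem rank_rowMatrix [Finite ι] [Fintype κ] {p : ι → EuclideanSpace ℝ κ}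
    (hspan : Submodule.span ℝ (Set.range p) = ⊤) : (rowMatrix p).rank = Fintype.card κ := by
  let e := (WithLp.linearEquiv 2 ℝ (κ → ℝ)).toLinearMap
  have hrows : Submodule.span ℝ (Set.range (rowMatrix p).row) = ⊤ := by
    have hrange : Set.range (rowMatrix p).row = e '' Set.range p := Set.range_comp e p
    rw [hrange, Submodule.span_image, hspan, Submodule.map_top, LinearEquiv.range]
  rw [rank_eq_finrank_span_row, hrows, finrank_top, Module.finrank_fintype_fun_eq_card]

theorem exists_isSymm_rowMatrix_mul_mul_transpose_eq [Fintype ι] [Fintype κ]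
    {p : ι → EuclideanSpace ℝ κ} {Z : Matrix ν ι ℝ} {M : Matrix ι ι ℝ}
    (hspan : Submodule.span ℝ (Set.range p) = ⊤)
    (hcorank : Z.rank + Fintype.card κ = Fintype.card ι) (hequil : ∀ i, ∑ j, Z i j • p j = 0)
    (hM : M.IsSymm) (hZM : Z * M = 0) :
    ∃ R : Matrix κ κ ℝ, R.IsSymm ∧ rowMatrix p * R * (rowMatrix p)ᵀ = M := by
  have hZP : Z * rowMatrix p = 0 := by
    ext i k
    simpa [mul_apply, rowMatrix] using congrArg (fun v => v k) (hequil i)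
  obtain ⟨Y, rfl⟩ := exists_eq_mul_of_mul_eq_zero hZP (by rwa [rank_rowMatrix hspan]) hZM
  exact exists_isSymm_mul_mul_transpose_eq hM

theorem quadForm_eq_rowMatrix_mul_mul_transpose_apply (R : Matrix (Fin d) (Fin d) ℝ)
    (p : Fin n → EuclideanSpace ℝ (Fin d)) (i j : Fin n) :
    quadForm R (p i) (p j) = (rowMatrix p * R * (rowMatrix p)ᵀ) i j := by
  simp only [quadForm, mul_apply, transpose_apply, rowMatrix, of_apply, Finset.sum_mul]
  exact Finset.sum_comm

end Coordinates

theorem universally_completable_of_spherical_stress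
    (B C S : Set (Fin n × Fin n))
    -- the edge set E = B ∪ C ∪ S is partitioned into bars, cables and struts,
    -- and the tensegrity graph has no loops:
    (hBC : Disjoint B C) (hBS : Disjoint B S) (hCS : Disjoint C S)
    (hloop : ∀ i : Fin n, (i, i) ∉ B ∪ C ∪ S)
    -- the framework p₁, …, pₙ linearly spans ℝᵈ:
    (p : Fin n → EuclideanSpace ℝ (Fin d))
    (hspan : Submodule.span ℝ (Set.range p) = ⊤)
    (Z : Matrix (Fin n) (Fin n) ℝ)
    -- (i) Z is positive semidefinite:
    (hZpsd : Z.PosSemidef)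
    -- (ii) Z_ij = 0 for all non-adjacent pairs i ≠ j:
    (hsupp : ∀ i j, i ≠ j → (i, j) ∉ B ∪ C ∪ S → (j, i) ∉ B ∪ C ∪ S → Z i j = 0)
    -- (iii) sign conditions on cables and struts:
    (hC : ∀ ij ∈ C, 0 ≤ Z ij.1 ij.2) (hS : ∀ ij ∈ S, Z ij.1 ij.2 ≤ 0)
    -- (iv) Z has corank d:
    (hcorank : Z.rank + d = n)
    -- (v) equilibrium: Σ_j Z_ij p_j = 0 for all i:
    (hequil : ∀ i, ∑ j, Z i j • p j = 0)
    -- (vi) nondegeneracy: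
    (hnondeg : ∀ R : Matrix (Fin d) (Fin d) ℝ, R.IsSymm →
      (∀ i, quadForm R (p i) (p i) = 0) →
      (∀ ij ∈ B, quadForm R (p ij.1) (p ij.2) = 0) →
      (∀ ij ∈ C ∪ S, Z ij.1 ij.2 ≠ 0 → quadForm R (p ij.1) (p ij.2) = 0) →
      R = 0) :
    UniversallyCompletable B C S p := by
  intro X hXpsd hXdiag hXB hXC hXS
  have hX : IsFeasible B C S p X := ⟨hXpsd, hXdiag, hXB, hXC, hXS⟩
  have hZ : IsSphericalStress B C S p Z := ⟨hZpsd, hsupp, hC, hS, hequil⟩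
  have hZdiff : Z * (X - gram ℝ p) = 0 := by
    rw [Matrix.mul_sub, hZ.mul_eq_zero_of_isFeasible hX, hZ.mul_gram_eq_zero, sub_zero]
  have hdiff : (X - gram ℝ p).IsSymm :=
    isHermitian_iff_isSymm.mp (hXpsd.isHermitian.sub (isHermitian_gram ℝ p))
  obtain ⟨R, hRsymm, hR⟩ := exists_isSymm_rowMatrix_mul_mul_transpose_eq hspan
    (by simpa only [Fintype.card_fin] using hcorank) hequil hdiff hZdiff
  have hquad (i j) : quadForm R (p i) (p j) = X i j - ⟪p i, p j⟫ := by
    rw [quadForm_eq_rowMatrix_mul_mul_transpose_apply, hR, Matrix.sub_apply, gram_apply]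
  have hslack (i j) : Z i j * (X i j - ⟪p i, p j⟫) = 0 :=
    congrFun (congrFun (hZ.hadamard_sub_gram_eq_zero_of_isFeasible hX) i) j
  have hRzero : R = 0 := hnondeg R hRsymm
    (fun i => by rw [hquad, hXdiag, sub_self])
    (fun ij hB => by rw [hquad, hXB ij hB, sub_self])
    (fun ij _ hne => by rw [hquad, (mul_eq_zero.mp (hslack ij.1 ij.2)).resolve_left hne])
  rw [hRzero, Matrix.mul_zero, Matrix.zero_mul] at hR
  exact sub_eq_zero.mp hR.symm

end Stmt6
end

section
/- Let k ≥ 2 be an integer and let G = ([n], E) be a graph on n ≥ k + 1 nodes with minimum degree at least k. Then there exist vectors p_1, …, p_n ∈ ℝᵏ and a subset I ⊆ E with |I| = k(k+1)/2 such that the rank-one symmetric matrices (p_i − p_j)(p_i − p_j)ᵀ for {i,j} ∈ I are linearly independent; equivalently, the polynomial π_{k,G}(p) = Σ_{I ⊆ E, |I| = k(k+1)/2} (det 𝒫_p(I))², which has integer coefficients, is not identically zero as a polynomial in the kn coordinates of p. -/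
/- STATEMENT 8: for k ≥ 2 and a graph G on n ≥ k+1 nodes with minimum degree at least k,
there are vectors p₁, …, pₙ ∈ ℝᵏ and a set I of k(k+1)/2 edges of G such that the
rank-one matrices (p_i − p_j)(p_i − p_j)ᵀ, {i,j} ∈ I, are linearly independent
(equivalently, the polynomial π_{k,G} is not identically zero). -/

open Matrix BigOperators

namespace Stmt8

/-- The symmetric matrix `(p_i − p_j)(p_i − p_j)ᵀ` attached to an unordered pair `{i,j}`. -/
def edgeMat {n k : ℕ} (p : Fin n → Fin k → ℝ) : Sym2 (Fin n) → Matrix (Fin k) (Fin k) ℝ :=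
  Sym2.lift ⟨fun i j => Matrix.vecMulVec (p i - p j) (p i - p j), by
    intro i j
    ext a b
    simp only [Matrix.vecMulVec_apply, Pi.sub_apply]
    ring⟩

/-!
Induct on `k`: delete a vertex `v`, which lowers the degrees of the others by at most one, and
place the remaining vertices at points `r w` of `Kᵏ` so that enough of the edge matrices are
independent. Then add one more coordinate, in which `v` has height `1` and all others height `0`.
The old edge matrices now have zero first row, while an edge `{v, w}` has first row
`(1, r v - r w)`, so `k + 1` edges at `v` can be added as soon as the corresponding neighbours are
affinely independent. The independence of the old edge matrices and the affine independence of the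
neighbours each hold somewhere on the line joining a solution of the first to a solution of the
second, hence at all but finitely many of its points, and so over an infinite field some point
satisfies both.
-/

variable {V κ : Type*}

/-- The rank-one matrix `(p_i − p_j)(p_i − p_j)ᵀ` of an unordered pair `{i,j}`, for points
indexed by an arbitrary type `V`, with coordinates in an arbitrary commutative ring indexed by
`κ`. It coincides definitionally with `edgeMat` for `V = Fin n`, `κ = Fin k` and real
coordinates. -/
def edgeMatrix {R : Type*} [CommRing R] (p : V → κ → R) : Sym2 V → Matrix κ κ R :=
  Sym2.lift ⟨fun i j => vecMulVec (p i - p j) (p i - p j), fun i j => by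
    beta_reduce
    rw [← neg_sub (p j) (p i), neg_vecMulVec, vecMulVec_neg, neg_neg]⟩

section EdgeMatrix

variable {R S : Type*} [CommRing R] [CommRing S]

lemma edgeMatrix_mk (p : V → κ → R) (i j : V) :
    edgeMatrix p s(i, j) = vecMulVec (p i - p j) (p i - p j) :=
  rfl

lemma map_edgeMatrix (f : R →+* S) (p : V → κ → R) (e : Sym2 V) :
    (edgeMatrix p e).map f = edgeMatrix (fun w c => f (p w c)) e := by
  induction e with
  | _ i j => ext a b; simp [edgeMatrix_mk, vecMulVec_apply]

/-- The points `r` placed at height `0` in one more dimension, the new coordinate coming first,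
except that the apex `v` is raised to height `1`. -/
def cone [DecidableEq V] {k : ℕ} (v : V) (r : V → Fin k → R) : V → Fin (k + 1) → R :=
  fun w => Fin.cons (if w = v then 1 else 0) (r w)

variable [DecidableEq V] {k : ℕ}

lemma submatrix_succ_edgeMatrix_cone (v : V) (r : V → Fin k → R) (e : Sym2 V) :
    (edgeMatrix (cone v r) e).submatrix Fin.succ Fin.succ = edgeMatrix r e := by
  induction e with
  | _ i j => ext a b; simp [edgeMatrix_mk, vecMulVec_apply, cone]

lemma edgeMatrix_cone_zero_of_notMem {v : V} (r : V → Fin k → R) {e : Sym2 V} (hv : v ∉ e) :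
    edgeMatrix (cone v r) e 0 = 0 := by
  induction e with
  | _ i j =>
    obtain ⟨hi, hj⟩ : i ≠ v ∧ j ≠ v := by simpa [eq_comm] using hv
    ext b
    simp [edgeMatrix_mk, vecMulVec_apply, cone, hi, hj]

lemma edgeMatrix_cone_zero_of_ne {v w : V} (r : V → Fin k → R) (hw : w ≠ v) :
    edgeMatrix (cone v r) s(v, w) 0 = Fin.cons 1 (r v - r w) := by
  ext b
  refine Fin.cases ?_ (fun b => ?_) b <;> simp [edgeMatrix_mk, vecMulVec_apply, cone, hw]

end EdgeMatrix

section LinearAlgebra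

variable {R ι M M' : Type*} [Ring R] [AddCommGroup M] [Module R M] [AddCommGroup M'] [Module R M']

lemma linearIndepOn_union_of_map_eq_zero {x : ι → M} {s t : Set ι} (f : M →ₗ[R] M')
    (hs : LinearIndepOn R x s) (hfs : ∀ i ∈ s, f (x i) = 0) (ht : LinearIndepOn R (f ∘ x) t) :
    LinearIndepOn R x (s ∪ t) := by
  have hker : Submodule.span R (x '' s) ≤ LinearMap.ker f := by
    rw [Submodule.span_le]
    rintro _ ⟨i, hi, rfl⟩
    exact hfs i hi
  have hdisj : Disjoint (Submodule.span R (x '' t)) (LinearMap.ker f) := by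
    rw [Set.image_eq_range]
    exact Submodule.range_ker_disjoint ht
  exact hs.union ht.of_comp (hdisj.symm.mono_left hker)

lemma linearIndependent_cons_one_iff_affineIndependent {k : ℕ} {p : ι → Fin k → R} :
    LinearIndependent R (fun i => (Fin.cons 1 (p i) : Fin (k + 1) → R)) ↔
      AffineIndependent R p := by
  rw [linearIndependent_iff', affineIndependent_iff]
  refine forall₂_congr fun s g => ?_
  rw [← and_imp]
  refine imp_congr_left ?_
  simp [funext_iff, Fin.forall_fin_succ, Finset.sum_apply]

end LinearAlgebra

lemma linearIndepOn_edgeMatrix_cone {R : Type*} [CommRing R] [DecidableEq V] {k : ℕ} {v : V}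
    {r : V → Fin k → R} {I : Set (Sym2 V)} {N : Set V} (hI : LinearIndepOn R (edgeMatrix r) I)
    (hvI : ∀ e ∈ I, v ∉ e) (hN : AffineIndependent R fun w : N => r w) (hvN : v ∉ N) :
    LinearIndepOn R (edgeMatrix (cone v r)) (I ∪ (s(v, ·)) '' N) := by
  let lowerBlock : Matrix (Fin (k + 1)) (Fin (k + 1)) R →ₗ[R] Matrix (Fin k) (Fin k) R :=
    { toFun := fun A => A.submatrix Fin.succ Fin.succ
      map_add' := fun _ _ => rfl
      map_smul' := fun _ _ => rfl }
  let firstRow : Matrix (Fin (k + 1)) (Fin (k + 1)) R →ₗ[R] Fin (k + 1) → R := LinearMap.proj 0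
  have hcone : LinearIndepOn R (edgeMatrix (cone v r)) I := by
    refine LinearIndepOn.of_comp lowerBlock ?_
    exact hI.congr fun e _ => (submatrix_succ_edgeMatrix_cone v r e).symm
  have hstar : LinearIndepOn R (fun w => (Fin.cons 1 (r v - r w) : Fin (k + 1) → R)) N :=
    linearIndependent_cons_one_iff_affineIndependent.2
      ((AffineEquiv.constVSub R (r v)).affineIndependent_iff.2 hN)
  refine linearIndepOn_union_of_map_eq_zero firstRow hcone
    (fun e he => edgeMatrix_cone_zero_of_notMem r (hvI e he)) (LinearIndepOn.image_of_comp _ _ ?_)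
  exact hstar.congr fun w hw =>
    (edgeMatrix_cone_zero_of_ne r (ne_of_mem_of_not_mem hw hvN)).symm

variable {K : Type*} [Field K]

lemma exists_mul_eq_one_of_linearIndependent_row {m n : Type*} [Finite m] [DecidableEq m]
    [Fintype n] {A : Matrix m n K} (hA : LinearIndependent K A.row) :
    ∃ B : Matrix n m K, A * B = 1 := by
  cases nonempty_fintype m
  rw [← mulVec_surjective_iff_exists_right_inverse]
  have hrange : LinearMap.range A.mulVecLin = ⊤ :=
    Submodule.eq_top_of_finrank_eq (by simpa [Matrix.rank] using hA.rank_matrix)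
  exact LinearMap.range_eq_top.1 hrange

section GeneralPosition

open Filter Polynomial

lemma eventually_cofinite_linearIndependent_eval {ι : Type*} [Finite κ] {x : ι → κ → K[X]} {t₀ : K}
    (h : LinearIndependent K fun i c => (x i c).eval t₀) :
    ∀ᶠ t in cofinite, LinearIndependent K fun i c => (x i c).eval t := by
  classical
  have := h.finite_of_isNoetherian
  cases nonempty_fintype ι
  cases nonempty_fintype κ
  obtain ⟨B, hB⟩ := exists_mul_eq_one_of_linearIndependent_row (A := (of x).map (eval t₀)) h
  -- The polynomial `d` takes the value `1` at `t₀`, and `x` stays independent where `d` is nonzero.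
  let d : K[X] := (of x * B.map C).det
  have hd (t : K) : d.eval t = ((of x).map (eval t) * B).det := by
    rw [← coe_evalRingHom, RingHom.map_det, RingHom.mapMatrix_apply, Matrix.map_mul,
      Matrix.map_map]
    congr 2
    ext i j
    simp
  have hd₀ : d ≠ 0 := fun h0 => by simpa [h0, hB] using hd t₀
  filter_upwards [(finite_setOfPred_isRoot hd₀).eventually_cofinite_notMem] with t ht
  have hunit : IsUnit ((of x).map (eval t) * B) := by
    rw [isUnit_iff_isUnit_det, ← hd]
    exact isUnit_iff_ne_zero.2 ht
  exact (linearIndependent_rows_iff_isUnit.2 hunit).of_comp B.vecMulLinear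

lemma eventually_cofinite_linearIndepOn_edgeMatrix_eval [Finite κ] {P : V → κ → K[X]}
    {I : Set (Sym2 V)} {t₀ : K}
    (h : LinearIndepOn K (edgeMatrix fun w c => (P w c).eval t₀) I) :
    ∀ᶠ t in cofinite, LinearIndepOn K (edgeMatrix fun w c => (P w c).eval t) I := by
  let flatten : Matrix κ κ K ≃ₗ[K] (κ × κ → K) := (LinearEquiv.curry K K κ κ).symm
  have flatten_eval (t : K) : (fun (e : I) (c : κ × κ) => (edgeMatrix P e c.1 c.2).eval t) =
      flatten ∘ fun e : I => edgeMatrix (fun w c => (P w c).eval t) e := by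
    ext e c
    exact congrFun₂ (map_edgeMatrix (evalRingHom t) P e) c.1 c.2
  have flatten_iff (t : K) : LinearIndepOn K (edgeMatrix fun w c => (P w c).eval t) I ↔
      LinearIndependent K fun (e : I) (c : κ × κ) => (edgeMatrix P e c.1 c.2).eval t := by
    rw [flatten_eval]
    exact (flatten.toLinearMap.linearIndependent_iff flatten.ker).symm
  simp only [flatten_iff] at h ⊢
  exact eventually_cofinite_linearIndependent_eval h

lemma eventually_cofinite_affineIndependent_eval {ι : Type*} {k : ℕ} {P : ι → Fin k → K[X]} {t₀ : K}
    (h : AffineIndependent K fun i c => (P i c).eval t₀) :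
    ∀ᶠ t in cofinite, AffineIndependent K fun i c => (P i c).eval t := by
  have eval_cons (t : K) (i : ι) : (Fin.cons 1 fun c => (P i c).eval t : Fin (k + 1) → K) =
      fun c => ((Fin.cons 1 (P i) : Fin (k + 1) → K[X]) c).eval t := by
    ext c
    refine Fin.cases ?_ (fun c => ?_) c <;> simp
  simp only [← linearIndependent_cons_one_iff_affineIndependent, eval_cons] at h ⊢
  exact eventually_cofinite_linearIndependent_eval h

lemma exists_linearIndepOn_edgeMatrix_and_affineIndependent [Infinite K] {k : ℕ}
    {q₀ q₁ : V → Fin k → K} {I : Set (Sym2 V)} {N : Set V}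
    (h₀ : LinearIndepOn K (edgeMatrix q₀) I) (h₁ : AffineIndependent K fun w : N => q₁ w) :
    ∃ r : V → Fin k → K,
      LinearIndepOn K (edgeMatrix r) I ∧ AffineIndependent K fun w : N => r w := by
  let line : V → Fin k → K[X] := fun w c => C (q₀ w c) + X * C (q₁ w c - q₀ w c)
  have line_zero : (fun w c => (line w c).eval 0) = q₀ := by simp [line]
  have line_one : (fun w c => (line w c).eval 1) = q₁ := by simp [line]
  have hI : ∀ᶠ t in cofinite, LinearIndepOn K (edgeMatrix fun w c => (line w c).eval t) I :=
    eventually_cofinite_linearIndepOn_edgeMatrix_eval (t₀ := 0) (by rwa [line_zero])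
  have hN : ∀ᶠ t in cofinite, AffineIndependent K fun (w : N) c => (line w c).eval t :=
    eventually_cofinite_affineIndependent_eval (t₀ := 1)
      (by simpa only [← line_one] using h₁)
  obtain ⟨t, ht⟩ := (hI.and hN).exists
  exact ⟨_, ht⟩

end GeneralPosition

lemma exists_affineIndependent_of_card_eq {D E : Type*} [DivisionRing D] [AddCommGroup E]
    [Module D E] [FiniteDimensional D E] {N : Finset V} (hN : N.card = Module.finrank D E + 1) :
    ∃ q : V → E, AffineIndependent D fun w : N => q w := by
  obtain ⟨b⟩ : Nonempty (AffineBasis N D E) :=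
    AffineBasis.exists_affineBasis_of_finiteDimensional (by simpa using hN)
  refine ⟨Function.extend Subtype.val b 0, ?_⟩
  simpa only [Subtype.val_injective.extend_apply] using b.ind

lemma exists_linearIndepOn_edgeMatrix_union_star [Infinite K] {k : ℕ} {v : V}
    {q : V → Fin k → K} {I : Set (Sym2 V)} {N : Finset V} (hI : LinearIndepOn K (edgeMatrix q) I)
    (hvI : ∀ e ∈ I, v ∉ e) (hNcard : N.card = k + 1) (hvN : v ∉ N) :
    ∃ p : V → Fin (k + 1) → K, LinearIndepOn K (edgeMatrix p) (I ∪ (s(v, ·)) '' N) := by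
  classical
  obtain ⟨q₁, hq₁⟩ := exists_affineIndependent_of_card_eq (D := K) (E := Fin k → K) (N := N)
    (by simpa using hNcard)
  obtain ⟨r, hrI, hrN⟩ := exists_linearIndepOn_edgeMatrix_and_affineIndependent (N := N) hI hq₁
  exact ⟨cone v r, linearIndepOn_edgeMatrix_cone hrI hvI hrN hvN⟩

lemma card_union_star [DecidableEq V] {v : V} {I : Finset (Sym2 V)} {N : Finset V}
    (hvI : ∀ e ∈ I, v ∉ e) : (I ∪ N.map (Sym2.mkEmbedding v)).card = I.card + N.card := by
  have hdisj : Disjoint I (N.map (Sym2.mkEmbedding v)) := by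
    rw [Finset.disjoint_left]
    intro e heI he
    obtain ⟨w, -, rfl⟩ := Finset.mem_map.1 he
    exact hvI _ heI (Sym2.mem_mk_left v w)
  rw [Finset.card_union_of_disjoint hdisj, Finset.card_map]

lemma le_encard_neighborSet_inter_sdiff_singleton {G : SimpleGraph V} {S : Set V} {k : ℕ} {w : V}
    (h : (k + 1 : ℕ) ≤ (G.neighborSet w ∩ S).encard) (v : V) :
    k ≤ (G.neighborSet w ∩ (S \ {v})).encard := by
  rw [← Set.inter_sdiff_assoc]
  exact (ENat.le_sub_of_add_le_right ENat.one_ne_top h).trans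
    (Set.encard_tsub_one_le_encard_sdiff_singleton _ v)

theorem exists_linearIndepOn_edgeMatrix_of_le_encard [Infinite K] (G : SimpleGraph V) {k : ℕ}
    {S : Set V} (hS : S.Nonempty) (hdeg : ∀ v ∈ S, k ≤ (G.neighborSet v ∩ S).encard) :
    ∃ (p : V → Fin k → K) (I : Finset (Sym2 V)), ↑I ⊆ G.edgeSet ∩ S.sym2 ∧
      I.card = (k + 1).choose 2 ∧ LinearIndepOn K (edgeMatrix p) I := by
  classical
  induction k generalizing S with
  | zero => exact ⟨0, ∅, by simp⟩
  | succ k ih =>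
    obtain ⟨v, hv⟩ := hS
    obtain ⟨N, hNS, hNcard⟩ := Set.exists_subset_encard_eq (hdeg v hv)
    lift N to Finset V using Set.finite_of_encard_eq_coe hNcard
    replace hNcard : N.card = k + 1 := by
      rwa [Set.encard_coe_eq_coe_finsetCard, Nat.cast_inj] at hNcard
    have hvN : v ∉ N := fun h => G.irrefl (hNS h).1
    have hne : (S \ {v}).Nonempty := by
      obtain ⟨w, hw⟩ : N.Nonempty := Finset.card_pos.1 (by omega)
      exact ⟨w, (hNS hw).2, ne_of_mem_of_not_mem hw hvN⟩
    obtain ⟨q, I, hIS, hIcard, hI⟩ := ih hne fun w hw =>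
      le_encard_neighborSet_inter_sdiff_singleton (hdeg w hw.1) v
    have hvI : ∀ e ∈ I, v ∉ e := fun e he hve => (Set.mem_sym2_iff_subset.1 (hIS he).2 hve).2 rfl
    obtain ⟨p, hp⟩ := exists_linearIndepOn_edgeMatrix_union_star hI hvI hNcard hvN
    refine ⟨p, I ∪ N.map (Sym2.mkEmbedding v), ?_, ?_, ?_⟩
    · intro e he
      rcases Finset.mem_union.1 he with heI | heN
      · refine ⟨(hIS heI).1, Set.mem_sym2_iff_subset.2 ?_⟩
        exact (Set.mem_sym2_iff_subset.1 (hIS heI).2).trans Set.sdiff_subset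
      · obtain ⟨w, hw, rfl⟩ := Finset.mem_map.1 heN
        exact ⟨(hNS hw).1, hv, (hNS hw).2⟩
    · rw [card_union_star hvI, hIcard, hNcard, Nat.choose_succ_succ' (k + 1) 1,
        Nat.choose_one_right, add_comm]
    · rwa [Finset.coe_union, Finset.coe_map]

theorem exists_generic_edge_directions_general [Nonempty V] [Infinite K] (G : SimpleGraph V) {k : ℕ}
    (hdeg : ∀ v, k ≤ (G.neighborSet v).encard) :
    ∃ (p : V → Fin k → K) (I : Finset (Sym2 V)), ↑I ⊆ G.edgeSet ∧ I.card = k * (k + 1) / 2 ∧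
      LinearIndepOn K (edgeMatrix p) I := by
  simpa [Nat.choose_two_right, mul_comm k] using
    exists_linearIndepOn_edgeMatrix_of_le_encard (K := K) G Set.univ_nonempty (by simpa using hdeg)

theorem exists_generic_edge_directions
    {k n : ℕ} (hk : 2 ≤ k) (G : SimpleGraph (Fin n)) [DecidableRel G.Adj]
    (hn : k + 1 ≤ n) (hdeg : ∀ v : Fin n, k ≤ G.degree v) :
    ∃ (p : Fin n → Fin k → ℝ) (I : Finset (Sym2 (Fin n))),
      ↑I ⊆ G.edgeSet ∧ I.card = k * (k + 1) / 2 ∧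
      LinearIndependent ℝ (fun e : I => edgeMat p e.1) := by
  have : Nonempty (Fin n) := ⟨⟨0, by omega⟩⟩
  exact exists_generic_edge_directions_general G fun v => by
    rw [← Set.coe_fintypeCard, G.card_neighborSet_eq_degree]
    exact_mod_cast hdeg v

end Stmt8
end

section
/- Let G(p) be a generic d-dimensional framework on a graph G = ([n], E) with minimum degree at least d. Then the edge directions of G(p) do not lie on a conic at infinity; that is, the system of symmetric d×d matrices { (p_i − p_j)(p_i − p_j)ᵀ : {i,j} ∈ E } has full rank d(d+1)/2, i.e., spans the space of symmetric d×d matrices. -/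
/- STATEMENT 9: the edge directions of a generic d-dimensional framework on a graph of
minimum degree at least d do not lie on a conic at infinity: the matrices
(p_i − p_j)(p_i − p_j)ᵀ over the edges span the space of symmetric d×d matrices. -/

open Matrix BigOperators

namespace Stmt9

/-- The subspace of symmetric m×m real matrices. -/
def symmSub (m : ℕ) : Submodule ℝ (Matrix (Fin m) (Fin m) ℝ) where
  carrier := {X | X.IsSymm}
  add_mem' := fun hx hy => hx.add hy
  zero_mem' := by simp [Matrix.IsSymm]
  smul_mem' := fun c X hX => hX.smul c

/-!
The span of the squares `(p i - p j)(p i - p j)ᵀ` over the edges has the largest possible dimension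
when `p` is generic, because a minor that is nonzero at some configuration is a nonzero polynomial
and hence does not vanish at `p`. So it suffices to exhibit, by induction on `d`, one configuration
whose edge squares span. Project `p` generically to `d` dimensions and raise a single vertex `v` to
height one in a new coordinate direction. The edges avoiding `v` span the symmetric matrices
supported on the old coordinates, by induction, since deleting `v` lowers each degree by at most
one. The directions at `v` have the form `(1, u)`, with square the sum of the old square `u uᵀ` and
of a border depending linearly on `(1, u)`; the `d + 1` generic vectors `(1, u)` are linearly
independent, so all borders are obtained as well.
-/

open Module Submodule

section GenericRank

variable {K L σ : Type*} [CommRing K] [Field L] [Algebra K L] {x : σ → L}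

theorem exists_det_submatrix_ne_zero {ι κ F : Type*} [Field F] [Fintype ι] [DecidableEq ι]
    [Finite κ] {A : Matrix ι κ F} (hA : LinearIndependent F A.row) :
    ∃ c : ι → κ, (A.submatrix id c).det ≠ 0 := by
  cases nonempty_fintype κ
  obtain ⟨b, hb, -, hb_indep⟩ := exists_fun_fin_finrank_span_eq F (Set.range A.col)
  choose c hc using hb
  have hcard : Fintype.card ι = finrank F (span F (Set.range A.col)) := by
    rw [← A.rank_eq_finrank_span_cols, hA.rank_matrix]
  let e := Fintype.equivFinOfCardEq hcard
  have hcols : LinearIndependent F (A.submatrix id (c ∘ e)).col := by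
    have : (A.submatrix id (c ∘ e)).col = b ∘ e := funext fun i => hc (e i)
    exact this ▸ hb_indep.comp e e.injective
  exact ⟨c ∘ e, ((isUnit_iff_isUnit_det _).1 (linearIndependent_cols_iff_isUnit.1 hcols)).ne_zero⟩

theorem linearIndependent_row_map_aeval {ι κ : Type*} [Finite ι] [Finite κ]
    (M : Matrix ι κ (MvPolynomial σ K)) (hx : AlgebraicIndependent K x) {y : σ → L}
    (hy : LinearIndependent L (M.map (MvPolynomial.aeval y)).row) :
    LinearIndependent L (M.map (MvPolynomial.aeval x)).row := by
  classical
  cases nonempty_fintype ι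
  obtain ⟨c, hc⟩ := exists_det_submatrix_ne_zero hy
  have aeval_minor (z : σ → L) : MvPolynomial.aeval z (M.submatrix id c).det =
      ((M.map (MvPolynomial.aeval z)).submatrix id c).det := AlgHom.map_det _ _
  have minor_ne_zero : (M.submatrix id c).det ≠ 0 := fun h =>
    hc (by rw [← aeval_minor, h, map_zero])
  have hc_x : ((M.map (MvPolynomial.aeval x)).submatrix id c).det ≠ 0 := by
    rw [← aeval_minor]
    exact (map_ne_zero_iff _ hx).2 minor_ne_zero
  exact .of_comp (LinearMap.funLeft L L c) (linearIndependent_rows_of_det_ne_zero hc_x)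

theorem finrank_span_map_aeval_le {ι m n : Type*} [Finite m] [Finite n]
    (P : ι → Matrix m n (MvPolynomial σ K)) (hx : AlgebraicIndependent K x) (y : σ → L) :
    finrank L (span L (Set.range fun i => (P i).map (MvPolynomial.aeval y))) ≤
      finrank L (span L (Set.range fun i => (P i).map (MvPolynomial.aeval x))) := by
  obtain ⟨b, hb, -, hb_indep⟩ := exists_fun_fin_finrank_span_eq L
    (Set.range fun i => (P i).map (MvPolynomial.aeval y))
  choose r hr using hb
  let vectorize := (LinearEquiv.curry L L m n).symm
  let M : Matrix _ (m × n) (MvPolynomial σ K) := of fun k c => P (r k) c.1 c.2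
  have hM (z : σ → L) : (M.map (MvPolynomial.aeval z)).row =
      vectorize ∘ fun k => (P (r k)).map (MvPolynomial.aeval z) := rfl
  have hy : LinearIndependent L (M.map (MvPolynomial.aeval y)).row := by
    rw [hM, funext hr]
    exact hb_indep.map' vectorize.toLinearMap vectorize.ker
  have hx_indep : LinearIndependent L fun k => (P (r k)).map (MvPolynomial.aeval x) :=
    .of_comp vectorize.toLinearMap (linearIndependent_row_map_aeval M hx hy)
  calc
    _ = finrank L (span L (Set.range fun k => (P (r k)).map (MvPolynomial.aeval x))) := by
      rw [finrank_span_eq_card hx_indep, Fintype.card_fin]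
    _ ≤ _ := finrank_mono (span_mono (Set.range_comp_subset_range r
      fun i => (P i).map (MvPolynomial.aeval x)))

end GenericRank

section GenericPoints

variable {K L V : Type*} [CommRing K] [Field L] [Algebra K L] {d : ℕ} {q : V → Fin d → L}

theorem linearIndependent_vecCons_one_sub
    (hq : AlgebraicIndependent K fun x : V × Fin d => q x.1 x.2) (v : V) (f : Fin (d + 1) ↪ V) :
    LinearIndependent L fun j => (vecCons 1 (q v - q (f j)) : Fin (d + 1) → L) := by
  classical
  let M : Matrix (Fin (d + 1)) (Fin (d + 1)) (MvPolynomial (V × Fin d) K) :=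
    of fun j => vecCons 1 fun k => MvPolynomial.X (v, k) - MvPolynomial.X (f j, k)
  have hM (y : V × Fin d → L) : (M.map (MvPolynomial.aeval y)).row =
      fun j => vecCons 1 fun k => y (v, k) - y (f j, k) := by
    ext j k
    cases k using Fin.cases <;> simp [M]
  -- At the vertices of the standard simplex, `f 0` being the origin, independence is immediate.
  let simplex : V × Fin d → L := fun x => if x.1 = f x.2.succ then 1 else 0
  change LinearIndependent L fun j => vecCons 1 fun k => q v k - q (f j) k
  rw [← hM fun x => q x.1 x.2]
  refine linearIndependent_row_map_aeval M hq (y := simplex) ?_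
  rw [hM, Fintype.linearIndependent_iff]
  intro g hg
  have sum_eq_zero : ∑ j, g j = 0 := by simpa using congrFun hg 0
  have succ_eq_zero (k : Fin d) : g k.succ = 0 := by
    have := congrFun hg k.succ
    simpa [mul_sub, Finset.sum_sub_distrib, ← Finset.sum_mul, sum_eq_zero, simplex,
      f.injective.eq_iff] using this
  refine Fin.cases ?_ succ_eq_zero
  simpa [Fin.sum_univ_succ, succ_eq_zero] using sum_eq_zero

theorem span_vecCons_one_sub_eq_top
    (hq : AlgebraicIndependent K fun x : V × Fin d => q x.1 x.2) (v : V) {s : Set V}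
    (hs : d + 1 ≤ s.encard) : span L ((fun w => vecCons 1 (q v - q w)) '' s) = ⊤ := by
  obtain ⟨f, -⟩ := Fin.Embedding.exists_embedding_disjoint_range_of_add_le_ENat_card
    (s := (∅ : Set s)) (n := d + 1) (by simpa using hs)
  have hf := linearIndependent_vecCons_one_sub hq v (f.trans (.subtype _))
  rw [eq_top_iff, ← hf.span_eq_top_of_card_eq_finrank' (by simp), span_le]
  rintro _ ⟨j, rfl⟩
  exact subset_span ⟨f j, (f j).2, rfl⟩

end GenericPoints

/-- The space of symmetric matrices over any semiring; `symmSub` is the real case. -/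
def symmetricMatrices (n R : Type*) [Semiring R] : Submodule R (Matrix n n R) where
  carrier := {X | X.IsSymm}
  add_mem' hX hY := hX.add hY
  zero_mem' := isSymm_zero
  smul_mem' c _ hX := hX.smul c

section EdgeSquares

variable {V R : Type*} [CommRing R] {d : ℕ}

/-- The span of the squares `(p i - p j)(p i - p j)ᵀ` of the edge directions. It is the space of all
symmetric matrices exactly when the edge directions lie on no conic at infinity. -/
def edgeSquareSpan (G : SimpleGraph V) (p : V → Fin d → R) :
    Submodule R (Matrix (Fin d) (Fin d) R) :=
  span R {M | ∃ i j, G.Adj i j ∧ M = vecMulVec (p i - p j) (p i - p j)}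

theorem vecMulVec_sub_mem_edgeSquareSpan {G : SimpleGraph V} (p : V → Fin d → R) {i j : V}
    (hij : G.Adj i j) : vecMulVec (p i - p j) (p i - p j) ∈ edgeSquareSpan G p :=
  subset_span ⟨i, j, hij, rfl⟩

theorem edgeSquareSpan_le_symmetricMatrices (G : SimpleGraph V) (p : V → Fin d → R) :
    edgeSquareSpan G p ≤ symmetricMatrices (Fin d) R := by
  refine span_le.2 ?_
  rintro _ ⟨i, j, -, rfl⟩
  exact transpose_vecMulVec _ _

theorem edgeSquareSpan_eq_symmetricMatrices_of_generic {K L : Type*} [CommRing K] [Field L]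
    [Algebra K L] {G : SimpleGraph V} {p p' : V → Fin d → L}
    (hp : AlgebraicIndependent K fun x : V × Fin d => p x.1 x.2)
    (hp' : edgeSquareSpan G p' = symmetricMatrices (Fin d) L) :
    edgeSquareSpan G p = symmetricMatrices (Fin d) L := by
  let direction (e : G.Dart) (k : Fin d) : MvPolynomial (V × Fin d) K :=
    MvPolynomial.X (e.fst, k) - MvPolynomial.X (e.snd, k)
  have span_eq (z : V → Fin d → L) : edgeSquareSpan G z = span L (Set.range fun e : G.Dart =>
      (vecMulVec (direction e) (direction e)).map (MvPolynomial.aeval fun x => z x.1 x.2)) := by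
    have map_eq (e : G.Dart) : (vecMulVec (direction e) (direction e)).map
        (MvPolynomial.aeval fun x => z x.1 x.2) =
          vecMulVec (z e.fst - z e.snd) (z e.fst - z e.snd) := by
      ext k l
      simp [direction, vecMulVec_apply]
    simp only [map_eq]
    refine congrArg (span L) (Set.ext fun M => ⟨?_, ?_⟩)
    · rintro ⟨i, j, hij, rfl⟩
      exact ⟨⟨(i, j), hij⟩, rfl⟩
    · rintro ⟨e, rfl⟩
      exact ⟨e.fst, e.snd, e.adj, rfl⟩
  refine eq_of_le_of_finrank_le (edgeSquareSpan_le_symmetricMatrices G p) ?_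
  rw [← hp', span_eq, span_eq]
  exact finrank_span_map_aeval_le _ hp _

end EdgeSquares

section RaisingAVertex

variable {V R : Type*} [CommRing R] {d : ℕ}

/-- The `(d + 1) × (d + 1)` matrix with first row and first column `w` and remaining block `B`, as
a linear function of `(w, B)`. -/
def borderedMatrix : (Fin (d + 1) → R) × Matrix (Fin d) (Fin d) R →ₗ[R]
    Matrix (Fin (d + 1)) (Fin (d + 1)) R where
  toFun x := of (vecCons x.1 fun k => vecCons (x.1 k.succ) (x.2 k))
  map_add' x y := by
    ext k l
    cases k using Fin.cases <;> cases l using Fin.cases <;> simp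
  map_smul' c x := by
    ext k l
    cases k using Fin.cases <;> cases l using Fin.cases <;> simp

theorem borderedMatrix_row_submatrix {X : Matrix (Fin (d + 1)) (Fin (d + 1)) R} (hX : X.IsSymm) :
    borderedMatrix (X 0, X.submatrix Fin.succ Fin.succ) = X := by
  ext k l
  cases k using Fin.cases <;> cases l using Fin.cases <;> simp [borderedMatrix, hX.apply]

theorem borderedMatrix_zero_vecMulVec (u : Fin d → R) :
    borderedMatrix (0, vecMulVec u u) = vecMulVec (vecCons 0 u) (vecCons 0 u) := by
  ext k l
  cases k using Fin.cases <;> cases l using Fin.cases <;> simp [borderedMatrix, vecMulVec_apply]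

theorem borderedMatrix_vecCons_one_vecMulVec (u : Fin d → R) :
    borderedMatrix (vecCons 1 u, vecMulVec u u) = vecMulVec (vecCons 1 u) (vecCons 1 u) := by
  ext k l
  cases k using Fin.cases <;> cases l using Fin.cases <;> simp [borderedMatrix, vecMulVec_apply]

open Classical in
/-- The configuration in one dimension more that puts `v` at height one and every other vertex at
height zero over its position in `q`; the height is coordinate `0`. -/
noncomputable def raiseVertex (v : V) (q : V → Fin d → R) (w : V) : Fin (d + 1) → R :=
  vecCons (if w = v then 1 else 0) (q w)

theorem raiseVertex_sub_of_ne {v i j : V} (q : V → Fin d → R) (hi : i ≠ v) (hj : j ≠ v) :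
    raiseVertex v q i - raiseVertex v q j = vecCons 0 (q i - q j) := by
  simp [raiseVertex, hi, hj]

theorem raiseVertex_self_sub {v j : V} (q : V → Fin d → R) (hj : j ≠ v) :
    raiseVertex v q v - raiseVertex v q j = vecCons 1 (q v - q j) := by
  simp [raiseVertex, hj]

variable {G : SimpleGraph V} {v : V} {q : V → Fin d → R}

theorem borderedMatrix_zero_mem_edgeSquareSpan {B : Matrix (Fin d) (Fin d) R}
    (hB : B ∈ edgeSquareSpan (G.induce {v}ᶜ) fun w => q w) :
    borderedMatrix (0, B) ∈ edgeSquareSpan G (raiseVertex v q) := by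
  suffices h : edgeSquareSpan (G.induce {v}ᶜ) (fun w => q w) ≤
      (edgeSquareSpan G (raiseVertex v q)).comap (borderedMatrix ∘ₗ LinearMap.inr R _ _) from h hB
  refine span_le.2 ?_
  rintro _ ⟨i, j, hij, rfl⟩
  rw [SetLike.mem_coe, mem_comap, LinearMap.comp_apply, LinearMap.inr_apply,
    borderedMatrix_zero_vecMulVec, ← raiseVertex_sub_of_ne q i.2 j.2]
  exact vecMulVec_sub_mem_edgeSquareSpan _ hij

theorem edgeSquareSpan_raiseVertex_eq_symmetricMatrices
    (hG : edgeSquareSpan (G.induce {v}ᶜ) (fun w => q w) = symmetricMatrices (Fin d) R)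
    (hv : span R ((fun w => vecCons 1 (q v - q w)) '' G.neighborSet v) = ⊤) :
    edgeSquareSpan G (raiseVertex v q) = symmetricMatrices (Fin (d + 1)) R := by
  have block_mem {B : Matrix (Fin d) (Fin d) R} (hB : B.IsSymm) :
      borderedMatrix (0, B) ∈ edgeSquareSpan G (raiseVertex v q) :=
    borderedMatrix_zero_mem_edgeSquareSpan (hG.ge hB)
  have border_mem (w : Fin (d + 1) → R) :
      borderedMatrix (w, 0) ∈ edgeSquareSpan G (raiseVertex v q) := by
    suffices h : ⊤ ≤ (edgeSquareSpan G (raiseVertex v q)).comap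
      (borderedMatrix ∘ₗ LinearMap.inl R _ _) from h (mem_top (x := w))
    rw [← hv, span_le]
    rintro _ ⟨j, hj, rfl⟩
    have hvj := vecMulVec_sub_mem_edgeSquareSpan (raiseVertex v q) hj
    rw [raiseVertex_self_sub q hj.ne', ← borderedMatrix_vecCons_one_vecMulVec] at hvj
    have := sub_mem hvj (block_mem (transpose_vecMulVec (q v - q j) (q v - q j)))
    rwa [← map_sub, Prod.mk_sub_mk, sub_zero, sub_self] at this
  refine (edgeSquareSpan_le_symmetricMatrices _ _).antisymm fun X hX => ?_
  rw [← borderedMatrix_row_submatrix hX, ← Prod.fst_add_snd (X 0, _), map_add]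
  exact add_mem (border_mem _) (block_mem (hX.submatrix _))

end RaisingAVertex

theorem encard_neighborSet_le_induce_compl_singleton {V : Type*} (G : SimpleGraph V) (v : V)
    (w : ({v}ᶜ : Set V)) :
    (G.neighborSet w).encard ≤ ((G.induce {v}ᶜ).neighborSet w).encard + 1 := by
  rw [SimpleGraph.neighborSet_induce, ← Subtype.val_injective.encard_image,
    Subtype.image_preimage_coe, Set.inter_comm, ← Set.sdiff_eq, ← Set.encard_singleton v]
  exact Set.encard_le_encard_sdiff_add_encard _ _

theorem generic_edge_directions_span_general {K L V : Type*} [CommRing K] [Field L] [Algebra K L]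
    [Nonempty V] {d : ℕ} (G : SimpleGraph V) (p : V → Fin d → L)
    (hgen : AlgebraicIndependent K fun x : V × Fin d => p x.1 x.2)
    (hdeg : ∀ v, d ≤ (G.neighborSet v).encard) :
    span L {M | ∃ i j, G.Adj i j ∧ M = vecMulVec (p i - p j) (p i - p j)} =
      symmetricMatrices (Fin d) L := by
  change edgeSquareSpan G p = _
  induction d generalizing V with
  | zero => exact Subsingleton.elim _ _
  | succ d ih =>
    obtain ⟨v⟩ := ‹Nonempty V›
    let q : V → Fin d → L := fun w => vecTail (p w)
    have hq : AlgebraicIndependent K fun x : V × Fin d => q x.1 x.2 :=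
      hgen.comp (Prod.map id Fin.succ) (Function.injective_id.prodMap (Fin.succ_injective d))
    obtain ⟨w, hvw⟩ : (G.neighborSet v).Nonempty :=
      Set.one_le_encard_iff_nonempty.1 (le_trans (by simp) (hdeg v))
    have : Nonempty ({v}ᶜ : Set V) := ⟨⟨w, hvw.ne'⟩⟩
    have induce_span : edgeSquareSpan (G.induce {v}ᶜ) (fun w => q w) = symmetricMatrices _ L := by
      refine ih _ _ (hq.comp (Prod.map Subtype.val id)
        (Subtype.val_injective.prodMap Function.injective_id)) fun w => ?_
      have := (hdeg w).trans (encard_neighborSet_le_induce_compl_singleton G v w)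
      exact (ENat.add_le_add_iff_right ENat.one_ne_top).1 this
    exact edgeSquareSpan_eq_symmetricMatrices_of_generic hgen
      (edgeSquareSpan_raiseVertex_eq_symmetricMatrices induce_span
        (span_vecCons_one_sub_eq_top hq v (hdeg v)))

theorem generic_edge_directions_span
    {d n : ℕ} (G : SimpleGraph (Fin n)) [DecidableRel G.Adj]
    (p : Fin n → Fin d → ℝ)
    -- the framework is d-dimensional: p₁, …, pₙ affinely span ℝᵈ:
    (hdim : affineSpan ℝ (Set.range p) = ⊤)
    -- the framework is generic: the dn coordinates are algebraically independent over ℚ: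
    (hgen : AlgebraicIndependent ℚ (fun x : Fin n × Fin d => p x.1 x.2))
    -- G has minimum degree at least d:
    (hdeg : ∀ v : Fin n, d ≤ G.degree v) :
    Submodule.span ℝ
        {M : Matrix (Fin d) (Fin d) ℝ |
          ∃ i j, G.Adj i j ∧ M = Matrix.vecMulVec (p i - p j) (p i - p j)} =
      symmSub d := by
  have := Set.range_nonempty_iff_nonempty.1
    (AffineSubspace.nonempty_of_affineSpan_eq_top ℝ _ _ hdim)
  exact generic_edge_directions_span_general G p hgen fun v => by
    rw [← G.coe_neighborFinset, Set.encard_coe_eq_coe_finsetCard]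
    exact_mod_cast hdeg v

end Stmt9
end

section
/- Let G = ([n], E) be a tensegrity graph with E = B ∪ C ∪ S, let G(p) be a tensegrity framework, and let ∇G(p̂) be its extended tensegrity framework on the suspension tensegrity graph ∇G (with p̂_0 = 0 and p̂_i = p_i). Then G(p) is universally completable if and only if ∇G(p̂) is universally rigid. -/
/- STATEMENT 11: a tensegrity framework G(p) is universally completable if and only if
the extended tensegrity framework ∇G(p̂) on the suspension tensegrity graph (apex node 0
placed at the origin, bars B ∪ {{0,i}}, cables C' = S, struts S' = C) is universally
rigid. -/

open Matrix BigOperators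
open scoped RealInnerProductSpace

namespace Stmt11

variable {n d : ℕ}

/-- The tensegrity framework `G(p)` with bars `B`, cables `C` and struts `S` is universally
completable. -/
def UniversallyCompletable (B C S : Set (Fin n × Fin n))
    (p : Fin n → EuclideanSpace ℝ (Fin d)) : Prop :=
  ∀ X : Matrix (Fin n) (Fin n) ℝ, X.PosSemidef →
    (∀ i, X i i = ⟪p i, p i⟫) →
    (∀ ij ∈ B, X ij.1 ij.2 = ⟪p ij.1, p ij.2⟫) →
    (∀ ij ∈ C, X ij.1 ij.2 ≤ ⟪p ij.1, p ij.2⟫) →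
    (∀ ij ∈ S, ⟪p ij.1, p ij.2⟫ ≤ X ij.1 ij.2) →
    X = Matrix.of fun i j => ⟪p i, p j⟫

/-- Domination of tensegrity frameworks on `m` nodes. -/
def Dominates {m e f : ℕ} (B C S : Set (Fin m × Fin m))
    (p : Fin m → EuclideanSpace ℝ (Fin e)) (q : Fin m → EuclideanSpace ℝ (Fin f)) : Prop :=
  (∀ ij ∈ B, ‖p ij.1 - p ij.2‖ = ‖q ij.1 - q ij.2‖) ∧
  (∀ ij ∈ C, ‖q ij.1 - q ij.2‖ ≤ ‖p ij.1 - p ij.2‖) ∧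
  (∀ ij ∈ S, ‖p ij.1 - p ij.2‖ ≤ ‖q ij.1 - q ij.2‖)

/-- Congruence of frameworks. -/
def Congruent {m e f : ℕ} (p : Fin m → EuclideanSpace ℝ (Fin e))
    (q : Fin m → EuclideanSpace ℝ (Fin f)) : Prop :=
  ∀ i j, ‖p i - p j‖ = ‖q i - q j‖

/-- Universal rigidity of a tensegrity framework. -/
def UniversallyRigid {m e : ℕ} (B C S : Set (Fin m × Fin m))
    (p : Fin m → EuclideanSpace ℝ (Fin e)) : Prop :=
  ∀ (f : ℕ) (q : Fin m → EuclideanSpace ℝ (Fin f)), Dominates B C S p q → Congruent p q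

/-- Lift a set of edges of `G` to the corresponding edges of the suspension graph `∇G`
(node `i` of `G` becomes node `i.succ` of `∇G`). -/
def liftPairs (T : Set (Fin n × Fin n)) : Set (Fin (n + 1) × Fin (n + 1)) :=
  (fun ij : Fin n × Fin n => ((ij.1.succ : Fin (n + 1)), (ij.2.succ : Fin (n + 1)))) '' T

/-- The new edges of `∇G` joining the apex node `0` to all nodes of `G`. -/
def apexEdges (n : ℕ) : Set (Fin (n + 1) × Fin (n + 1)) :=
  {x | ∃ i : Fin n, x = ((0 : Fin (n + 1)), i.succ)}

/-- The extended framework `p̂` with `p̂₀ = 0` and `p̂ᵢ = pᵢ`. -/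
noncomputable def extFramework (p : Fin n → EuclideanSpace ℝ (Fin d)) :
    Fin (n + 1) → EuclideanSpace ℝ (Fin d) :=
  Fin.cases (0 : EuclideanSpace ℝ (Fin d)) p

/-! With the apex pinned at the origin, the bars at the apex fix all the norms `‖p i‖`. Then
`‖p i - p j‖² = ‖p i‖² + ‖p j‖² - 2⟪p i, p j⟫` turns every length constraint on `∇G` into the
reverse constraint on inner products, which is why cables and struts are swapped. Frameworks
dominated by `∇G(p̂)` thus correspond, up to translation, to vectors whose Gram matrix is feasible
for the completion problem, and every positive semidefinite matrix is such a Gram matrix. -/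

section InnerProduct

open scoped ComplexOrder in
lemma posSemidef_iff_exists_gram_eq {𝕜 ι : Type*} [RCLike 𝕜] [Fintype ι] {X : Matrix ι ι 𝕜} :
    X.PosSemidef ↔ ∃ q : ι → EuclideanSpace 𝕜 ι, gram 𝕜 q = X := by
  classical
  constructor
  · intro hX
    obtain ⟨A, rfl⟩ : ∃ A : Matrix ι ι 𝕜, X = Aᴴ * A := by
      open scoped MatrixOrder in
      exact CStarAlgebra.nonneg_iff_eq_star_mul_self.mp hX.nonneg
    exact ⟨fun j => WithLp.toLp 2 (A.col j),
      gram_eq_conjTranspose_mul (EuclideanSpace.basisFun ι 𝕜) _⟩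
  · rintro ⟨q, rfl⟩
    exact posSemidef_gram 𝕜 q

variable {E F : Type*} [SeminormedAddCommGroup E] [InnerProductSpace ℝ E]
  [SeminormedAddCommGroup F] [InnerProductSpace ℝ F]

lemma real_inner_self_eq_iff_norm_eq {x : E} {u : F} : ⟪x, x⟫ = ⟪u, u⟫ ↔ ‖x‖ = ‖u‖ := by
  rw [real_inner_self_eq_norm_sq, real_inner_self_eq_norm_sq,
    sq_eq_sq₀ (norm_nonneg x) (norm_nonneg u)]

lemma norm_sub_le_norm_sub_iff_inner_le {x y : E} {u v : F} (hx : ‖x‖ = ‖u‖) (hy : ‖y‖ = ‖v‖) :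
    ‖x - y‖ ≤ ‖u - v‖ ↔ ⟪u, v⟫ ≤ ⟪x, y⟫ := by
  rw [← sq_le_sq₀ (norm_nonneg _) (norm_nonneg _), norm_sub_sq_real, norm_sub_sq_real, hx, hy]
  constructor <;> intro h <;> linarith

lemma norm_sub_eq_norm_sub_iff_inner_eq {x y : E} {u v : F} (hx : ‖x‖ = ‖u‖) (hy : ‖y‖ = ‖v‖) :
    ‖x - y‖ = ‖u - v‖ ↔ ⟪u, v⟫ = ⟪x, y⟫ := by
  rw [le_antisymm_iff, le_antisymm_iff, norm_sub_le_norm_sub_iff_inner_le hx hy,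
    norm_sub_le_norm_sub_iff_inner_le hx.symm hy.symm]

end InnerProduct

/-- The Gram matrix of `q` satisfies the constraints imposed by `G(p)` in the matrix completion
problem. The diagonal constraints are expressed through norms. -/
def GramDominates {ι E F : Type*} [SeminormedAddCommGroup E] [InnerProductSpace ℝ E]
    [SeminormedAddCommGroup F] [InnerProductSpace ℝ F] (B C S : Set (ι × ι))
    (p : ι → E) (q : ι → F) : Prop :=
  (∀ i, ‖p i‖ = ‖q i‖) ∧
  (∀ ij ∈ B, ⟪q ij.1, q ij.2⟫ = ⟪p ij.1, p ij.2⟫) ∧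
  (∀ ij ∈ C, ⟪q ij.1, q ij.2⟫ ≤ ⟪p ij.1, p ij.2⟫) ∧
  (∀ ij ∈ S, ⟪p ij.1, p ij.2⟫ ≤ ⟪q ij.1, q ij.2⟫)

lemma universallyCompletable_iff_forall_gramDominates {B C S : Set (Fin n × Fin n)}
    {p : Fin n → EuclideanSpace ℝ (Fin d)} :
    UniversallyCompletable B C S p ↔
      ∀ (f : ℕ) (q : Fin n → EuclideanSpace ℝ (Fin f)),
        GramDominates B C S p q → gram ℝ q = gram ℝ p := by
  constructor
  · rintro h f q ⟨hnorm, hB, hC, hS⟩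
    exact h (gram ℝ q) (posSemidef_gram ℝ q)
      (fun i => real_inner_self_eq_iff_norm_eq.mpr (hnorm i).symm) hB hC hS
  · intro h X hX hdiag hB hC hS
    obtain ⟨q, rfl⟩ := posSemidef_iff_exists_gram_eq.mp hX
    exact h n q ⟨fun i => (real_inner_self_eq_iff_norm_eq.mp (hdiag i)).symm, hB, hC, hS⟩

lemma norm_eq_and_dominates_iff_gramDominates {e f : ℕ} {B C S : Set (Fin n × Fin n)}
    {p : Fin n → EuclideanSpace ℝ (Fin e)} {q : Fin n → EuclideanSpace ℝ (Fin f)} :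
    (∀ i, ‖p i‖ = ‖q i‖) ∧ Dominates B S C p q ↔ GramDominates B C S p q := by
  refine and_congr_right fun hnorm => and_congr ?_ (and_comm.trans (and_congr ?_ ?_))
  · exact forall₂_congr fun _ _ => norm_sub_eq_norm_sub_iff_inner_eq (hnorm _) (hnorm _)
  · exact forall₂_congr fun _ _ => norm_sub_le_norm_sub_iff_inner_le (hnorm _) (hnorm _)
  · exact forall₂_congr fun _ _ =>
      norm_sub_le_norm_sub_iff_inner_le (hnorm _).symm (hnorm _).symm

lemma norm_eq_and_congruent_iff_gram_eq {e f : ℕ}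
    {p : Fin n → EuclideanSpace ℝ (Fin e)} {q : Fin n → EuclideanSpace ℝ (Fin f)} :
    (∀ i, ‖p i‖ = ‖q i‖) ∧ Congruent p q ↔ gram ℝ q = gram ℝ p := by
  constructor
  · rintro ⟨hnorm, hpq⟩
    ext i j
    exact (norm_sub_eq_norm_sub_iff_inner_eq (hnorm i) (hnorm j)).mp (hpq i j)
  · intro hgram
    have hinner (i j : Fin n) : ⟪q i, q j⟫ = ⟪p i, p j⟫ := congrFun₂ hgram i j
    have hnorm (i : Fin n) : ‖p i‖ = ‖q i‖ :=
      (real_inner_self_eq_iff_norm_eq.mp (hinner i i)).symm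
    exact ⟨hnorm, fun i j =>
      (norm_sub_eq_norm_sub_iff_inner_eq (hnorm i) (hnorm j)).mpr (hinner i j)⟩

lemma extFramework_zero (p : Fin n → EuclideanSpace ℝ (Fin d)) : extFramework p 0 = 0 := rfl

lemma extFramework_succ (p : Fin n → EuclideanSpace ℝ (Fin d)) (i : Fin n) :
    extFramework p i.succ = p i := rfl

/-- The positions, relative to the apex node `0`, of the other nodes of a framework on `∇G`. -/
def fromApex {E : Type*} [Sub E] (q : Fin (n + 1) → E) : Fin n → E :=
  fun i => q i.succ - q 0

lemma fromApex_extFramework (p : Fin n → EuclideanSpace ℝ (Fin d)) :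
    fromApex (extFramework p) = p :=
  funext fun i => by rw [fromApex, extFramework_succ, extFramework_zero, sub_zero]

lemma norm_fromApex_sub {E : Type*} [SeminormedAddCommGroup E] (q : Fin (n + 1) → E)
    (i j : Fin n) : ‖fromApex q i - fromApex q j‖ = ‖q i.succ - q j.succ‖ := by
  simp only [fromApex, sub_sub_sub_cancel_right]

lemma forall_mem_liftPairs {T : Set (Fin n × Fin n)} {P : Fin (n + 1) × Fin (n + 1) → Prop} :
    (∀ x ∈ liftPairs T, P x) ↔ ∀ ij ∈ T, P (ij.1.succ, ij.2.succ) :=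
  Set.forall_mem_image

lemma forall_mem_apexEdges {P : Fin (n + 1) × Fin (n + 1) → Prop} :
    (∀ x ∈ apexEdges n, P x) ↔ ∀ i : Fin n, P (0, i.succ) := by
  simp only [apexEdges, Set.mem_ofPred_eq, forall_exists_index, forall_eq_apply_imp_iff]

lemma norm_extFramework_zero_sub_eq_iff {E : Type*} [SeminormedAddCommGroup E]
    {p : Fin n → EuclideanSpace ℝ (Fin d)} {q : Fin (n + 1) → E} {i : Fin n} :
    ‖extFramework p 0 - extFramework p i.succ‖ = ‖q 0 - q i.succ‖ ↔ ‖p i‖ = ‖fromApex q i‖ := by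
  rw [extFramework_zero, extFramework_succ, zero_sub, norm_neg, norm_sub_rev (q 0), fromApex]

lemma dominates_extFramework_iff {f : ℕ} {B C S : Set (Fin n × Fin n)}
    {p : Fin n → EuclideanSpace ℝ (Fin d)} {q : Fin (n + 1) → EuclideanSpace ℝ (Fin f)} :
    Dominates (liftPairs B ∪ apexEdges n) (liftPairs C) (liftPairs S) (extFramework p) q ↔
      (∀ i, ‖p i‖ = ‖fromApex q i‖) ∧ Dominates B C S p (fromApex q) := by
  simp only [Dominates, Set.mem_union, or_imp, forall_and, forall_mem_liftPairs,
    forall_mem_apexEdges, norm_extFramework_zero_sub_eq_iff]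
  simp only [extFramework_succ, norm_fromApex_sub]
  exact and_assoc.trans and_left_comm

lemma congruent_extFramework_iff {f : ℕ} {p : Fin n → EuclideanSpace ℝ (Fin d)}
    {q : Fin (n + 1) → EuclideanSpace ℝ (Fin f)} :
    Congruent (extFramework p) q ↔
      (∀ i, ‖p i‖ = ‖fromApex q i‖) ∧ Congruent p (fromApex q) := by
  constructor
  · intro h
    refine ⟨fun i => norm_extFramework_zero_sub_eq_iff.mp (h 0 i.succ), fun i j => ?_⟩
    rw [norm_fromApex_sub]
    exact h i.succ j.succ
  · rintro ⟨hnorm, hpq⟩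
    have hapex (i : Fin n) :
        ‖extFramework p 0 - extFramework p i.succ‖ = ‖q 0 - q i.succ‖ :=
      norm_extFramework_zero_sub_eq_iff.mpr (hnorm i)
    refine Fin.cases (Fin.cases ?_ hapex) fun i => Fin.cases ?_ fun j => ?_
    · rw [sub_self, sub_self, norm_zero, norm_zero]
    · rw [norm_sub_rev, hapex, norm_sub_rev]
    · rw [extFramework_succ, extFramework_succ, hpq, norm_fromApex_sub]

theorem universallyCompletable_iff_suspension_universallyRigid
    (B C S : Set (Fin n × Fin n))
    -- the edge set E = B ∪ C ∪ S is partitioned into bars, cables and struts,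
    -- and the tensegrity graph has no loops:
    (hBC : Disjoint B C) (hBS : Disjoint B S) (hCS : Disjoint C S)
    (hloop : ∀ i : Fin n, (i, i) ∉ B ∪ C ∪ S)
    (p : Fin n → EuclideanSpace ℝ (Fin d)) :
    UniversallyCompletable B C S p ↔
      UniversallyRigid (liftPairs B ∪ apexEdges n) (liftPairs S) (liftPairs C)
        (extFramework p) := by
  rw [universallyCompletable_iff_forall_gramDominates]
  constructor
  · intro h f q hq
    have hdom : GramDominates B C S p (fromApex q) :=
      norm_eq_and_dominates_iff_gramDominates.mp (dominates_extFramework_iff.mp hq)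
    exact congruent_extFramework_iff.mpr
      (norm_eq_and_congruent_iff_gram_eq.mpr (h f (fromApex q) hdom))
  · intro h f q hq
    rw [← fromApex_extFramework q] at hq ⊢
    have hcong : Congruent (extFramework p) (extFramework q) :=
      h f (extFramework q) (dominates_extFramework_iff.mpr
        (norm_eq_and_dominates_iff_gramDominates.mpr hq))
    exact norm_eq_and_congruent_iff_gram_eq.mp (congruent_extFramework_iff.mp hcong)

end Stmt11
end

section
/- Let G(p) be a bar framework (C = S = ∅) with p_1, …, p_n linearly spanning ℝᵈ, let ∇G(p̂) be its extended bar framework on the suspension graph (p̂_0 = 0, p̂_i = p_i). The following are equivalent: (i) there exists a positive semidefinite equilibrium stress matrix Ω ∈ 𝒮^{n+1} for ∇G(p̂) with corank Ω = d + 1; (ii) there exists a spherical stress matrix for G(p), i.e., a positive semidefinite symmetric n×n matrix Z with Z_ij = 0 for all non-adjacent pairs i ≠ j, Σ_j Z_ij p_j = 0 for all i, and corank Z = d. -/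
/- STATEMENT 12: for a bar framework G(p) with p₁, …, pₙ linearly spanning ℝᵈ, there is a
psd equilibrium stress matrix of corank d+1 for the extended framework ∇G(p̂) on the
suspension graph if and only if there is a spherical stress matrix for G(p), i.e. a psd
matrix Z supported by G with Z P = 0 and corank d. -/

open Matrix BigOperators

namespace Stmt12

variable {n d : ℕ}

/-- The extended framework `p̂` on the node set of the suspension graph `∇G`
(apex node `0` placed at the origin, node `i` of `G` becoming node `i.succ`). -/
def extFramework (p : Fin n → Fin d → ℝ) : Fin (n + 1) → Fin d → ℝ :=
  Fin.cases (0 : Fin d → ℝ) p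

/-! A positive semidefinite equilibrium stress matrix on `∇G` is symmetric with vanishing row sums,
so its apex row and column are determined by the block `Z` indexed by the nodes of `G`: it equals
`Cᵀ Z C` with `C = [-e | I]`. Conversely, `Cᵀ Z C` has vanishing row sums and restricts to `Z`, so
it has the same rank as `Z` and is positive semidefinite exactly when `Z` is. As the apex sits at
the origin, the equilibrium conditions of `Cᵀ Z C` and of `Z` are equivalent as well. -/

lemma sum_mul_apply_smul {l m o S E : Type*} [Fintype m] [Fintype o] [Semiring S]
    [AddCommMonoid E] [Module S E] (A : Matrix l m S) (B : Matrix m o S) (q : o → E) (i : l) :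
    ∑ j, (A * B) i j • q j = ∑ k, A i k • ∑ j, B k j • q j := by
  simp only [mul_apply, Finset.sum_smul, Finset.smul_sum, mul_smul]
  exact Finset.sum_comm

/-- The `n × (n + 1)` matrix `[-e | I]`: the incidence matrix of the edges joining the apex `0` to
the nodes `i.succ` of the suspension, all oriented away from the apex. -/
def spokeMatrix (R : Type*) [CommRing R] (n : ℕ) : Matrix (Fin n) (Fin (n + 1)) R :=
  of fun i => vecCons (-1) (Pi.single i 1)

section Suspension

variable {R : Type*} [CommRing R]

/-- The matrix `Cᵀ Z C` with `C = [-e | I]`: the extension of `Z` to the nodes of the suspension by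
an apex row and column that make all row and column sums vanish. -/
def suspensionMatrix (Z : Matrix (Fin n) (Fin n) R) : Matrix (Fin (n + 1)) (Fin (n + 1)) R :=
  (spokeMatrix R n)ᵀ * Z * spokeMatrix R n

lemma spokeMatrix_submatrix_succ : (spokeMatrix R n).submatrix id Fin.succ = 1 := by
  ext i j
  simp [spokeMatrix, one_apply, Pi.single_apply, eq_comm]

lemma spokeMatrix_mulVec_one : spokeMatrix R n *ᵥ 1 = 0 := by
  ext i
  simp [spokeMatrix, mulVec, dotProduct, Fin.sum_univ_succ]

lemma spokeMatrix_conjTranspose [StarRing R] : (spokeMatrix R n)ᴴ = (spokeMatrix R n)ᵀ := by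
  ext j i
  cases j using Fin.cases <;> simp [spokeMatrix, Pi.single_apply, apply_ite star]

lemma submatrix_succ_mul_spokeMatrix {m : Type*} {B : Matrix m (Fin (n + 1)) R}
    (hB : B *ᵥ 1 = 0) : B.submatrix id Fin.succ * spokeMatrix R n = B := by
  ext i j
  have hrow : B i 0 + ∑ k : Fin n, B i k.succ = 0 := by
    simpa [mulVec, dotProduct, Fin.sum_univ_succ] using congrFun hB i
  cases j using Fin.cases with
  | zero => simpa [mul_apply, spokeMatrix] using (eq_neg_of_add_eq_zero_left hrow).symm
  | succ j => simp [mul_apply, spokeMatrix, Pi.single_apply]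

lemma suspensionMatrix_submatrix_id_succ (Z : Matrix (Fin n) (Fin n) R) :
    (suspensionMatrix Z).submatrix id Fin.succ = (spokeMatrix R n)ᵀ * Z := by
  rw [suspensionMatrix, submatrix_mul _ _ _ id _ Function.bijective_id,
    spokeMatrix_submatrix_succ, Matrix.mul_one, submatrix_id_id]

lemma suspensionMatrix_submatrix_succ (Z : Matrix (Fin n) (Fin n) R) :
    (suspensionMatrix Z).submatrix Fin.succ Fin.succ = Z := by
  ext i j
  simp [suspensionMatrix, spokeMatrix, mul_apply, Pi.single_apply]

lemma suspensionMatrix_succ_succ (Z : Matrix (Fin n) (Fin n) R) (i j : Fin n) :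
    suspensionMatrix Z i.succ j.succ = Z i j :=
  congrFun₂ (suspensionMatrix_submatrix_succ Z) i j

lemma suspensionMatrix_mulVec_one (Z : Matrix (Fin n) (Fin n) R) :
    suspensionMatrix Z *ᵥ 1 = 0 := by
  rw [suspensionMatrix, ← mulVec_mulVec, spokeMatrix_mulVec_one, mulVec_zero]

theorem suspensionMatrix_submatrix_succ_of_sums_eq_zero
    {A : Matrix (Fin (n + 1)) (Fin (n + 1)) R} (hrow : A *ᵥ 1 = 0) (hcol : 1 ᵥ* A = 0) :
    suspensionMatrix (A.submatrix Fin.succ Fin.succ) = A := by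
  have hright : A.submatrix id Fin.succ * spokeMatrix R n = A :=
    submatrix_succ_mul_spokeMatrix hrow
  have hleft : (spokeMatrix R n)ᵀ * A.submatrix Fin.succ id = A := by
    have h := submatrix_succ_mul_spokeMatrix (B := Aᵀ) (by rw [mulVec_transpose, hcol])
    simpa only [transpose_mul, transpose_submatrix, transpose_transpose] using congrArg transpose h
  calc suspensionMatrix (A.submatrix Fin.succ Fin.succ)
      = ((spokeMatrix R n)ᵀ * A.submatrix Fin.succ id).submatrix id Fin.succ *
          spokeMatrix R n := rfl
    _ = A := by rw [hleft, hright]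

theorem suspensionMatrix_submatrix_succ_of_isHermitian [StarRing R]
    {A : Matrix (Fin (n + 1)) (Fin (n + 1)) R} (hA : A.IsHermitian) (hrow : A *ᵥ 1 = 0) :
    suspensionMatrix (A.submatrix Fin.succ Fin.succ) = A := by
  refine suspensionMatrix_submatrix_succ_of_sums_eq_zero hrow ?_
  calc 1 ᵥ* A = star (Aᴴ *ᵥ star 1) := by rw [← vecMul_conjTranspose, conjTranspose_conjTranspose]
    _ = 0 := by rw [hA.eq, star_one, hrow, star_zero]

theorem posSemidef_suspensionMatrix_iff [PartialOrder R] [StarRing R]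
    {Z : Matrix (Fin n) (Fin n) R} : (suspensionMatrix Z).PosSemidef ↔ Z.PosSemidef where
  mp h := suspensionMatrix_submatrix_succ Z ▸ h.submatrix Fin.succ
  mpr h := by
    simpa only [suspensionMatrix, spokeMatrix_conjTranspose] using
      h.conjTranspose_mul_mul_same (spokeMatrix R n)

theorem rank_suspensionMatrix [Nontrivial R] (Z : Matrix (Fin n) (Fin n) R) :
    (suspensionMatrix Z).rank = Z.rank := by
  apply le_antisymm
  · exact (rank_mul_le_left _ _).trans (rank_mul_le_right _ _)
  · simpa only [suspensionMatrix_submatrix_succ] using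
      rank_submatrix_le (suspensionMatrix Z) Fin.succ Fin.succ

variable {E : Type*} [AddCommMonoid E] [Module R E]

lemma sum_suspensionMatrix_smul (Z : Matrix (Fin n) (Fin n) R) (p : Fin n → E)
    (i : Fin (n + 1)) :
    ∑ j, suspensionMatrix Z i j • vecCons 0 p j =
      ∑ k, spokeMatrix R n k i • ∑ j, Z k j • p j := by
  calc ∑ j, suspensionMatrix Z i j • vecCons 0 p j
      = ∑ j, (suspensionMatrix Z).submatrix id Fin.succ i j • p j := by
        simp [Fin.sum_univ_succ]
    _ = ∑ k, spokeMatrix R n k i • ∑ j, Z k j • p j := by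
        rw [suspensionMatrix_submatrix_id_succ, sum_mul_apply_smul]
        rfl

theorem suspensionMatrix_equilibrium_iff (Z : Matrix (Fin n) (Fin n) R) (p : Fin n → E) :
    (∀ i, ∑ j, suspensionMatrix Z i j • vecCons 0 p j = 0) ↔ ∀ i, ∑ j, Z i j • p j = 0 where
  mp h i := by
    simpa [Fin.sum_univ_succ, suspensionMatrix_succ_succ] using h i.succ
  mpr h i := by simp only [sum_suspensionMatrix_smul, h, smul_zero, Finset.sum_const_zero]

theorem suspension_stress_iff_spherical_stress_general [Nontrivial R] [PartialOrder R] [StarRing R]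
    (G : SimpleGraph (Fin n)) (p : Fin n → E) (r : ℕ) :
    (∃ Ω : Matrix (Fin (n + 1)) (Fin (n + 1)) R, Ω.PosSemidef ∧
        (∀ i j : Fin n, i ≠ j → ¬ G.Adj i j → Ω i.succ j.succ = 0) ∧
        Ω *ᵥ 1 = 0 ∧
        (∀ i, ∑ j, Ω i j • vecCons 0 p j = 0) ∧
        Ω.rank + (r + 1) = n + 1) ↔
    (∃ Z : Matrix (Fin n) (Fin n) R, Z.PosSemidef ∧
        (∀ i j : Fin n, i ≠ j → ¬ G.Adj i j → Z i j = 0) ∧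
        (∀ i, ∑ j, Z i j • p j = 0) ∧
        Z.rank + r = n) := by
  constructor
  · rintro ⟨Ω, hpsd, hsupp, hone, hequil, hrank⟩
    obtain ⟨Z, rfl⟩ : ∃ Z, suspensionMatrix Z = Ω :=
      ⟨_, suspensionMatrix_submatrix_succ_of_isHermitian hpsd.isHermitian hone⟩
    simp only [suspensionMatrix_succ_succ] at hsupp
    rw [posSemidef_suspensionMatrix_iff] at hpsd
    rw [suspensionMatrix_equilibrium_iff] at hequil
    rw [rank_suspensionMatrix] at hrank
    exact ⟨Z, hpsd, hsupp, hequil, by omega⟩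
  · rintro ⟨Z, hpsd, hsupp, hequil, hrank⟩
    refine ⟨suspensionMatrix Z, posSemidef_suspensionMatrix_iff.mpr hpsd, ?_,
      suspensionMatrix_mulVec_one Z, (suspensionMatrix_equilibrium_iff Z p).mpr hequil, ?_⟩
    · simpa only [suspensionMatrix_succ_succ] using hsupp
    · rw [rank_suspensionMatrix]
      omega

end Suspension

theorem suspension_stress_iff_spherical_stress
    (G : SimpleGraph (Fin n)) (p : Fin n → Fin d → ℝ)
    -- p₁, …, pₙ linearly span ℝᵈ:
    (hspan : Submodule.span ℝ (Set.range p) = ⊤) :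
    -- (i) a psd equilibrium stress matrix for ∇G(p̂) of corank d+1
    -- (in ∇G the apex 0 is adjacent to every node, and i.succ, j.succ are adjacent
    --  iff i, j are adjacent in G):
    (∃ Ω : Matrix (Fin (n + 1)) (Fin (n + 1)) ℝ, Ω.PosSemidef ∧
        (∀ i j : Fin n, i ≠ j → ¬ G.Adj i j → Ω i.succ j.succ = 0) ∧
        (Ω.mulVec (fun _ => 1) = 0) ∧
        (∀ i : Fin (n + 1), ∑ j : Fin (n + 1), Ω i j • extFramework p j = 0) ∧
        Ω.rank + (d + 1) = n + 1) ↔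
    -- (ii) a spherical stress matrix for G(p):
    (∃ Z : Matrix (Fin n) (Fin n) ℝ, Z.PosSemidef ∧
        (∀ i j : Fin n, i ≠ j → ¬ G.Adj i j → Z i j = 0) ∧
        (∀ i : Fin n, ∑ j : Fin n, Z i j • p j = 0) ∧
        Z.rank + d = n) :=
  suspension_stress_iff_spherical_stress_general G p d

end Stmt12
end

section
/- Let G = ([n], E) be a graph and M a symmetric n×n matrix with M_ij = 0 for all non-adjacent pairs i ≠ j and corank M = d. Let P be an n×d matrix whose columns form an orthonormal basis of Ker M, with row vectors p_1, …, p_n ∈ ℝᵈ. The following are equivalent: (i) M satisfies the Strong Arnold Property; (ii) P Pᵀ is an extreme point of the spectrahedron { X positive semidefinite : X_ij = p_iᵀ p_j for all {i,j} ∈ V ∪ E }; (iii) for every symmetric d×d matrix R, if p_iᵀ R p_j = 0 for all {i,j} ∈ V ∪ E, then R = 0. -/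
/- STATEMENT 13: for a matrix M supported by a graph G with corank d, and P an n×d matrix
whose columns form an orthonormal basis of Ker M (rows p₁, …, pₙ), TFAE:
(i) M has the Strong Arnold Property; (ii) P Pᵀ is an extreme point of the spectrahedron
{X ⪰ 0 : X_ij = p_iᵀ p_j on V ∪ E}; (iii) the only symmetric d×d matrix R with
p_iᵀ R p_j = 0 on V ∪ E is R = 0. -/

open Matrix BigOperators

namespace Stmt13

variable {n d : ℕ}

/-- `M` satisfies the Strong Arnold Property with respect to the graph `G`. -/
def SAP (G : SimpleGraph (Fin n)) (M : Matrix (Fin n) (Fin n) ℝ) : Prop :=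
  ∀ X : Matrix (Fin n) (Fin n) ℝ, X.IsSymm → M * X = 0 →
    (∀ i, X i i = 0) → (∀ i j, G.Adj i j → X i j = 0) → X = 0

/-- `x` is an extreme point of the convex set `C`. -/
def IsExtremePt {M : Type*} [AddCommGroup M] [Module ℝ M] (C : Set M) (x : M) : Prop :=
  x ∈ C ∧ ∀ y ∈ C, ∀ z ∈ C, ∀ t : ℝ, 0 < t → t < 1 → x = t • y + (1 - t) • z →
    y = x ∧ z = x

/-! Condition (iii) is the hub. The symmetric matrices `X` with `M * X = 0` are exactly the
matrices `P * R * Pᵀ` with `R` symmetric, and so are the directions `V` for which both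
`P * Pᵀ + ε • V` and `P * Pᵀ - ε • V` are positive semidefinite for some `ε > 0`. Hence the strong
Arnold property and the absence of a segment of the spectrahedron centred at `P * Pᵀ` both say that
no nonzero `P * R * Pᵀ` vanishes on the diagonal and on the edges of the graph. -/

section ExtremePoints

theorem isExtremePt_iff_mem_extremePoints {E : Type*} [AddCommGroup E] [Module ℝ E] {C : Set E}
    {x : E} : IsExtremePt C x ↔ x ∈ C.extremePoints ℝ := by
  rw [mem_extremePoints]
  refine and_congr_right fun _ ↦ forall₄_congr fun y _ z _ ↦ ⟨?_, ?_⟩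
  · rintro h ⟨a, b, ha, hb, hab, hx⟩
    obtain rfl : b = 1 - a := eq_sub_of_add_eq' hab
    exact h a ha (sub_pos.1 hb) hx.symm
  · exact fun h t ht₀ ht₁ hx ↦ h ⟨t, 1 - t, ht₀, sub_pos.2 ht₁, add_sub_cancel t 1, hx.symm⟩

theorem mem_extremePoints_iff_forall_add_mem_sub_mem {𝕜 E : Type*} [Field 𝕜] [LinearOrder 𝕜]
    [IsStrictOrderedRing 𝕜] [AddCommGroup E] [Module 𝕜 E] {C : Set E} (hC : Convex 𝕜 C) {x : E} :
    x ∈ C.extremePoints 𝕜 ↔ x ∈ C ∧ ∀ v, x + v ∈ C → x - v ∈ C → v = 0 := by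
  rw [mem_extremePoints_iff_left]
  refine and_congr_right fun _ ↦ ⟨fun h v hadd hsub ↦ ?_, fun h y hy z hz hx ↦ ?_⟩
  · have hmid : x ∈ openSegment 𝕜 (x + v) (x - v) :=
      ⟨1 / 2, 1 / 2, by norm_num, by norm_num, by norm_num, by module⟩
    exact add_eq_left.1 (h _ hadd _ hsub hmid)
  · obtain ⟨a, b, ha, hb, hab, rfl⟩ := hx
    -- Both endpoints of the segment centred at `a • y + b • z` still lie between `y` and `z`.
    have hadd : a • y + b • z + min a b • (y - z) ∈ C := by
      convert hC hy hz (a := a + min a b) (b := b - min a b) (by positivity)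
        (sub_nonneg.2 (min_le_right a b)) (by linarith) using 1
      module
    have hsub : a • y + b • z - min a b • (y - z) ∈ C := by
      convert hC hy hz (a := a - min a b) (b := b + min a b) (sub_nonneg.2 (min_le_left a b))
        (by positivity) (by linarith) using 1
      module
    have hyz : y = z :=
      sub_eq_zero.1 ((smul_eq_zero.1 (h _ hadd hsub)).resolve_left (lt_min ha hb).ne')
    rw [← hyz, Convex.combo_self hab]

end ExtremePoints

section Columns

variable {K m ι κ : Type*} [Fintype ι]

theorem linearIndependent_col_iff_exists_mul_eq_one [Field K] [Finite κ] [DecidableEq κ]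
    {P : Matrix ι κ K} : LinearIndependent K P.col ↔ ∃ Q : Matrix κ ι K, Q * P = 1 := by
  classical
  cases nonempty_fintype κ
  rw [← mulVec_injective_iff]
  constructor
  · intro hP
    obtain ⟨g, hg⟩ := P.mulVecLin.exists_leftInverse_of_injective (LinearMap.ker_eq_bot.2 hP)
    refine ⟨LinearMap.toMatrix' g, toLin'.injective ?_⟩
    rw [toLin'_mul, toLin'_toMatrix', toLin'_one, ← hg, toLin'_apply']
  · rintro ⟨Q, hQ⟩
    exact Function.LeftInverse.injective (g := Q.mulVec) fun v ↦ by
      rw [mulVec_mulVec, hQ, one_mulVec]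

theorem range_mulVecLin_eq_ker_of_rank_add_card_eq [Field K] [Fintype κ] {M : Matrix m ι K}
    {P : Matrix ι κ K} (hMP : M * P = 0) (hP : LinearIndependent K P.col)
    (hcard : M.rank + Fintype.card κ = Fintype.card ι) :
    LinearMap.range P.mulVecLin = LinearMap.ker M.mulVecLin := by
  apply Submodule.eq_of_le_of_finrank_eq
  · rw [LinearMap.range_le_ker_iff, ← mulVecLin_mul, hMP, mulVecLin_zero]
  · have hrank : Module.finrank K (LinearMap.range P.mulVecLin) = Fintype.card κ := by
      rw [LinearMap.finrank_range_of_inj (mulVec_injective_iff.2 hP),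
        Module.finrank_fintype_fun_eq_card]
    have hnullity := M.mulVecLin.finrank_range_add_finrank_ker
    rw [Module.finrank_fintype_fun_eq_card] at hnullity
    rw [Matrix.rank] at hcard
    lia

theorem mul_mul_eq_of_mul_eq_zero [CommSemiring K] [Fintype κ] [DecidableEq κ]
    {M : Matrix m ι K} {P : Matrix ι κ K} {Q : Matrix κ ι K} (hQ : Q * P = 1)
    (hker : LinearMap.ker M.mulVecLin ≤ LinearMap.range P.mulVecLin)
    {X : Matrix ι ι K} (hX : M * X = 0) : P * Q * X = X := by
  refine ext_iff_mulVec.2 fun v ↦ ?_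
  have hv : X *ᵥ v ∈ LinearMap.ker M.mulVecLin := by
    rw [LinearMap.mem_ker, mulVecLin_apply, mulVec_mulVec, hX, zero_mulVec]
  obtain ⟨w, hw⟩ := hker hv
  rw [← mulVec_mulVec, ← hw, mulVecLin_apply, mulVec_mulVec, Matrix.mul_assoc, hQ, Matrix.mul_one]

end Columns

section Congruence

variable {R ι κ : Type*} [Semiring R] [StarRing R] [Fintype ι] [Fintype κ] {P : Matrix ι κ R}
  {Q : Matrix κ ι R}

theorem conj_conj_eq_of_mul_mul_eq {X : Matrix ι ι R} (hX : X.IsHermitian)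
    (hPQ : P * Q * X = X) : P * (Q * X * Qᴴ) * Pᴴ = X := by
  have hX' : X * (Qᴴ * Pᴴ) = X := by
    simpa only [conjTranspose_mul, hX.eq] using congrArg conjTranspose hPQ
  calc P * (Q * X * Qᴴ) * Pᴴ = P * Q * X * (Qᴴ * Pᴴ) := by simp only [Matrix.mul_assoc]
    _ = X := by rw [hPQ, hX']

theorem eq_zero_of_forall_conj {S : Set (Matrix ι ι R)}
    (h : ∀ A : Matrix κ κ R, A.IsHermitian → P * A * Pᴴ ∈ S → A = 0) {X : Matrix ι ι R}
    (hX : X.IsHermitian) (hPQ : P * Q * X = X) (hS : X ∈ S) : X = 0 := by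
  have hconj := conj_conj_eq_of_mul_mul_eq hX hPQ
  have hzero : Q * X * Qᴴ = 0 :=
    h _ (isHermitian_mul_mul_conjTranspose Q hX) (by rwa [hconj])
  rw [← hconj, hzero, Matrix.mul_zero, Matrix.zero_mul]

theorem mul_mul_conjTranspose_eq_zero_iff [DecidableEq κ] (hQ : Q * P = 1) {A : Matrix κ κ R} :
    P * A * Pᴴ = 0 ↔ A = 0 := by
  refine ⟨fun h ↦ ?_, by rintro rfl; simp⟩
  have hQ' : Pᴴ * Qᴴ = 1 := by rw [← conjTranspose_mul, hQ, conjTranspose_one]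
  calc A = (Q * P) * A * (Pᴴ * Qᴴ) := by rw [hQ, hQ', Matrix.one_mul, Matrix.mul_one]
    _ = Q * (P * A * Pᴴ) * Qᴴ := by simp only [Matrix.mul_assoc]
    _ = 0 := by rw [h, Matrix.mul_zero, Matrix.zero_mul]

end Congruence

theorem forall_isHermitian_mul_eq_zero_iff_forall_conj {K m ι κ : Type*} [Field K] [StarRing K]
    [Fintype ι] [Fintype κ] {M : Matrix m ι K} {P : Matrix ι κ K} (hP : LinearIndependent K P.col)
    (hrange : LinearMap.range P.mulVecLin = LinearMap.ker M.mulVecLin) (S : Set (Matrix ι ι K)) :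
    (∀ X : Matrix ι ι K, X.IsHermitian → M * X = 0 → X ∈ S → X = 0) ↔
      ∀ R : Matrix κ κ K, R.IsHermitian → P * R * Pᴴ ∈ S → R = 0 := by
  classical
  obtain ⟨Q, hQ⟩ := linearIndependent_col_iff_exists_mul_eq_one.1 hP
  constructor
  · intro h R hR hS
    have hMP : M * P = 0 := ext_iff_mulVec.2 fun v ↦ by
      rw [← mulVec_mulVec, zero_mulVec]
      exact hrange.le ⟨v, rfl⟩
    have hM : M * (P * R * Pᴴ) = 0 := by
      rw [Matrix.mul_assoc P, ← Matrix.mul_assoc, hMP, Matrix.zero_mul]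
    exact (mul_mul_conjTranspose_eq_zero_iff hQ).1
      (h _ (isHermitian_mul_mul_conjTranspose P hR) hM hS)
  · exact fun h X hX hM ↦
      eq_zero_of_forall_conj h hX (mul_mul_eq_of_mul_eq_zero hQ hrange.ge hM)

section Spectrahedra

open scoped ComplexOrder MatrixOrder

variable {𝕜 ι κ : Type*} [RCLike 𝕜]

theorem mulVec_eq_zero_of_add_mulVec_eq_zero [Fintype ι] {X Y : Matrix ι ι 𝕜}
    (hX : X.PosSemidef) (hY : Y.PosSemidef) {v : ι → 𝕜} (h : (X + Y) *ᵥ v = 0) : X *ᵥ v = 0 := by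
  have hsum : star v ⬝ᵥ X *ᵥ v + star v ⬝ᵥ Y *ᵥ v = 0 := by
    rw [← dotProduct_add, ← add_mulVec, h, dotProduct_zero]
  rw [← hX.dotProduct_mulVec_zero_iff]
  exact ((add_eq_zero_iff_of_nonneg (hX.dotProduct_mulVec_nonneg v)
    (hY.dotProduct_mulVec_nonneg v)).1 hsum).1

theorem exists_pos_posSemidef_one_add_smul_one_sub_smul [Finite ι] [DecidableEq ι]
    {A : Matrix ι ι 𝕜} (hA : A.IsHermitian) :
    ∃ ε : ℝ, 0 < ε ∧ (1 + ε • A).PosSemidef ∧ (1 - ε • A).PosSemidef := by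
  cases nonempty_fintype ι
  obtain ⟨r, hr, hbound⟩ := A.finite_real_spectrum.isBounded.exists_pos_norm_le
  have hle : A ≤ algebraMap ℝ _ r :=
    le_algebraMap_of_spectrum_le (fun x hx ↦ (abs_le.1 (hbound x hx)).2) hA.isSelfAdjoint
  have hge : algebraMap ℝ _ (-r) ≤ A :=
    algebraMap_le_of_le_spectrum (fun x hx ↦ (abs_le.1 (hbound x hx)).1) hA.isSelfAdjoint
  have hinv : 0 ≤ r⁻¹ := by positivity
  refine ⟨r⁻¹, by positivity, ?_, ?_⟩
  · convert (le_iff.1 hge).smul hinv using 1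
    simp [Algebra.algebraMap_eq_smul_one, smul_smul, hr.ne', add_comm]
  · convert (le_iff.1 hle).smul hinv using 1
    simp [Algebra.algebraMap_eq_smul_one, smul_sub, smul_smul, hr.ne']

/-- The spectrahedron cut out of the cone of positive semidefinite matrices by the affine space
through `A` with direction `L`. -/
def spectrahedron (L : Submodule ℝ (Matrix ι ι 𝕜)) (A : Matrix ι ι 𝕜) : Set (Matrix ι ι 𝕜) :=
  {X | X.PosSemidef ∧ X - A ∈ L}

theorem convex_spectrahedron (L : Submodule ℝ (Matrix ι ι 𝕜)) (A : Matrix ι ι 𝕜) :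
    Convex ℝ (spectrahedron L A) := by
  rintro X ⟨hX, hXL⟩ Y ⟨hY, hYL⟩ a b ha hb hab
  refine ⟨(hX.smul ha).add (hY.smul hb), ?_⟩
  convert L.add_mem (L.smul_mem a hXL) (L.smul_mem b hYL) using 1
  rw [smul_sub, smul_sub, sub_add_sub_comm, Convex.combo_self hab]

theorem mul_mul_eq_of_posSemidef_add_of_posSemidef_sub [Fintype ι] [Fintype κ] [DecidableEq κ]
    {P : Matrix ι κ 𝕜} {Q : Matrix κ ι 𝕜} (hQ : Q * P = 1) {V : Matrix ι ι 𝕜}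
    (hadd : (P * Pᴴ + V).PosSemidef) (hsub : (P * Pᴴ - V).PosSemidef) : P * Q * V = V := by
  have hV : V.IsHermitian := by
    simpa only [add_sub_cancel_left] using hadd.1.sub (isHermitian_mul_conjTranspose_self P)
  have hker : ∀ v, Pᴴ *ᵥ v = 0 → V *ᵥ v = 0 := by
    intro v hv
    have hPP : (P * Pᴴ) *ᵥ v = 0 := by rw [← mulVec_mulVec, hv, mulVec_zero]
    have hzero : (P * Pᴴ + V) *ᵥ v = 0 :=
      mulVec_eq_zero_of_add_mulVec_eq_zero hadd hsub <| by
        rw [add_add_sub_cancel, add_mulVec, hPP, add_zero]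
    rwa [add_mulVec, hPP, zero_add] at hzero
  have hQ' : Pᴴ * Qᴴ = 1 := by rw [← conjTranspose_mul, hQ, conjTranspose_one]
  have hright : V * (Qᴴ * Pᴴ) = V := ext_iff_mulVec.2 fun v ↦ by
    have hv := hker ((Qᴴ * Pᴴ) *ᵥ v - v) <| by
      rw [mulVec_sub, mulVec_mulVec, ← Matrix.mul_assoc, hQ', Matrix.one_mul, sub_self]
    rwa [mulVec_sub, mulVec_mulVec, sub_eq_zero] at hv
  simpa only [conjTranspose_mul, conjTranspose_conjTranspose, hV.eq] using
    congrArg conjTranspose hright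

theorem mul_conjTranspose_mem_extremePoints_spectrahedron_iff [Finite ι] [Fintype κ]
    {P : Matrix ι κ 𝕜} (hP : LinearIndependent 𝕜 P.col) (L : Submodule ℝ (Matrix ι ι 𝕜)) :
    P * Pᴴ ∈ (spectrahedron L (P * Pᴴ)).extremePoints ℝ ↔
      ∀ R : Matrix κ κ 𝕜, R.IsHermitian → P * R * Pᴴ ∈ L → R = 0 := by
  classical
  cases nonempty_fintype ι
  obtain ⟨Q, hQ⟩ := linearIndependent_col_iff_exists_mul_eq_one.1 hP
  have hmem : P * Pᴴ ∈ spectrahedron L (P * Pᴴ) :=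
    ⟨posSemidef_self_mul_conjTranspose P, by simp only [sub_self, zero_mem]⟩
  rw [mem_extremePoints_iff_forall_add_mem_sub_mem (convex_spectrahedron L _), and_iff_right hmem]
  constructor
  · intro h R hR hL
    obtain ⟨ε, hε, hadd, hsub⟩ := exists_pos_posSemidef_one_add_smul_one_sub_smul hR
    have hadd' : P * Pᴴ + ε • (P * R * Pᴴ) ∈ spectrahedron L (P * Pᴴ) :=
      ⟨by simpa [Matrix.mul_add, Matrix.add_mul] using hadd.mul_mul_conjTranspose_same P,
        by simpa only [add_sub_cancel_left] using L.smul_mem ε hL⟩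
    have hsub' : P * Pᴴ - ε • (P * R * Pᴴ) ∈ spectrahedron L (P * Pᴴ) :=
      ⟨by simpa [Matrix.mul_sub, Matrix.sub_mul] using hsub.mul_mul_conjTranspose_same P,
        by simpa only [sub_sub_cancel_left] using L.neg_mem (L.smul_mem ε hL)⟩
    have hzero := (smul_eq_zero.1 (h _ hadd' hsub')).resolve_left hε.ne'
    exact (mul_mul_conjTranspose_eq_zero_iff hQ).1 hzero
  · rintro h V ⟨hadd, hL⟩ ⟨hsub, -⟩
    rw [add_sub_cancel_left] at hL
    have hV : V.IsHermitian := by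
      simpa only [add_sub_cancel_left] using hadd.1.sub hmem.1.1
    exact eq_zero_of_forall_conj (S := L) h hV
      (mul_mul_eq_of_posSemidef_add_of_posSemidef_sub hQ hadd hsub) hL

end Spectrahedra

section Graphs

/-- The matrices that vanish on `V ∪ E`, that is, on the diagonal and at the edges of `G`. -/
def vanishingOn (R : Type*) {ι : Type*} [Semiring R] (G : SimpleGraph ι) :
    Submodule R (Matrix ι ι R) where
  carrier := {X | (∀ i, X i i = 0) ∧ ∀ i j, G.Adj i j → X i j = 0}
  zero_mem' := ⟨fun _ ↦ rfl, fun _ _ _ ↦ rfl⟩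
  add_mem' hX hY := ⟨fun i ↦ by simp [hX.1 i, hY.1 i],
    fun i j hij ↦ by simp [hX.2 i j hij, hY.2 i j hij]⟩
  smul_mem' c _ hX := ⟨fun i ↦ by simp [hX.1 i], fun i j hij ↦ by simp [hX.2 i j hij]⟩

theorem mem_vanishingOn {R ι : Type*} [Semiring R] {G : SimpleGraph ι} {X : Matrix ι ι R} :
    X ∈ vanishingOn R G ↔ (∀ i, X i i = 0) ∧ ∀ i j, G.Adj i j → X i j = 0 :=
  Iff.rfl

theorem sap_iff_forall_isHermitian (G : SimpleGraph (Fin n)) (M : Matrix (Fin n) (Fin n) ℝ) :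
    SAP G M ↔ ∀ X : Matrix (Fin n) (Fin n) ℝ, X.IsHermitian → M * X = 0 →
      X ∈ vanishingOn ℝ G → X = 0 := by
  simp only [SAP, isHermitian_iff_isSymm, mem_vanishingOn, and_imp]

theorem mul_mul_transpose_apply {R ι κ : Type*} [NonUnitalSemiring R] [Fintype κ] (P : Matrix ι κ R)
    (A : Matrix κ κ R) (i j : ι) : (P * A * Pᵀ) i j = P i ⬝ᵥ A *ᵥ P j := by
  rw [Matrix.mul_assoc, mul_apply']
  rfl

theorem spectrahedron_vanishingOn {ι κ : Type*} [Fintype κ] (G : SimpleGraph ι)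
    (P : Matrix ι κ ℝ) :
    spectrahedron (vanishingOn ℝ G) (P * Pᵀ) = {X : Matrix ι ι ℝ | X.PosSemidef ∧
      (∀ i, X i i = P i ⬝ᵥ P i) ∧ ∀ i j, G.Adj i j → X i j = P i ⬝ᵥ P j} := by
  simp only [spectrahedron, mem_vanishingOn, Matrix.sub_apply, sub_eq_zero]
  rfl

end Graphs

theorem sap_tfae_general {κ : Type*} [Fintype κ] (G : SimpleGraph (Fin n))
    (M : Matrix (Fin n) (Fin n) ℝ) (P : Matrix (Fin n) κ ℝ) (hP : LinearIndependent ℝ P.col)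
    (hrange : LinearMap.range P.mulVecLin = LinearMap.ker M.mulVecLin) :
    (SAP G M ↔
      ∀ R : Matrix κ κ ℝ, R.IsSymm →
        (∀ i, P i ⬝ᵥ R.mulVec (P i) = 0) →
        (∀ i j, G.Adj i j → P i ⬝ᵥ R.mulVec (P j) = 0) → R = 0) ∧
    (SAP G M ↔
      IsExtremePt
        {X : Matrix (Fin n) (Fin n) ℝ | X.PosSemidef ∧
          (∀ i, X i i = P i ⬝ᵥ P i) ∧ (∀ i j, G.Adj i j → X i j = P i ⬝ᵥ P j)}
        (P * Pᵀ)) := by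
  have hsap : SAP G M ↔ ∀ R : Matrix κ κ ℝ, R.IsHermitian → P * R * Pᴴ ∈ vanishingOn ℝ G → R = 0 :=
    (sap_iff_forall_isHermitian G M).trans
      (forall_isHermitian_mul_eq_zero_iff_forall_conj hP hrange (vanishingOn ℝ G))
  constructor
  · simpa only [isHermitian_iff_isSymm, conjTranspose_eq_transpose_of_trivial, mem_vanishingOn,
      mul_mul_transpose_apply, and_imp] using hsap
  · rw [← spectrahedron_vanishingOn, isExtremePt_iff_mem_extremePoints, hsap,
      ← mul_conjTranspose_mem_extremePoints_spectrahedron_iff hP,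
      conjTranspose_eq_transpose_of_trivial]

theorem sap_tfae
    (G : SimpleGraph (Fin n)) (M : Matrix (Fin n) (Fin n) ℝ)
    (hMsymm : M.IsSymm)
    -- M is supported by G:
    (hsupp : ∀ i j, i ≠ j → ¬ G.Adj i j → M i j = 0)
    -- corank M = d:
    (hcorank : M.rank + d = n)
    -- the columns of P form an orthonormal basis of Ker M:
    (P : Matrix (Fin n) (Fin d) ℝ) (hker : M * P = 0) (horth : Pᵀ * P = 1) :
    -- (i) ↔ (iii):
    (SAP G M ↔
      ∀ R : Matrix (Fin d) (Fin d) ℝ, R.IsSymm →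
        (∀ i, P i ⬝ᵥ R.mulVec (P i) = 0) →
        (∀ i j, G.Adj i j → P i ⬝ᵥ R.mulVec (P j) = 0) → R = 0) ∧
    -- (i) ↔ (ii):
    (SAP G M ↔
      IsExtremePt
        {X : Matrix (Fin n) (Fin n) ℝ | X.PosSemidef ∧
          (∀ i, X i i = P i ⬝ᵥ P i) ∧ (∀ i j, G.Adj i j → X i j = P i ⬝ᵥ P j)}
        (P * Pᵀ)) := by
  have hP : LinearIndependent ℝ P.col := linearIndependent_col_iff_exists_mul_eq_one.2 ⟨Pᵀ, horth⟩
  exact sap_tfae_general G M P hP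
    (range_mulVecLin_eq_ker_of_rank_add_card_eq hker hP (by simpa using hcorank))

end Stmt13
end
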